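/- arXiv:2501.13771 — 3 statements merged into one kernel-verified Lean document; each statement's English description precedes it below -/
import Mathlib

section
/- Let 0 < s < 1 and let b₁, b₂ ∈ ℕ. Then there exists ε₀ > 0 such that for every ε ∈ (0, ε₀) there is a constant C > 0 (depending on s, b₁, b₂, ε) such that for all x, v ∈ ℝ: |∬_{ℝ²} ξ^{b₁} η^{b₂} e^{−M(ξ,η)} e^{−i(ξx+ηv)} dξ dη| ≤ C · ⟨(x,v)⟩^{−(2+2s−2ε)} · ⟨x⟩^{−(ε+b₁)} · ⟨v⟩^{−(ε+b₂)}. (This double integral equals, up to a sign, the derivative ∂_x^{b₁}∂_v^{b₂} of the time-one fundamental solution K(1,x,v) = ∬_{ℝ²} e^{−M(ξ,η)} e^{−i(ξx+ηv)} dξ dη of the fractional Fokker–Planck equation, written in the variables (x, v) dual to (ξ, η).) -/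
open MeasureTheory Real

/-- `M(ξ,η) = ∫₀¹ |(ξ−η)τ + η|^{2s} dτ`. -/
noncomputable def Mker (s ξ η : ℝ) : ℝ := ∫ τ in (0:ℝ)..1, |(ξ - η) * τ + η| ^ (2 * s)

section
open Set Filter Topology in
/-- Shifting a half-line integral inside a half-strip. -/
lemma halfStrip (g : ℂ → ℂ) (B : ℝ → ℝ) (σ : ℝ) (hσ : |σ| ≤ 1)
    (hc : ContinuousOn g {z | 0 ≤ z.re ∧ |z.im| ≤ 1})
    (hd : DifferentiableOn ℂ g {z | 0 < z.re})
    (hB : ∀ z : ℂ, 0 ≤ z.re → |z.im| ≤ 1 → ‖g z‖ ≤ B z.re)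
    (hBi : IntegrableOn B (Ioi 0)) (hB0 : Tendsto B atTop (𝓝 0)) :
    ∫ t in Ioi (0:ℝ), g t = (∫ t in Ioi (0:ℝ), g (t + σ * Complex.I))
      + Complex.I * ∫ y in (0:ℝ)..σ, g (y * Complex.I) := by
  have hσ' := abs_le.1 hσ
  have hint : ∀ r : ℝ, |r| ≤ 1 → IntegrableOn (fun t : ℝ => g (t + r * Complex.I)) (Ioi 0) := by
    intro r hr
    refine Integrable.mono' hBi ?_ ?_
    · refine ContinuousOn.aestronglyMeasurable ?_ measurableSet_Ioi
      refine hc.comp (by fun_prop) ?_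
      intro t ht
      simp only [mem_Ioi] at ht
      simp [ht.le, hr]
    · refine (ae_restrict_iff' measurableSet_Ioi).2 (Eventually.of_forall ?_)
      intro t ht
      simp only [mem_Ioi] at ht
      have := hB (t + r * Complex.I) (by simp [ht.le]) (by simp [hr])
      simpa using this
  have hrect : ∀ T : ℝ, 0 ≤ T → (∫ t in (0:ℝ)..T, g t) - (∫ t in (0:ℝ)..T, g (t + σ * Complex.I))
      + Complex.I * (∫ y in (0:ℝ)..σ, g (T + y * Complex.I))
      - Complex.I * (∫ y in (0:ℝ)..σ, g (y * Complex.I)) = 0 := by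
    intro T hT
    have := Complex.integral_boundary_rect_eq_zero_of_continuousOn_of_differentiableOn g 0
      (T + σ * Complex.I) ?_ ?_
    · simpa using this
    · refine hc.mono ?_
      intro z hz
      simp only [Complex.mem_reProdIm] at hz
      obtain ⟨h1, h2⟩ := hz
      simp [hT, uIcc_of_le] at h1
      simp at h2
      refine ⟨h1.1, ?_⟩
      rw [mem_uIcc] at h2
      rw [abs_le]
      constructor <;> rcases h2 with h2 | h2 <;> linarith [h2.1, h2.2]
    · refine hd.mono ?_
      intro z hz
      simp only [Complex.mem_reProdIm] at hz
      obtain ⟨h1, h2⟩ := hz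
      simp [hT] at h1
      exact h1.1
  have h1 : Tendsto (fun T : ℝ => ∫ t in (0:ℝ)..T, g t) atTop (𝓝 (∫ t in Ioi (0:ℝ), g t)) := by
    refine intervalIntegral_tendsto_integral_Ioi 0 ?_ tendsto_id
    simpa using hint 0 (by simp)
  have h2 : Tendsto (fun T : ℝ => ∫ t in (0:ℝ)..T, g (t + σ * Complex.I)) atTop
      (𝓝 (∫ t in Ioi (0:ℝ), g (t + σ * Complex.I))) :=
    intervalIntegral_tendsto_integral_Ioi 0 (hint σ hσ) tendsto_id
  have h3 : Tendsto (fun T : ℝ => ∫ y in (0:ℝ)..σ, g (T + y * Complex.I)) atTop (𝓝 0) := by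
    have hb : Tendsto (fun T => B T * |σ - 0|) atTop (𝓝 0) := by simpa using hB0.mul_const |σ - 0|
    refine squeeze_zero_norm' ?_ hb
    filter_upwards [eventually_ge_atTop 0] with T hT
    refine intervalIntegral.norm_integral_le_of_norm_le_const ?_
    intro y hy
    have := hB (T + y * Complex.I) (by simp [hT]) (by
      simp
      have := uIoc_subset_uIcc hy
      rw [mem_uIcc] at this
      rw [abs_le]
      constructor <;> rcases this with h2 | h2 <;> linarith [h2.1, h2.2])
    simpa using this
  have h4 := ((h1.sub h2).add (h3.const_mul Complex.I)).sub_const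
    (Complex.I * (∫ y in (0:ℝ)..σ, g (y * Complex.I)))
  have h5 := tendsto_nhds_unique (h4.congr' ?_) (tendsto_const_nhds (x := (0:ℂ)) (f := atTop (α := ℝ)))
  · linear_combination h5
  · filter_upwards [eventually_ge_atTop 0] with T hT using hrect T hT

open Set Filter Topology in
/-- Rotating a half-line integral inside a sector. -/
lemma sectorRot (g : ℂ → ℂ) (B : ℝ → ℝ) (θ : ℝ) (hθ : |θ| ≤ 1)
    (hd : DifferentiableOn ℂ g {z | 0 < z.re})
    (hB : ∀ r φ : ℝ, 0 < r → φ ∈ uIcc 0 θ → ‖g (r * Complex.exp (φ * Complex.I))‖ ≤ B r)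
    (hBi : IntegrableOn B (Ioi 0)) (hB0 : Tendsto (fun r => r * B r) atTop (𝓝 0))
    (hB1 : Tendsto (fun r => r * B r) (𝓝[>] 0) (𝓝 0)) :
    ∫ t in Ioi (0:ℝ), g t = Complex.exp (θ * Complex.I) *
      ∫ t in Ioi (0:ℝ), g (t * Complex.exp (θ * Complex.I)) := by
  have hre : ∀ φ : ℝ, φ ∈ uIcc 0 θ → 0 < Real.cos φ := by
    intro φ hφ
    have hφ' : |φ| ≤ |θ| := by simpa using abs_sub_left_of_mem_uIcc hφ
    have h2 := abs_le.1 (hφ'.trans hθ)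
    have := Real.pi_gt_three
    exact Real.cos_pos_of_mem_Ioo ⟨by linarith [h2.1], by linarith [h2.2]⟩
  have hmem : ∀ r φ : ℝ, 0 < r → φ ∈ uIcc 0 θ → 0 < ((r : ℂ) * Complex.exp (φ * Complex.I)).re := by
    intro r φ hr hφ
    have : ((r : ℂ) * Complex.exp (φ * Complex.I)).re = r * Real.cos φ := by
      rw [Complex.re_ofReal_mul, Complex.exp_ofReal_mul_I_re]
    rw [this]; exact mul_pos hr (hre φ hφ)
  set G : ℂ → ℂ := fun w => g (Complex.exp w) * Complex.exp w with hG
  have hexp : ∀ (u φ : ℝ), Complex.exp (u + φ * Complex.I) = (Real.exp u : ℂ) * Complex.exp (φ * Complex.I) := by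
    intro u φ; rw [Complex.exp_add]; simp
  have hGB : ∀ u φ : ℝ, φ ∈ uIcc 0 θ → ‖G (u + φ * Complex.I)‖ ≤ Real.exp u * B (Real.exp u) := by
    intro u φ hφ
    simp only [hG, hexp, norm_mul]
    have := hB (Real.exp u) φ (Real.exp_pos u) hφ
    rw [Complex.norm_exp_ofReal_mul_I, mul_one, mul_comm]
    have h : ‖(Real.exp u : ℂ)‖ = Real.exp u := by simp [-Complex.ofReal_exp]
    rw [h]
    exact mul_le_mul_of_nonneg_left this (Real.exp_pos u).le
  have hgc : ∀ φ : ℝ, φ ∈ uIcc 0 θ → ContinuousOn (fun t : ℝ => g (t * Complex.exp (φ * Complex.I))) (Ioi 0) := by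
    intro φ hφ
    exact hd.continuousOn.comp (by fun_prop) (fun t ht => hmem t φ ht hφ)
  have hgi : ∀ φ : ℝ, φ ∈ uIcc 0 θ → IntegrableOn (fun t : ℝ => g (t * Complex.exp (φ * Complex.I))) (Ioi 0) := by
    intro φ hφ
    refine Integrable.mono' hBi ((hgc φ hφ).aestronglyMeasurable measurableSet_Ioi) ?_
    exact (ae_restrict_iff' measurableSet_Ioi).2 (Eventually.of_forall fun t ht => hB t φ ht hφ)
  have himg : Real.exp '' univ = Ioi 0 := by rw [image_univ, Real.range_exp]
  have hsub : ∀ φ : ℝ, φ ∈ uIcc 0 θ → Integrable (fun u : ℝ => G (u + φ * Complex.I)) ∧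
      ∫ u : ℝ, G (u + φ * Complex.I) = Complex.exp (φ * Complex.I) *
        ∫ t in Ioi (0:ℝ), g (t * Complex.exp (φ * Complex.I)) := by
    intro φ hφ
    have hGe : ∀ u : ℝ, G (u + φ * Complex.I) = Complex.exp (φ * Complex.I) *
        (|Real.exp u| • g ((Real.exp u : ℂ) * Complex.exp (φ * Complex.I))) := by
      intro u
      simp only [hG, hexp, abs_of_pos (Real.exp_pos u), Complex.real_smul]
      ring
    constructor
    · have := (integrableOn_image_iff_integrableOn_abs_deriv_smul MeasurableSet.univ
        (fun u _ => (Real.hasDerivAt_exp u).hasDerivWithinAt) Real.exp_injective.injOn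
        (fun t : ℝ => g (t * Complex.exp (φ * Complex.I)))).1 (by rw [himg]; exact hgi φ hφ)
      rw [integrableOn_univ] at this
      simp_rw [hGe]
      exact this.const_mul _
    · have := integral_image_eq_integral_abs_deriv_smul MeasurableSet.univ
        (fun u _ => (Real.hasDerivAt_exp u).hasDerivWithinAt) Real.exp_injective.injOn
        (fun t : ℝ => g (t * Complex.exp (φ * Complex.I)))
      rw [himg, Measure.restrict_univ] at this
      rw [this]
      simp_rw [hGe]
      rw [integral_const_mul]
  have hrect : ∀ T : ℝ, (∫ t in (-T)..T, G t) - (∫ t in (-T)..T, G (t + θ * Complex.I))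
      + Complex.I * (∫ y in (0:ℝ)..θ, G (T + y * Complex.I))
      - Complex.I * (∫ y in (0:ℝ)..θ, G ((-T:ℝ) + y * Complex.I)) = 0 := by
    intro T
    have := Complex.integral_boundary_rect_eq_zero_of_differentiableOn G (-T:ℝ)
      (T + θ * Complex.I) ?_
    · simpa using this
    · intro z hz
      simp only [Complex.mem_reProdIm] at hz
      obtain ⟨h1, h2⟩ := hz
      simp at h2
      have hz' : z.im ∈ uIcc 0 θ := h2
      have hz3 : Complex.exp z = (Real.exp z.re : ℂ) * Complex.exp (z.im * Complex.I) := by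
        rw [← hexp, Complex.re_add_im]
      have hz4 : 0 < (Complex.exp z).re := by rw [hz3]; exact hmem _ _ (Real.exp_pos _) hz'
      have : DifferentiableAt ℂ g (Complex.exp z) :=
        hd.differentiableAt ((isOpen_lt continuous_const Complex.continuous_re).mem_nhds hz4)
      exact ((this.comp z Complex.differentiableAt_exp).mul
        Complex.differentiableAt_exp).differentiableWithinAt
  have hside : ∀ (l : Filter ℝ) (f : ℝ → ℝ), Tendsto (fun T => Real.exp (f T) * B (Real.exp (f T))) l (𝓝 0) →
      Tendsto (fun T : ℝ => ∫ y in (0:ℝ)..θ, G ((f T : ℝ) + y * Complex.I)) l (𝓝 0) := by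
    intro l f hf
    have hb := hf.mul_const |θ - 0|
    rw [zero_mul] at hb
    refine squeeze_zero_norm' (Eventually.of_forall ?_) hb
    intro T
    refine intervalIntegral.norm_integral_le_of_norm_le_const ?_
    intro y hy
    exact hGB _ _ (uIoc_subset_uIcc hy)
  obtain ⟨i0, e0⟩ := hsub 0 (by simp)
  obtain ⟨i1, e1⟩ := hsub θ right_mem_uIcc
  have h1 := intervalIntegral_tendsto_integral i0 tendsto_neg_atTop_atBot tendsto_id
  have h2 := intervalIntegral_tendsto_integral i1 tendsto_neg_atTop_atBot tendsto_id
  have h3 := hside atTop (fun T => T) (hB0.comp Real.tendsto_exp_atTop)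
  have h4 := hside atTop (fun T => -T) (hB1.comp
    ((Real.tendsto_exp_atBot_nhdsGT).comp tendsto_neg_atTop_atBot))
  rw [e0] at h1
  rw [e1] at h2
  have h5 := ((h1.sub h2).add (h3.const_mul Complex.I)).sub (h4.const_mul Complex.I)
  have h6 := tendsto_nhds_unique (h5.congr fun T => ?_)
    (tendsto_const_nhds (x := (0:ℂ)) (f := atTop (α := ℝ)))
  · simp at h6
    linear_combination h6
  · simpa using hrect T

end

section
lemma arg_small {z : ℂ} {k : ℝ} (hz : 0 < z.re) (hk : |z.im| ≤ k * z.re) : |z.arg| ≤ k := by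
  have h1 : |z.arg| < π / 2 := Complex.abs_arg_lt_pi_div_two_iff.2 (Or.inl hz)
  have h2 : |z.arg| ≤ Real.tan |z.arg| := Real.le_tan (abs_nonneg _) h1
  have h3 : Real.tan |z.arg| = |z.im| / z.re := by
    rcases abs_cases z.arg with ⟨h, h'⟩ | ⟨h, h'⟩
    · rw [h, Complex.tan_arg, abs_of_nonneg (Complex.arg_nonneg_iff.1 h')]
    · rw [h, Real.tan_neg, Complex.tan_arg, abs_of_neg (Complex.arg_neg_iff.1 h'), neg_div]
  rw [h3] at h2
  exact h2.trans ((div_le_iff₀ hz).2 hk)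

lemma half_le_cos {x : ℝ} (h : |x| ≤ 1) : 1 / 2 ≤ Real.cos x := by
  rw [← Real.cos_abs, ← Real.cos_pi_div_three]
  have := Real.pi_gt_three
  exact Real.cos_le_cos_of_nonneg_of_le_pi (abs_nonneg _) (by linarith) (by linarith)

lemma norm_cpow_real {z : ℂ} {p : ℝ} (_ : 0 < p) : ‖z ^ (p : ℂ)‖ = ‖z‖ ^ p := by
  rw [Complex.norm_cpow_real]

lemma re_cpow_ge {z : ℂ} {q : ℝ} (hq : 0 < q) (hq2 : q < 2) (h0 : 0 ≤ z.re)
    (h1 : |z.im| ≤ 1 + z.re / 8) : z.re ^ q / 2 - 200 ≤ (z ^ (q : ℂ)).re := by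
  rcases le_or_gt 8 z.re with h | h
  · have ha : |z.arg| ≤ 1 / 4 := arg_small (by linarith) (by linarith)
    rw [Complex.cpow_ofReal_re]
    have hc : 1 / 2 ≤ Real.cos (z.arg * q) := by
      apply half_le_cos
      rw [abs_mul, abs_of_pos hq]
      nlinarith [abs_nonneg z.arg]
    have hn : z.re ^ q ≤ ‖z‖ ^ q := Real.rpow_le_rpow h0 (Complex.re_le_norm z) hq.le
    have : 0 ≤ z.re ^ q := Real.rpow_nonneg h0 _
    nlinarith
  · have hn : ‖z‖ ≤ 10 := by
      refine (Complex.norm_le_abs_re_add_abs_im z).trans ?_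
      rw [abs_of_nonneg h0]; linarith
    have h100 : (10:ℝ) ^ q ≤ 100 := by
      calc (10:ℝ) ^ q ≤ 10 ^ (2:ℝ) := Real.rpow_le_rpow_of_exponent_le (by norm_num) hq2.le
        _ = 100 := by norm_num
    have h2 : ‖z ^ (q:ℂ)‖ ≤ 100 := by
      rw [norm_cpow_real hq]
      exact (Real.rpow_le_rpow (norm_nonneg _) hn hq.le).trans h100
    have h3 := (abs_le.1 ((Complex.abs_re_le_norm (z ^ (q:ℂ))).trans h2)).1
    have h4 : z.re ^ q ≤ 100 := (Real.rpow_le_rpow h0 (by linarith) hq.le).trans h100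
    linarith

/-- same-sign kernel -/
noncomputable def PK (q : ℝ) (a c : ℂ) : ℂ :=
  dslope (fun z : ℂ => z ^ ((1 + q : ℝ) : ℂ)) c a / ((1 + q : ℝ) : ℂ)

/-- opposite-sign kernel -/
noncomputable def NK (q : ℝ) (a c : ℂ) : ℂ :=
  (a ^ ((1 + q : ℝ) : ℂ) + c ^ ((1 + q : ℝ) : ℂ)) / (((1 + q : ℝ) : ℂ) * (a + c))

lemma PK_symm (q : ℝ) (a c : ℂ) : PK q a c = PK q c a := by
  unfold PK
  rcases eq_or_ne a c with rfl | h
  · rfl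
  · rw [dslope_of_ne _ h, dslope_of_ne _ h.symm, slope_comm]

lemma PK_of_ne {q : ℝ} {a c : ℂ} (h : a ≠ c) :
    PK q a c = (a ^ ((1 + q : ℝ) : ℂ) - c ^ ((1 + q : ℝ) : ℂ)) / (((1 + q : ℝ) : ℂ) * (a - c)) := by
  unfold PK
  rw [dslope_of_ne _ h, slope_def_field, div_div, mul_comm]

open Set in
lemma cpow_cont {q : ℝ} (hq : 0 < q) :
    ContinuousOn (fun z : ℂ => z ^ (q : ℂ)) {z | 0 ≤ z.re} := by
  intro z hz
  apply ContinuousAt.continuousWithinAt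
  rcases eq_or_ne z 0 with rfl | h
  · exact Complex.continuousAt_cpow_zero_of_re_pos (z := (q:ℂ)) (by simpa using hq) |>.comp
      (f := fun z : ℂ => (z, (q:ℂ))) (by fun_prop)
  · refine (DifferentiableAt.cpow_const (f := fun z : ℂ => z) (c := (q:ℂ)) differentiableAt_id ?_).continuousAt
    rw [Complex.mem_slitPlane_iff]
    simp only [mem_ofPred_eq] at hz
    rcases hz.lt_or_eq with h' | h'
    · exact Or.inl h'
    · right
      intro h2
      exact h (Complex.ext h'.symm h2)

open Set in
lemma cpow_diff {q : ℝ} :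
    DifferentiableOn ℂ (fun z : ℂ => z ^ (q : ℂ)) {z | 0 < z.re} := by
  intro z hz
  exact (differentiableAt_id.cpow_const (Or.inl hz)).differentiableWithinAt

lemma halfplane_open : IsOpen {z : ℂ | 0 < z.re} := isOpen_lt continuous_const Complex.continuous_re

lemma PK_diff_left {q : ℝ} {c : ℂ} (hc : 0 < c.re) :
    DifferentiableOn ℂ (fun a => PK q a c) {a | 0 < a.re} := by
  unfold PK
  exact ((Complex.differentiableOn_dslope (halfplane_open.mem_nhds hc)).2 cpow_diff).div_const _

lemma PK_diff_right {q : ℝ} {a : ℂ} (ha : 0 < a.re) :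
    DifferentiableOn ℂ (fun c => PK q a c) {c | 0 < c.re} := by
  simp_rw [PK_symm q a]
  exact PK_diff_left ha

lemma PK_cont {q : ℝ} (hq : 0 < q) {c : ℂ} (hc : 0 < c.re) :
    ContinuousOn (fun a => PK q a c) {a | 0 ≤ a.re} := by
  intro a ha
  rcases eq_or_ne a c with rfl | h
  · exact ((PK_diff_left hc).continuousOn.continuousAt (halfplane_open.mem_nhds hc)).continuousWithinAt
  · unfold PK
    refine ContinuousWithinAt.div_const ?_ _
    rw [continuousWithinAt_dslope_of_ne h]
    exact cpow_cont (by linarith) a ha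

lemma NK_diff_left {q : ℝ} (hq : 0 < q) {c : ℂ} (hc : 0 < c.re) :
    DifferentiableOn ℂ (fun a => NK q a c) {a | 0 < a.re} := by
  unfold NK
  refine DifferentiableOn.div (cpow_diff.add_const _) (by fun_prop) ?_
  intro a ha h
  rcases mul_eq_zero.1 h with h | h
  · have : (1 + q) = 0 := by exact_mod_cast h
    linarith
  · have := congrArg Complex.re h
    simp at this ha
    linarith

lemma NK_symm (q : ℝ) (a c : ℂ) : NK q a c = NK q c a := by
  unfold NK; rw [add_comm a c, add_comm]

lemma NK_diff_right {q : ℝ} (hq : 0 < q) {a : ℂ} (ha : 0 < a.re) :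
    DifferentiableOn ℂ (fun c => NK q a c) {c | 0 < c.re} := by
  simp_rw [NK_symm q a]
  exact NK_diff_left hq ha

lemma NK_cont {q : ℝ} (hq : 0 < q) {c : ℂ} (hc : 0 < c.re) :
    ContinuousOn (fun a => NK q a c) {a | 0 ≤ a.re} := by
  unfold NK
  refine ContinuousOn.div ((cpow_cont (by linarith)).add continuousOn_const) (by fun_prop) ?_
  intro a ha h
  rcases mul_eq_zero.1 h with h | h
  · have : (1 + q) = 0 := by exact_mod_cast h
    linarith
  · have := congrArg Complex.re h
    simp at this ha
    linarith

open Set in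
lemma PK_integral {q : ℝ} (hq : 0 < q) {a c : ℂ} (ha : 0 ≤ a.re) (hc : 0 < c.re) :
    IntervalIntegrable (fun τ : ℝ => ((a - c) * τ + c) ^ (q : ℂ)) volume 0 1 ∧
    PK q a c = ∫ τ in (0:ℝ)..1, ((a - c) * τ + c) ^ (q : ℂ) := by
  have hre : ∀ τ : ℝ, ((a - c) * τ + c).re = a.re * τ + c.re * (1 - τ) := by
    intro τ; simp; ring
  have hne : ((1 + q : ℝ) : ℂ) ≠ 0 := by
    have : (1 + q : ℝ) ≠ 0 := by linarith
    exact_mod_cast this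
  have hcont : ∀ r : ℝ, 0 < r → ContinuousOn (fun τ : ℝ => ((a - c) * τ + c) ^ (r : ℂ)) (Icc 0 1) := by
    intro r hr
    refine (cpow_cont hr).comp (f := fun τ : ℝ => (a - c) * τ + c) (by fun_prop) ?_
    intro τ hτ
    simp only [mem_ofPred_eq, hre]
    have := hτ.1; have := hτ.2
    have := mul_nonneg ha hτ.1
    have := mul_nonneg hc.le (sub_nonneg.2 hτ.2)
    linarith
  have hint : IntervalIntegrable (fun τ : ℝ => ((a - c) * τ + c) ^ (q : ℂ)) volume 0 1 := by
    apply ContinuousOn.intervalIntegrable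
    rw [uIcc_of_le zero_le_one]; exact hcont q hq
  refine ⟨hint, ?_⟩
  rcases eq_or_ne a c with rfl | h
  · unfold PK
    rw [dslope_same]
    have : HasDerivAt (fun z : ℂ => z ^ ((1 + q : ℝ) : ℂ)) (((1 + q : ℝ) : ℂ) * a ^ (((1 + q : ℝ) : ℂ) - 1) * 1) a :=
      (hasDerivAt_id a).cpow_const (Or.inl hc)
    rw [this.deriv]
    have h2 : ((1 + q : ℝ) : ℂ) - 1 = q := by push_cast; ring
    rw [h2, mul_one, mul_div_cancel_left₀ _ hne]
    simp
  · have hac : a - c ≠ 0 := sub_ne_zero.2 h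
    have key := intervalIntegral.integral_eq_sub_of_hasDerivAt_of_le zero_le_one
      (f := fun τ : ℝ => ((a - c) * τ + c) ^ ((1 + q : ℝ) : ℂ) / (((1 + q : ℝ) : ℂ) * (a - c)))
      (f' := fun τ : ℝ => ((a - c) * τ + c) ^ (q : ℂ)) ((hcont (1 + q) (by linarith)).div_const _) ?_ hint
    · rw [key, PK_of_ne h]
      simp
      ring
    · intro τ hτ
      have hs : 0 < ((a - c) * τ + c).re := by
        rw [hre]
        have := mul_nonneg ha hτ.1.le
        have := mul_pos hc (sub_pos.2 hτ.2)
        linarith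
      have h1 : HasDerivAt (fun z : ℂ => (a - c) * z + c) (a - c) (τ : ℂ) := by
        simpa using ((hasDerivAt_id (τ : ℂ)).const_mul (a - c)).add_const c
      have h2 := ((h1.cpow_const (c := ((1 + q : ℝ) : ℂ)) (Or.inl hs)).div_const
        (((1 + q : ℝ) : ℂ) * (a - c))).comp_ofReal
      have h3 : ((1 + q : ℝ) : ℂ) - 1 = q := by push_cast; ring
      have h4 : ((1 + q : ℝ) : ℂ) * ((a - c) * (τ:ℂ) + c) ^ (((1 + q : ℝ) : ℂ) - 1) * (a - c) /
          (((1 + q : ℝ) : ℂ) * (a - c)) = ((a - c) * (τ:ℂ) + c) ^ (q : ℂ) := by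
        rw [h3]; field_simp
      rw [h4] at h2
      exact h2

open Set in
lemma PK_re {q : ℝ} (hq : 0 < q) (hq2 : q < 2) {a c : ℂ} (ha : 0 ≤ a.re) (ha1 : |a.im| ≤ 1)
    (hc : 0 < c.re) (hc1 : |c.im| ≤ c.re / 8) :
    (a.re ^ q + c.re ^ q) / 24 - 500 ≤ (PK q a c).re := by
  obtain ⟨hi, he⟩ := PK_integral hq ha hc
  have hre : ∀ τ : ℝ, ((a - c) * τ + c).re = a.re * τ + c.re * (1 - τ) := by
    intro τ; simp; ring
  have him : ∀ τ : ℝ, ((a - c) * τ + c).im = a.im * τ + c.im * (1 - τ) := by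
    intro τ; simp; ring
  have h1 : (PK q a c).re = ∫ τ in (0:ℝ)..1, (((a - c) * τ + c) ^ (q : ℂ)).re := by
    rw [he]
    have := Complex.reCLM.intervalIntegral_comp_comm hi
    simpa using this.symm
  have hpow1 : ∫ τ in (0:ℝ)..1, (a.re * τ) ^ q = a.re ^ q / (q + 1) := by
    have : ∀ τ ∈ uIcc (0:ℝ) 1, (a.re * τ) ^ q = a.re ^ q * τ ^ q := by
      intro τ hτ
      rw [uIcc_of_le zero_le_one] at hτ
      exact Real.mul_rpow ha hτ.1
    rw [intervalIntegral.integral_congr this, intervalIntegral.integral_const_mul,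
      integral_rpow (Or.inl (by linarith))]
    simp [Real.zero_rpow (show q + 1 ≠ 0 by linarith)]
    ring
  have hpow2 : ∫ τ in (0:ℝ)..1, (c.re * (1 - τ)) ^ q = c.re ^ q / (q + 1) := by
    have h0 := intervalIntegral.integral_comp_sub_left (a := 0) (b := 1) (fun τ => (c.re * τ) ^ q) 1
    simp only [sub_self, sub_zero] at h0
    rw [h0]
    have : ∀ τ ∈ uIcc (0:ℝ) 1, (c.re * τ) ^ q = c.re ^ q * τ ^ q := by
      intro τ hτ
      rw [uIcc_of_le zero_le_one] at hτ
      exact Real.mul_rpow hc.le hτ.1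
    rw [intervalIntegral.integral_congr this, intervalIntegral.integral_const_mul,
      integral_rpow (Or.inl (by linarith))]
    simp [Real.zero_rpow (show q + 1 ≠ 0 by linarith)]
    ring
  have c1 : Continuous fun τ : ℝ => (a.re * τ) ^ q :=
    (continuous_const.mul continuous_id).rpow_const (fun _ => Or.inr hq.le)
  have c2 : Continuous fun τ : ℝ => (c.re * (1 - τ)) ^ q :=
    (continuous_const.mul (continuous_const.sub continuous_id)).rpow_const (fun _ => Or.inr hq.le)
  have h2 : ∫ τ in (0:ℝ)..1, (((a.re * τ) ^ q + (c.re * (1 - τ)) ^ q) / 4 - 200) ≤ (PK q a c).re := by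
    rw [h1]
    refine intervalIntegral.integral_mono_on zero_le_one ?_ ?_ ?_
    · exact Continuous.intervalIntegrable (by fun_prop) _ _
    · exact ⟨hi.1.re, hi.2.re⟩
    · intro τ hτ
      have t1 := mul_nonneg ha hτ.1
      have t2 := mul_nonneg hc.le (sub_nonneg.2 hτ.2)
      have := re_cpow_ge (z := (a - c) * τ + c) hq hq2 (by rw [hre]; linarith) (by
        rw [him, hre]
        refine (abs_add_le _ _).trans ?_
        rw [abs_mul, abs_mul, abs_of_nonneg hτ.1, abs_of_nonneg (sub_nonneg.2 hτ.2)]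
        have := mul_le_mul_of_nonneg_right hc1 (sub_nonneg.2 hτ.2)
        have := mul_le_mul_of_nonneg_right ha1 hτ.1
        have := hτ.2
        nlinarith)
      rw [hre] at this
      have u1 : (a.re * τ) ^ q ≤ (a.re * τ + c.re * (1 - τ)) ^ q :=
        Real.rpow_le_rpow t1 (by linarith) hq.le
      have u2 : (c.re * (1 - τ)) ^ q ≤ (a.re * τ + c.re * (1 - τ)) ^ q :=
        Real.rpow_le_rpow t2 (by linarith) hq.le
      linarith
  have h3 : ∫ τ in (0:ℝ)..1, (((a.re * τ) ^ q + (c.re * (1 - τ)) ^ q) / 4 - 200)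
      = (a.re ^ q / (q + 1) + c.re ^ q / (q + 1)) / 4 - 200 := by
    rw [intervalIntegral.integral_sub, intervalIntegral.integral_div, intervalIntegral.integral_add,
      hpow1, hpow2]
    · simp
    · exact c1.intervalIntegrable _ _
    · exact c2.intervalIntegrable _ _
    · exact Continuous.intervalIntegrable (by fun_prop) _ _
    · simp
  rw [h3] at h2
  refine le_trans ?_ h2
  have g1 : a.re ^ q / 3 ≤ a.re ^ q / (q + 1) := by
    apply div_le_div_of_nonneg_left (Real.rpow_nonneg ha _) (by linarith) (by linarith)
  have g2 : c.re ^ q / 3 ≤ c.re ^ q / (q + 1) := by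
    apply div_le_div_of_nonneg_left (Real.rpow_nonneg hc.le _) (by linarith) (by linarith)
  have : 0 ≤ a.re ^ q := Real.rpow_nonneg ha _
  have : 0 ≤ c.re ^ q := Real.rpow_nonneg hc.le _
  linarith

lemma quot_re {p : ℝ} (hp : 0 < p) {z w : ℂ} (hw : w ≠ 0)
    (h : |p * z.arg - w.arg| ≤ 1) : ‖z‖ ^ p / ‖w‖ / 2 ≤ (z ^ (p : ℂ) / w).re := by
  have h1 : z ^ (p:ℂ) / w = ((‖z‖ ^ p / ‖w‖ : ℝ) : ℂ) * Complex.exp ((p * z.arg - w.arg : ℝ) * Complex.I) := by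
    rcases eq_or_ne z 0 with rfl | hz
    · have : (p:ℂ) ≠ 0 := by exact_mod_cast hp.ne'
      simp [Complex.zero_cpow this, Real.zero_rpow hp.ne']
    · have e1 : z ^ (p:ℂ) = ((‖z‖ ^ p : ℝ) : ℂ) * Complex.exp ((p * z.arg : ℝ) * Complex.I) := by
        apply Complex.ext
        · rw [Complex.cpow_ofReal_re, Complex.re_ofReal_mul, Complex.exp_ofReal_mul_I_re, mul_comm p]
        · rw [Complex.cpow_ofReal_im, Complex.im_ofReal_mul, Complex.exp_ofReal_mul_I_im, mul_comm p]
      have e2 : w = ((‖w‖ : ℝ) : ℂ) * Complex.exp ((w.arg : ℝ) * Complex.I) :=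
        (Complex.norm_mul_exp_arg_mul_I w).symm
      rw [e1]
      conv_lhs => rw [e2]
      rw [mul_div_mul_comm, ← Complex.exp_sub]
      push_cast
      congr 2
      ring
  rw [h1, Complex.re_ofReal_mul, Complex.exp_ofReal_mul_I_re]
  have := half_le_cos h
  have h0 : 0 ≤ ‖z‖ ^ p / ‖w‖ := by positivity
  nlinarith

lemma NK_re {q : ℝ} (hq : 0 < q) (hq2 : q < 2) {a c : ℂ} (ha : 0 ≤ a.re) (ha1 : |a.im| ≤ 1)
    (hc : 0 < c.re) (hc1 : |c.im| ≤ c.re / 8) :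
    (a.re ^ q + c.re ^ q) / 24 - 500 ≤ (NK q a c).re := by
  have hw0 : 0 < (a + c).re := by simp; linarith
  have hw : a + c ≠ 0 := by intro h; rw [h] at hw0; simp at hw0
  have hwn : 0 < ‖a + c‖ := norm_pos_iff.2 hw
  have hN : (NK q a c).re = ((a ^ ((1 + q : ℝ) : ℂ) / (a + c)).re + (c ^ ((1 + q : ℝ) : ℂ) / (a + c)).re) / (1 + q) := by
    have : NK q a c = (a ^ ((1 + q : ℝ) : ℂ) / (a + c) + c ^ ((1 + q : ℝ) : ℂ) / (a + c)) / ((1 + q : ℝ) : ℂ) := by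
      unfold NK; rw [← add_div, div_div, mul_comm]
    rw [this, Complex.div_ofReal_re, Complex.add_re]
  have hcn : ‖c‖ ≤ 2 * ‖a + c‖ := by
    have h1 := Complex.norm_le_abs_re_add_abs_im c
    have h2 := Complex.re_le_norm (a + c)
    rw [abs_of_pos hc] at h1
    simp at h2
    linarith
  have han : ‖a‖ ≤ 3 * ‖a + c‖ := by
    have : ‖a‖ ≤ ‖a + c‖ + ‖c‖ := by simpa using norm_sub_le (a + c) c
    linarith
  have hpa : ‖a‖ ^ (1 + q) = ‖a‖ * ‖a‖ ^ q := by
    rw [Real.rpow_add' (norm_nonneg _) (by linarith), Real.rpow_one]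
  have hpc : ‖c‖ ^ (1 + q) = ‖c‖ * ‖c‖ ^ q := by
    rw [Real.rpow_add' (norm_nonneg _) (by linarith), Real.rpow_one]
  have hna : ‖a ^ ((1 + q : ℝ) : ℂ) / (a + c)‖ = ‖a‖ ^ (1 + q) / ‖a + c‖ := by
    rw [norm_div, Complex.norm_cpow_real]
  have hnc : ‖c ^ ((1 + q : ℝ) : ℂ) / (a + c)‖ = ‖c‖ ^ (1 + q) / ‖a + c‖ := by
    rw [norm_div, Complex.norm_cpow_real]
  have h81 : (9:ℝ) ^ q ≤ 81 := by
    calc (9:ℝ) ^ q ≤ 9 ^ (2:ℝ) := Real.rpow_le_rpow_of_exponent_le (by norm_num) hq2.le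
      _ = 81 := by norm_num
  have hA : ‖a‖ ≤ 9 → ‖a ^ ((1 + q : ℝ) : ℂ) / (a + c)‖ ≤ 243 := by
    intro h
    rw [hna, div_le_iff₀ hwn, hpa]
    have : ‖a‖ ^ q ≤ 81 := (Real.rpow_le_rpow (norm_nonneg _) h hq.le).trans h81
    have h0 : 0 ≤ ‖a‖ ^ q := by positivity
    nlinarith [norm_nonneg a]
  have hC : ‖c‖ ≤ 9 → ‖c ^ ((1 + q : ℝ) : ℂ) / (a + c)‖ ≤ 162 := by
    intro h
    rw [hnc, div_le_iff₀ hwn, hpc]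
    have : ‖c‖ ^ q ≤ 81 := (Real.rpow_le_rpow (norm_nonneg _) h hq.le).trans h81
    have h0 : 0 ≤ ‖c‖ ^ q := by positivity
    nlinarith [norm_nonneg c]
  have hra : a.re ^ q ≤ ‖a‖ ^ q := Real.rpow_le_rpow ha (Complex.re_le_norm a) hq.le
  have hrc : c.re ^ q ≤ ‖c‖ ^ q := Real.rpow_le_rpow hc.le (Complex.re_le_norm c) hq.le
  have hna9 : a.re ≤ 8 → ‖a‖ ≤ 9 := by
    intro h
    refine (Complex.norm_le_abs_re_add_abs_im a).trans ?_
    rw [abs_of_nonneg ha]; linarith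
  rw [hN]
  rcases lt_or_ge (a + c).re 8 with h8 | h8
  · simp only [Complex.add_re] at h8 hw0
    have ea := hA (hna9 (by linarith))
    have hc9 : ‖c‖ ≤ 9 := by
      refine (Complex.norm_le_abs_re_add_abs_im c).trans ?_
      rw [abs_of_pos hc]; linarith
    have ec := hC hc9
    have fa := (abs_le.1 ((Complex.abs_re_le_norm _).trans ea)).1
    have fc := (abs_le.1 ((Complex.abs_re_le_norm _).trans ec)).1
    have ga : a.re ^ q ≤ 81 := hra.trans ((Real.rpow_le_rpow (norm_nonneg _) (hna9 (by linarith)) hq.le).trans h81)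
    have gc : c.re ^ q ≤ 81 := hrc.trans ((Real.rpow_le_rpow (norm_nonneg _) hc9 hq.le).trans h81)
    rw [le_div_iff₀ (by linarith)]
    nlinarith
  · have hargw : |(a + c).arg| ≤ 1 / 4 := by
      refine arg_small hw0 ?_
      simp only [Complex.add_re, Complex.add_im] at *
      refine (abs_add_le _ _).trans ?_
      linarith
    have hargc : |c.arg| ≤ 1 / 8 := arg_small hc (by linarith)
    have tc : ‖c‖ ^ (1 + q) / ‖a + c‖ / 2 ≤ (c ^ ((1 + q : ℝ) : ℂ) / (a + c)).re := by
      refine quot_re (by linarith) hw ?_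
      refine (abs_sub _ _).trans ?_
      rw [abs_mul, abs_of_pos (show 0 < 1 + q by linarith)]
      nlinarith [abs_nonneg c.arg]
    have ta : ‖a‖ ^ (1 + q) / ‖a + c‖ / 2 - 400 ≤ (a ^ ((1 + q : ℝ) : ℂ) / (a + c)).re := by
      rcases le_or_gt 8 a.re with h | h
      · have harga : |a.arg| ≤ 1 / 8 := arg_small (by linarith) (by linarith)
        have : ‖a‖ ^ (1 + q) / ‖a + c‖ / 2 ≤ (a ^ ((1 + q : ℝ) : ℂ) / (a + c)).re := by
          refine quot_re (by linarith) hw ?_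
          refine (abs_sub _ _).trans ?_
          rw [abs_mul, abs_of_pos (show 0 < 1 + q by linarith)]
          nlinarith [abs_nonneg a.arg]
        linarith
      · have ea := hA (hna9 h.le)
        have fa := (abs_le.1 ((Complex.abs_re_le_norm _).trans ea)).1
        rw [hna] at ea
        linarith
    have main : (‖a‖ ^ q + ‖c‖ ^ q) / 4 ≤ ‖a‖ ^ (1 + q) / ‖a + c‖ + ‖c‖ ^ (1 + q) / ‖a + c‖ := by
      rw [← add_div, le_div_iff₀ hwn, hpa, hpc]
      have h0 : 0 ≤ ‖a‖ ^ q := by positivity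
      have h1 : 0 ≤ ‖c‖ ^ q := by positivity
      have h2 := norm_add_le a c
      have h3 : (‖a‖ ^ q + ‖c‖ ^ q) / 4 * ‖a + c‖ ≤ (‖a‖ ^ q + ‖c‖ ^ q) / 4 * (‖a‖ + ‖c‖) := by gcongr
      refine h3.trans ?_
      rcases le_total ‖a‖ ‖c‖ with h | h
      · have := Real.rpow_le_rpow (norm_nonneg _) h hq.le
        nlinarith [norm_nonneg a, norm_nonneg c, mul_nonneg (sub_nonneg.2 h) (sub_nonneg.2 this), mul_nonneg (norm_nonneg a) h0, mul_nonneg (norm_nonneg c) h1, mul_nonneg (norm_nonneg a) h1]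
      · have := Real.rpow_le_rpow (norm_nonneg _) h hq.le
        nlinarith [norm_nonneg a, norm_nonneg c, mul_nonneg (sub_nonneg.2 h) (sub_nonneg.2 this), mul_nonneg (norm_nonneg a) h0, mul_nonneg (norm_nonneg c) h1, mul_nonneg (norm_nonneg a) h1]
    rw [le_div_iff₀ (by linarith)]
    have i1 : 0 ≤ a.re ^ q := Real.rpow_nonneg ha _
    have i2 : 0 ≤ c.re ^ q := Real.rpow_nonneg hc.le _
    nlinarith

end

section
structure GoodK (q : ℝ) (E : ℂ → ℂ → ℂ) : Prop where
  dL : ∀ c : ℂ, 0 < c.re → DifferentiableOn ℂ (fun a => E a c) {a | 0 < a.re}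
  dR : ∀ a : ℂ, 0 < a.re → DifferentiableOn ℂ (fun c => E a c) {c | 0 < c.re}
  cL : ∀ c : ℂ, 0 < c.re → ContinuousOn (fun a => E a c) {a | 0 ≤ a.re}
  re : ∀ a c : ℂ, 0 ≤ a.re → |a.im| ≤ 1 → 0 < c.re → |c.im| ≤ c.re / 8 →
    (a.re ^ q + c.re ^ q) / 24 - 500 ≤ (E a c).re
  meas : ∀ u : ℂ, u.im ≠ 0 → AEStronglyMeasurable (fun p : ℝ × ℝ => E p.1 (p.2 * u))
    ((volume.restrict (Set.Ioi 0)).prod (volume.restrict (Set.Ioi 0)))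

lemma PK_good {q : ℝ} (hq : 0 < q) (hq2 : q < 2) : GoodK q (PK q) where
  dL := fun _ hc => PK_diff_left hc
  dR := fun _ hc => PK_diff_right hc
  cL := fun _ hc => PK_cont hq hc
  re := fun _ _ h1 h2 h3 h4 => PK_re hq hq2 h1 h2 h3 h4
  meas := by
    intro u hu
    have : Measurable (fun p : ℝ × ℝ => ((p.1:ℂ) ^ ((1 + q : ℝ) : ℂ) - (p.2 * u) ^ ((1 + q : ℝ) : ℂ)) /
        (((1 + q : ℝ) : ℂ) * (p.1 - p.2 * u))) := by fun_prop
    refine this.aestronglyMeasurable.congr ?_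
    rw [Measure.prod_restrict, Filter.EventuallyEq,
      ae_restrict_iff' (measurableSet_Ioi.prod measurableSet_Ioi)]
    refine Filter.Eventually.of_forall ?_
    rintro ⟨a, r⟩ ⟨ha, hr⟩
    simp only [Set.mem_Ioi] at ha hr
    refine (PK_of_ne ?_).symm
    intro h
    have := congrArg Complex.im h
    simp at this
    rcases this with h | h
    · linarith
    · exact hu h

lemma NK_good {q : ℝ} (hq : 0 < q) (hq2 : q < 2) : GoodK q (NK q) where
  dL := fun _ hc => NK_diff_left hq hc
  dR := fun _ hc => NK_diff_right hq hc
  cL := fun _ hc => NK_cont hq hc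
  re := fun _ _ h1 h2 h3 h4 => NK_re hq hq2 h1 h2 h3 h4
  meas := by
    intro u hu
    unfold NK
    have : Measurable (fun p : ℝ × ℝ => ((p.1:ℂ) ^ ((1 + q : ℝ) : ℂ) + (p.2 * u) ^ ((1 + q : ℝ) : ℂ)) /
        (((1 + q : ℝ) : ℂ) * (p.1 + p.2 * u))) := by fun_prop
    exact this.aestronglyMeasurable

/-- points of the ray -/
lemma ray_facts {r φ : ℝ} (hr : 0 < r) (hφ : |φ| ≤ 1 / 10) :
    let c : ℂ := r * Complex.exp (φ * Complex.I)
    c.re = r * Real.cos φ ∧ c.im = r * Real.sin φ ∧ r / 2 ≤ c.re ∧ |c.im| ≤ c.re / 8 ∧ ‖c‖ = r := by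
  intro c
  have h1 : c.re = r * Real.cos φ := by
    simp only [c]; rw [Complex.re_ofReal_mul, Complex.exp_ofReal_mul_I_re]
  have h2 : c.im = r * Real.sin φ := by
    simp only [c]; rw [Complex.im_ofReal_mul, Complex.exp_ofReal_mul_I_im]
  have hc : 9 / 10 ≤ Real.cos φ := by
    have h3 := Real.one_sub_sq_div_two_le_cos (x := φ)
    have h4 : φ ^ 2 ≤ (1 / 10) ^ 2 := sq_le_sq' (by linarith [(abs_le.1 hφ).1]) (abs_le.1 hφ).2
    linarith
  have hs : |Real.sin φ| ≤ 1 / 10 := Real.abs_sin_le_abs.trans hφ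
  refine ⟨h1, h2, ?_, ?_, ?_⟩
  · rw [h1]; nlinarith
  · rw [h1, h2, abs_mul, abs_of_pos hr]; nlinarith
  · simp only [c, norm_mul, Complex.norm_exp_ofReal_mul_I, mul_one]
    simp [abs_of_pos hr]

lemma GoodK.norm_exp {q : ℝ} (hq : 0 < q) (hq2 : q < 2) {E : ℂ → ℂ → ℂ} (hE : GoodK q E) {a : ℂ} {r φ : ℝ}
    (ha : 0 ≤ a.re) (ha1 : |a.im| ≤ 1) (hr : 0 < r) (hφ : |φ| ≤ 1 / 10) :
    ‖Complex.exp (-E a (r * Complex.exp (φ * Complex.I)))‖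
      ≤ Real.exp 500 * (Real.exp (-(1 / 96) * a.re ^ q) * Real.exp (-(1 / 96) * r ^ q)) := by
  obtain ⟨h1, h2, h3, h4, h5⟩ := ray_facts hr hφ
  have := hE.re a (r * Complex.exp (φ * Complex.I)) ha ha1 (by linarith) h4
  rw [Complex.norm_exp, ← Real.exp_add, ← Real.exp_add]
  apply Real.exp_le_exp.2
  rw [Complex.neg_re]
  have h6 : r ^ q / 4 ≤ ((r : ℂ) * Complex.exp (φ * Complex.I)).re ^ q := by
    have h7 : (r / 2) ^ q ≤ ((r : ℂ) * Complex.exp (φ * Complex.I)).re ^ q :=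
      Real.rpow_le_rpow (by positivity) h3 hq.le
    refine le_trans ?_ h7
    rw [Real.div_rpow hr.le (by norm_num)]
    apply div_le_div_of_nonneg_left (by positivity) (by positivity)
    calc (2:ℝ) ^ q ≤ 2 ^ (2:ℝ) := Real.rpow_le_rpow_of_exponent_le (by norm_num) hq2.le
      _ = 4 := by norm_num
  have h8 : 0 ≤ a.re ^ q := Real.rpow_nonneg ha _
  linarith

open Set Filter Topology

lemma pow_exp_int {q κ : ℝ} (hq : 0 < q) (hκ : 0 < κ) (b : ℕ) :
    IntegrableOn (fun t : ℝ => t ^ b * Real.exp (-κ * t ^ q)) (Ioi 0) := by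
  have := integrableOn_rpow_mul_exp_neg_mul_rpow (p := q) (s := b) (b := κ)
    (by have : (0:ℝ) ≤ b := by positivity
        linarith) hq hκ
  simpa using this

lemma pow_exp_tendsto {q κ : ℝ} (hq : 0 < q) (hκ : 0 < κ) (b : ℕ) :
    Tendsto (fun t : ℝ => t ^ b * Real.exp (-κ * t ^ q)) atTop (𝓝 0) := by
  have h := (tendsto_rpow_mul_exp_neg_mul_atTop_nhds_zero (b / q) κ hκ).comp (tendsto_rpow_atTop hq)
  refine h.congr' ?_
  filter_upwards [eventually_gt_atTop 0] with t ht
  simp only [Function.comp]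
  rw [← Real.rpow_mul ht.le, mul_div_cancel₀ _ hq.ne', Real.rpow_natCast]

lemma add_one_pow_le' {t : ℝ} (ht : 0 ≤ t) (b : ℕ) : (t + 1) ^ b ≤ 2 ^ b * (t ^ b + 1) := by
  have h := add_pow_le ht zero_le_one b
  rw [one_pow] at h
  refine h.trans ?_
  have : (2:ℝ) ^ (b - 1) ≤ 2 ^ b := pow_le_pow_right₀ (by norm_num) (Nat.sub_le _ _)
  have : 0 ≤ t ^ b := by positivity
  nlinarith

lemma pow1_exp_int {q κ : ℝ} (hq : 0 < q) (hκ : 0 < κ) (b : ℕ) :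
    IntegrableOn (fun t : ℝ => (t + 1) ^ b * Real.exp (-κ * t ^ q)) (Ioi 0) := by
  have h := (((pow_exp_int hq hκ b).add (pow_exp_int hq hκ 0)).const_mul (2 ^ b))
  refine Integrable.mono' h ?_ ?_
  · have : Measurable (fun t : ℝ => (t + 1) ^ b * Real.exp (-κ * t ^ q)) := by fun_prop
    exact this.aestronglyMeasurable
  · refine (ae_restrict_iff' measurableSet_Ioi).2 (Eventually.of_forall fun t ht => ?_)
    simp only [mem_Ioi] at ht
    rw [Real.norm_of_nonneg (by positivity)]
    have := mul_le_mul_of_nonneg_right (add_one_pow_le' ht.le b) (Real.exp_pos (-κ * t ^ q)).le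
    simp only [Pi.add_apply, pow_zero]
    linarith

lemma pow1_exp_tendsto {q κ : ℝ} (hq : 0 < q) (hκ : 0 < κ) (b : ℕ) :
    Tendsto (fun t : ℝ => (t + 1) ^ b * Real.exp (-κ * t ^ q)) atTop (𝓝 0) := by
  have h := (((pow_exp_tendsto hq hκ b).add (pow_exp_tendsto hq hκ 0)).const_mul (2 ^ b))
  simp only [add_zero, mul_zero] at h
  refine squeeze_zero' ?_ ?_ h
  · filter_upwards [eventually_gt_atTop 0] with t ht
    positivity
  · filter_upwards [eventually_gt_atTop 0] with t ht
    have := mul_le_mul_of_nonneg_right (add_one_pow_le' ht.le b) (Real.exp_pos (-κ * t ^ q)).le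
    simp only [pow_zero]
    linarith

/-- the partial Fourier integral in the first variable -/
noncomputable def WK (E : ℂ → ℂ → ℂ) (b : ℕ) (σ x : ℝ) (c : ℂ) : ℂ :=
  ∫ t in Ioi (0:ℝ), (t:ℂ) ^ b * Complex.exp (-E t c) * Complex.exp (Complex.I * σ * t * x)

lemma WK_shift {q : ℝ} (hq : 0 < q) (hq2 : q < 2) {E : ℂ → ℂ → ℂ} (hE : GoodK q E) (b : ℕ)
    {σ : ℝ} (hσ : σ ^ 2 = 1) (x : ℝ) {r φ : ℝ} (hr : 0 < r) (hφ : |φ| ≤ 1 / 10) :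
    ‖WK E b σ x (r * Complex.exp (φ * Complex.I)) - Complex.I * ∫ y in (0:ℝ)..σ, ((y * Complex.I) ^ b *
        Complex.exp (-E (y * Complex.I) (r * Complex.exp (φ * Complex.I))) *
        Complex.exp (Complex.I * σ * (y * Complex.I) * x))‖
      ≤ (Real.exp 500 * ∫ t in Ioi (0:ℝ), (t + 1) ^ b * Real.exp (-(1 / 96) * t ^ q)) *
        Real.exp (-(1 / 96) * r ^ q) * Real.exp (-x) := by
  set c : ℂ := r * Complex.exp (φ * Complex.I) with hc
  obtain ⟨h1, h2, h3, h4, h5⟩ := ray_facts hr hφ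
  have hcre : 0 < c.re := by rw [hc]; linarith
  have hσ1 : |σ| ≤ 1 := by
    rw [← sq_le_one_iff_abs_le_one, hσ]
  set g : ℂ → ℂ := fun a => a ^ b * Complex.exp (-E a c) * Complex.exp (Complex.I * σ * a * x) with hg
  have hnexp : ∀ a : ℂ, ‖Complex.exp (Complex.I * σ * a * x)‖ = Real.exp (-(σ * a.im * x)) := by
    intro a
    rw [Complex.norm_exp]
    congr 1
    simp
  have hnpow : ∀ a : ℂ, 0 ≤ a.re → |a.im| ≤ 1 → ‖a ^ b‖ ≤ (a.re + 1) ^ b := by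
    intro a h h'
    rw [norm_pow]
    refine pow_le_pow_left₀ (norm_nonneg _) ?_ _
    refine (Complex.norm_le_abs_re_add_abs_im a).trans ?_
    rw [abs_of_nonneg h]; linarith
  have hgb : ∀ a : ℂ, 0 ≤ a.re → |a.im| ≤ 1 → ‖g a‖ ≤
      ((a.re + 1) ^ b * Real.exp (-(1 / 96) * a.re ^ q)) * (Real.exp 500 * Real.exp (-(1 / 96) * r ^ q)
       * Real.exp (-(σ * a.im * x))) := by
    intro a h h'
    simp only [hg, norm_mul, hnexp]
    have e1 := hE.norm_exp hq hq2 h h' hr hφ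
    rw [← hc] at e1
    have e2 := hnpow a h h'
    calc ‖a ^ b‖ * ‖Complex.exp (-E a c)‖ * Real.exp (-(σ * a.im * x))
        ≤ (a.re + 1) ^ b * (Real.exp 500 * (Real.exp (-(1 / 96) * a.re ^ q) * Real.exp (-(1 / 96) * r ^ q)))
          * Real.exp (-(σ * a.im * x)) := by gcongr
      _ = _ := by ring
  have hshift := halfStrip g (fun t => ((t + 1) ^ b * Real.exp (-(1 / 96) * t ^ q)) *
      (Real.exp 500 * Real.exp (-(1 / 96) * r ^ q) * Real.exp |x|)) σ hσ1 ?_ ?_ ?_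
      ((pow1_exp_int hq (by norm_num) b).mul_const _) ?_
  · have : WK E b σ x c = ∫ t in Ioi (0:ℝ), g t := rfl
    rw [this, hshift, add_sub_cancel_right]
    have hb := norm_integral_le_of_norm_le (μ := volume.restrict (Ioi (0:ℝ)))
      (f := fun t : ℝ => g (t + σ * Complex.I))
      (((pow1_exp_int hq (κ := 1 / 96) (by norm_num) b).mul_const
        (Real.exp 500 * Real.exp (-(1 / 96) * r ^ q) * Real.exp (-x)))) ?_
    · refine hb.trans (le_of_eq ?_)
      rw [integral_mul_const]
      ring
    · refine (ae_restrict_iff' measurableSet_Ioi).2 (Eventually.of_forall fun t ht => ?_)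
      simp only [mem_Ioi] at ht
      have := hgb (t + σ * Complex.I) (by simp [ht.le]) (by simpa using hσ1)
      have e : σ * σ * x = x := by rw [← sq, hσ, one_mul]
      simpa [e] using this
  · have : ContinuousOn (fun a => E a c) {z | 0 ≤ z.re ∧ |z.im| ≤ 1} :=
      (hE.cL c hcre).mono (fun z hz => hz.1)
    simp only [hg]
    fun_prop
  · have := hE.dL c hcre
    simp only [hg]
    fun_prop
  · intro z hz hz'
    refine (hgb z hz hz').trans ?_
    have : Real.exp (-(σ * z.im * x)) ≤ Real.exp |x| := by
      apply Real.exp_le_exp.2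
      refine (neg_le_abs _).trans ?_
      rw [abs_mul, abs_mul]
      have : |σ| * |z.im| ≤ 1 := mul_le_one₀ hσ1 (abs_nonneg _) hz'
      nlinarith [abs_nonneg x]
    gcongr
  · have := (pow1_exp_tendsto hq (κ := 1 / 96) (by norm_num) b).mul_const
      (Real.exp 500 * Real.exp (-(1 / 96) * r ^ q) * Real.exp |x|)
    simpa using this

lemma rot_swap {q : ℝ} (hq : 0 < q) (hq2 : q < 2) {E : ℂ → ℂ → ℂ} (hE : GoodK q E) (b b' : ℕ)
    (σ : ℝ) (x v : ℝ) {θ : ℝ} (hθ : |θ| = 1 / 10) (hv : v * θ ≤ 0) :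
    let u := Complex.exp (θ * Complex.I)
    let H : ℝ → ℂ := fun r => u * ((r * u) ^ b' * Complex.exp (-Complex.I * (r * u) * v)) * WK E b σ x (r * u)
    IntegrableOn H (Ioi 0) ∧
    ∫ t in Ioi (0:ℝ), (∫ y in Ioi (0:ℝ), ((t:ℂ) ^ b * Complex.exp (Complex.I * σ * t * x)) *
      ((y:ℂ) ^ b' * Complex.exp (-E t y) * Complex.exp (-Complex.I * y * v))) = ∫ r in Ioi (0:ℝ), H r := by
  intro u H
  have huim : u.im ≠ 0 := by
    simp only [u, Complex.exp_ofReal_mul_I_im]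
    have hpi := Real.pi_gt_three
    rcases (abs_eq (by norm_num : (0:ℝ) ≤ 1 / 10)).1 hθ with h | h
    · rw [h]; exact (Real.sin_pos_of_pos_of_lt_pi (by norm_num) (by linarith)).ne'
    · rw [h, Real.sin_neg]; exact neg_ne_zero.2 (Real.sin_pos_of_pos_of_lt_pi (by norm_num) (by linarith)).ne'
  have hosc : ∀ r φ : ℝ, 0 < r → φ ∈ uIcc 0 θ →
      ‖Complex.exp (-Complex.I * (r * Complex.exp (φ * Complex.I)) * v)‖ ≤ 1 := by
    intro r φ hr hφ
    have hφ' : |φ| ≤ 1 / 10 := by rw [← hθ]; simpa using abs_sub_left_of_mem_uIcc hφ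
    obtain ⟨h1, h2, h3, h4, h5⟩ := ray_facts hr hφ'
    rw [Complex.norm_exp, Real.exp_le_one_iff]
    have : (-Complex.I * (r * Complex.exp (φ * Complex.I)) * v).re = v * (r * Real.sin φ) := by
      rw [← h2]; simp; ring
    rw [this]
    have hs : v * Real.sin φ ≤ 0 := by
      have hpi := Real.pi_gt_three
      have h10 := abs_le.1 hφ'
      rcases mem_uIcc.1 hφ with ⟨i, j⟩ | ⟨i, j⟩
      · have hθ0 : 0 < θ := by
          rcases (abs_eq (by norm_num : (0:ℝ) ≤ 1 / 10)).1 hθ with h | h <;> linarith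
        have : v ≤ 0 := by nlinarith
        exact mul_nonpos_of_nonpos_of_nonneg this (Real.sin_nonneg_of_nonneg_of_le_pi i (by linarith))
      · have hθ0 : θ < 0 := by
          rcases (abs_eq (by norm_num : (0:ℝ) ≤ 1 / 10)).1 hθ with h | h <;> linarith
        have : 0 ≤ v := by nlinarith
        exact mul_nonpos_of_nonneg_of_nonpos this (Real.sin_nonpos_of_nonpos_of_neg_pi_le j (by linarith))
    nlinarith
  have hstep : ∀ t ∈ Ioi (0:ℝ), (∫ y in Ioi (0:ℝ), ((t:ℂ) ^ b * Complex.exp (Complex.I * σ * t * x)) *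
      ((y:ℂ) ^ b' * Complex.exp (-E t y) * Complex.exp (-Complex.I * y * v))) =
      ∫ r in Ioi (0:ℝ), (u * ((r * u) ^ b' * Complex.exp (-Complex.I * (r * u) * v))) *
        ((t:ℂ) ^ b * Complex.exp (-E t (r * u)) * Complex.exp (Complex.I * σ * t * x)) := by
    intro t ht
    simp only [mem_Ioi] at ht
    rw [integral_const_mul]
    have hrot := sectorRot (fun y => y ^ b' * Complex.exp (-E t y) * Complex.exp (-Complex.I * y * v))
      (fun r => (Real.exp 500 * Real.exp (-(1 / 96) * t ^ q)) * (r ^ b' * Real.exp (-(1 / 96) * r ^ q)))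
      θ (by rw [hθ]; norm_num) ?_ ?_ ((pow_exp_int hq (by norm_num) b').const_mul _) ?_ ?_
    · rw [hrot, ← integral_const_mul, ← integral_const_mul]
      refine integral_congr_ae (Eventually.of_forall fun r => ?_)
      simp only [u]
      ring
    · have := hE.dR t (by simpa using ht)
      fun_prop
    · intro r φ hr hφ
      have hφ' : |φ| ≤ 1 / 10 := by rw [← hθ]; simpa using abs_sub_left_of_mem_uIcc hφ
      obtain ⟨h1, h2, h3, h4, h5⟩ := ray_facts hr hφ'
      have e1 := hE.norm_exp hq hq2 (a := t) (by simpa using ht.le) (by simp) hr hφ'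
      have e2 := hosc r φ hr hφ
      rw [norm_mul, norm_mul, norm_pow, h5]
      simp only [Complex.ofReal_re] at e1
      calc _ ≤ r ^ b' * (Real.exp 500 * (Real.exp (-(1 / 96) * t ^ q) * Real.exp (-(1 / 96) * r ^ q))) * 1 := by gcongr
        _ = _ := by ring
    · have := (pow_exp_tendsto hq (κ := 1 / 96) (by norm_num) (b' + 1)).const_mul (Real.exp 500 * Real.exp (-(1 / 96) * t ^ q))
      rw [mul_zero] at this
      refine this.congr fun r => ?_
      ring
    · have : Continuous (fun r : ℝ => r * (Real.exp 500 * Real.exp (-(1 / 96) * t ^ q) * (r ^ b' * Real.exp (-(1 / 96) * r ^ q)))) := by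
        have : Continuous (fun r : ℝ => r ^ q) := continuous_id.rpow_const (fun _ => Or.inr hq.le)
        fun_prop
      have := (this.tendsto 0).mono_left (nhdsWithin_le_nhds (s := Ioi 0))
      simpa using this
  have hfub : Integrable (fun p : ℝ × ℝ => (u * ((p.2 * u) ^ b' * Complex.exp (-Complex.I * (p.2 * u) * v))) *
        ((p.1:ℂ) ^ b * Complex.exp (-E p.1 (p.2 * u)) * Complex.exp (Complex.I * σ * p.1 * x)))
        ((volume.restrict (Ioi 0)).prod (volume.restrict (Ioi 0))) := by
    have hdom := ((pow_exp_int hq (κ := 1 / 96) (by norm_num) b).mul_prod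
      (pow_exp_int hq (κ := 1 / 96) (by norm_num) b')).const_mul (Real.exp 500)
    refine Integrable.mono' hdom ?_ ?_
    · have h1 := hE.meas u huim
      have h2 : AEStronglyMeasurable (fun p : ℝ × ℝ => Complex.exp (-E p.1 (p.2 * u)))
        ((volume.restrict (Ioi 0)).prod (volume.restrict (Ioi 0))) :=
        Complex.continuous_exp.comp_aestronglyMeasurable h1.neg
      have h3 : Continuous (fun p : ℝ × ℝ => (u * ((p.2 * u) ^ b' * Complex.exp (-Complex.I * (p.2 * u) * v)))) := by
        fun_prop
      have h4 : Continuous (fun p : ℝ × ℝ => (p.1:ℂ) ^ b) := by fun_prop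
      have h5 : Continuous (fun p : ℝ × ℝ => Complex.exp (Complex.I * σ * p.1 * x)) := by fun_prop
      exact h3.aestronglyMeasurable.mul ((h4.aestronglyMeasurable.mul h2).mul h5.aestronglyMeasurable)
    · rw [Measure.prod_restrict, ae_restrict_iff' (measurableSet_Ioi.prod measurableSet_Ioi)]
      refine Filter.Eventually.of_forall ?_
      rintro ⟨t, r⟩ ⟨ht, hr⟩
      simp only [Set.mem_Ioi] at ht hr
      have hφ' : |θ| ≤ 1 / 10 := hθ.le
      obtain ⟨h1, h2, h3, h4, h5⟩ := ray_facts hr hφ'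
      have e1 := hE.norm_exp hq hq2 (a := t) (by simpa using ht.le) (by simp) hr hφ'
      have e2 := hosc r θ hr right_mem_uIcc
      simp only [Complex.ofReal_re] at e1
      have e3 : ‖Complex.exp (Complex.I * σ * t * x)‖ = 1 := by
        rw [Complex.norm_exp]; simp
      have e4 : ‖u‖ = 1 := Complex.norm_exp_ofReal_mul_I θ
      simp only [norm_mul, norm_pow, e3, e4] at *
      simp only [u, Complex.norm_exp_ofReal_mul_I] at *
      simp only [Complex.norm_real, Real.norm_of_nonneg hr.le, Real.norm_of_nonneg ht.le, mul_one, one_mul] at *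
      calc _ ≤ r ^ b' * 1 * (t ^ b * (Real.exp 500 * (Real.exp (-(1 / 96) * t ^ q) * Real.exp (-(1 / 96) * r ^ q)))) := by gcongr
        _ = _ := by ring
  have hH : H = fun r : ℝ => ∫ t in Ioi (0:ℝ), (u * ((r * u) ^ b' * Complex.exp (-Complex.I * (r * u) * v))) *
        ((t:ℂ) ^ b * Complex.exp (-E t (r * u)) * Complex.exp (Complex.I * σ * t * x)) := by
    funext r
    rw [integral_const_mul]
    rfl
  constructor
  · rw [hH]
    exact hfub.integral_prod_right
  · rw [setIntegral_congr_fun measurableSet_Ioi hstep, integral_integral_swap hfub, hH]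

end

section
open Set Filter Topology

lemma exp_sub_le {z w : ℂ} {m : ℝ} (hz : z.re ≤ m) (hw : w.re ≤ m) :
    ‖Complex.exp z - Complex.exp w‖ ≤ Real.exp m * ‖z - w‖ := by
  refine Convex.norm_image_sub_le_of_norm_deriv_le (s := {z : ℂ | z.re ≤ m}) (f := Complex.exp)
    (fun x _ => Complex.differentiableAt_exp) ?_ (convex_halfSpace_re_le m) hw hz
  intro x hx
  rw [Complex.deriv_exp, Complex.norm_exp]
  exact Real.exp_le_exp.2 hx

lemma jump_bound {q : ℝ} (hq : 0 < q) (hq2 : q < 2) {t r φ : ℝ} (ht : 0 ≤ t) (ht1 : t ≤ 1)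
    (hr : 0 < r) (hφ : |φ| ≤ 1 / 10) :
    ‖Complex.exp (-PK q (-t * Complex.I) (r * Complex.exp (φ * Complex.I))) -
      Complex.exp (-NK q (t * Complex.I) (r * Complex.exp (φ * Complex.I)))‖
      ≤ 6 * Real.exp 500 * Real.exp (-(1 / 96) * r ^ q) * min (t ^ (1 + q) / r) (t ^ q) := by
  obtain ⟨h1, h2, h3, h4, h5⟩ := ray_facts hr hφ
  have hP := (PK_good hq hq2).norm_exp hq hq2 (a := -t * Complex.I) (by simp) (by simp [abs_of_nonneg ht, ht1]) hr hφ
  have hN := (NK_good hq hq2).norm_exp hq hq2 (a := t * Complex.I) (by simp) (by simp [abs_of_nonneg ht, ht1]) hr hφ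
  set c : ℂ := r * Complex.exp (φ * Complex.I) with hc
  have e0 : Real.exp 500 * (Real.exp (-(1 / 96) * 0 ^ q) * Real.exp (-(1 / 96) * r ^ q))
      = Real.exp (500 + -(1 / 96) * r ^ q) := by
    rw [Real.zero_rpow hq.ne', Real.exp_add]; simp
  have r1 : (-(t:ℂ) * Complex.I).re = 0 := by simp
  have r2 : ((t:ℂ) * Complex.I).re = 0 := by simp
  rw [r1, e0, Complex.norm_exp, Real.exp_le_exp] at hP
  rw [r2, e0, Complex.norm_exp, Real.exp_le_exp] at hN
  refine (exp_sub_le hP hN).trans ?_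
  rw [Real.exp_add]
  have hw0 : 0 < ‖c + t * Complex.I‖ := by
    refine lt_of_lt_of_le ?_ (Complex.re_le_norm _)
    simp; linarith
  have hw : c + t * Complex.I ≠ 0 := norm_pos_iff.1 hw0
  have hw1 : r / 2 ≤ ‖c + t * Complex.I‖ := by
    refine le_trans ?_ (Complex.re_le_norm _)
    simp; linarith
  have hw2 : t ≤ 3 * ‖c + t * Complex.I‖ := by
    have : ‖t * Complex.I‖ ≤ ‖c + t * Complex.I‖ + ‖c‖ := by
      simpa using norm_sub_le (c + t * Complex.I) c
    simp [abs_of_nonneg ht] at this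
    linarith
  have hp0 : ((1 + q : ℝ) : ℂ) ≠ 0 := by
    have : (1 + q : ℝ) ≠ 0 := by linarith
    exact_mod_cast this
  have hne : -(t:ℂ) * Complex.I ≠ c := by
    intro h
    have := congrArg Complex.re h
    simp at this
    linarith
  have hdiff : -PK q (-t * Complex.I) c - -NK q (t * Complex.I) c =
      ((-t * Complex.I) ^ ((1 + q : ℝ) : ℂ) + (t * Complex.I) ^ ((1 + q : ℝ) : ℂ)) / (((1 + q : ℝ) : ℂ) * (c + t * Complex.I)) := by
    rw [PK_of_ne hne]
    unfold NK
    have e1 : -(t:ℂ) * Complex.I - c = -(c + t * Complex.I) := by ring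
    rw [e1, add_comm (t * Complex.I) c]
    field_simp
    ring
  have hnd : ‖-PK q (-t * Complex.I) c - -NK q (t * Complex.I) c‖ ≤ 2 * t ^ (1 + q) / ‖c + t * Complex.I‖ := by
    rw [hdiff, norm_div, norm_mul]
    have n1 : ‖(-(t:ℂ) * Complex.I) ^ ((1 + q : ℝ) : ℂ)‖ = t ^ (1 + q) := by
      rw [Complex.norm_cpow_real]; simp [abs_of_nonneg ht]
    have n2 : ‖((t:ℂ) * Complex.I) ^ ((1 + q : ℝ) : ℂ)‖ = t ^ (1 + q) := by
      rw [Complex.norm_cpow_real]; simp [abs_of_nonneg ht]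
    have n3 : 1 ≤ ‖((1 + q : ℝ) : ℂ)‖ := by
      rw [Complex.norm_real, Real.norm_of_nonneg (by linarith)]; linarith
    refine div_le_div₀ (by positivity) ?_ hw0 ?_
    · refine (norm_add_le _ _).trans ?_
      rw [n1, n2]; linarith
    · nlinarith
  have hmin : 2 * t ^ (1 + q) / ‖c + t * Complex.I‖ ≤ 6 * min (t ^ (1 + q) / r) (t ^ q) := by
    have e : t ^ (1 + q) = t * t ^ q := by
      rw [Real.rpow_add' ht (by linarith), Real.rpow_one]
    have p1 : 0 ≤ t ^ q := by positivity
    have p2 : 0 ≤ t ^ (1 + q) := by positivity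
    rw [div_le_iff₀ hw0]
    rcases min_choice (t ^ (1 + q) / r) (t ^ q) with h | h
    · rw [h]
      have : t ^ (1 + q) / r * r = t ^ (1 + q) := by field_simp
      have p3 : 0 ≤ t ^ (1 + q) / r := by positivity
      nlinarith
    · rw [h, e]
      nlinarith
  calc _ ≤ Real.exp 500 * Real.exp (-(1 / 96) * r ^ q) * (6 * min (t ^ (1 + q) / r) (t ^ q)) := by
        gcongr; exact hnd.trans hmin
    _ = _ := by ring

lemma gamma_bound {m x : ℝ} (hm : 0 < m) (hx : 0 < x) :
    IntervalIntegrable (fun t : ℝ => t ^ m * Real.exp (-(t * x))) volume 0 1 ∧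
    ∫ t in (0:ℝ)..1, t ^ m * Real.exp (-(t * x)) ≤ Real.Gamma (m + 1) * x ^ (-(m + 1)) := by
  have hc : Continuous (fun t : ℝ => t ^ m * Real.exp (-(t * x))) := by
    have : Continuous (fun t : ℝ => t ^ m) := continuous_id.rpow_const (fun _ => Or.inr hm.le)
    fun_prop
  refine ⟨hc.intervalIntegrable _ _, ?_⟩
  have h1 := Real.integral_rpow_mul_exp_neg_mul_Ioi (a := m + 1) (r := x) (by linarith) hx
  have h2 := integrableOn_rpow_mul_exp_neg_mul_rpow (p := 1) (s := m) (b := x) (by linarith) one_pos hx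
  have e : (fun t : ℝ => t ^ m * Real.exp (-x * t ^ (1:ℝ))) = fun t : ℝ => t ^ m * Real.exp (-(t * x)) := by
    funext t; rw [Real.rpow_one]; ring_nf
  rw [e] at h2
  have e2 : ∀ t : ℝ, t ^ (m + 1 - 1) * Real.exp (-(x * t)) = t ^ m * Real.exp (-(t * x)) := by
    intro t; rw [add_sub_cancel_right, mul_comm x]
  simp_rw [e2] at h1
  rw [intervalIntegral.integral_of_le zero_le_one]
  have h3 : ∫ t in Ioc (0:ℝ) 1, t ^ m * Real.exp (-(t * x)) ≤ ∫ t in Ioi (0:ℝ), t ^ m * Real.exp (-(t * x)) := by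
    refine setIntegral_mono_set h2 ?_ (Eventually.of_forall Ioc_subset_Ioi_self)
    refine (ae_restrict_iff' measurableSet_Ioi).2 (Eventually.of_forall fun t ht => ?_)
    simp only [mem_Ioi] at ht
    simp only [Pi.zero_apply]
    positivity
  refine h3.trans (le_of_eq ?_)
  rw [h1, Real.rpow_neg hx.le, one_div, Real.inv_rpow hx.le, mul_comm]

lemma W_bound {q : ℝ} (hq : 0 < q) (hq2 : q < 2) (b : ℕ) : ∃ A > 0, ∀ x r φ : ℝ, 1 ≤ x → 0 < r →
    |φ| ≤ 1 / 10 → ‖WK (PK q) b (-1) x (r * Complex.exp (φ * Complex.I)) +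
      (-1) ^ b * WK (NK q) b 1 x (r * Complex.exp (φ * Complex.I))‖ ≤
      A * Real.exp (-(1 / 96) * r ^ q) * (Real.exp (-x) + x ^ (-(b + q + 1)) * min (x * r)⁻¹ 1) := by
  set C1 : ℝ := Real.exp 500 * ∫ t in Ioi (0:ℝ), (t + 1) ^ b * Real.exp (-(1 / 96) * t ^ q) with hC1
  have hC1' : 0 ≤ C1 := by
    refine mul_nonneg (Real.exp_pos _).le (setIntegral_nonneg measurableSet_Ioi fun t ht => ?_)
    simp only [mem_Ioi] at ht
    positivity
  set G1 := Real.Gamma (b + (1 + q) + 1)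
  set G2 := Real.Gamma (b + q + 1)
  have hG1 : 0 < G1 := Real.Gamma_pos_of_pos (by positivity)
  have hG2 : 0 < G2 := Real.Gamma_pos_of_pos (by positivity)
  set C2 : ℝ := 6 * Real.exp 500 * (G1 + G2) with hC2
  have hC2' : 0 < C2 := by positivity
  refine ⟨2 * C1 + C2, by linarith, ?_⟩
  intro x r φ hx hr hφ
  have hx0 : 0 < x := by linarith
  obtain ⟨h1, h2, h3, h4, h5⟩ := ray_facts hr hφ
  have sP := WK_shift hq hq2 (PK_good hq hq2) b (σ := -1) (by norm_num) x hr hφ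
  have sN := WK_shift hq hq2 (NK_good hq hq2) b (σ := 1) (by norm_num) x hr hφ
  rw [← hC1] at sP sN
  set c : ℂ := r * Complex.exp (φ * Complex.I) with hc
  have hcre : 0 < c.re := by linarith
  set fP : ℝ → ℂ := fun t => (-t * Complex.I) ^ b * Complex.exp (-PK q (-t * Complex.I) c) * Complex.exp (-(t * x)) with hfP
  set fN : ℝ → ℂ := fun t => (-t * Complex.I) ^ b * Complex.exp (-NK q (t * Complex.I) c) * Complex.exp (-(t * x)) with hfN
  set JP : ℂ := Complex.I * ∫ y in (0:ℝ)..(-1:ℝ), ((y * Complex.I) ^ b *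
        Complex.exp (-PK q (y * Complex.I) c) * Complex.exp (Complex.I * (-1:ℝ) * (y * Complex.I) * x)) with hJP
  set JN : ℂ := Complex.I * ∫ y in (0:ℝ)..(1:ℝ), ((y * Complex.I) ^ b *
        Complex.exp (-NK q (y * Complex.I) c) * Complex.exp (Complex.I * (1:ℝ) * (y * Complex.I) * x)) with hJN
  have eP : JP = -Complex.I * ∫ t in (0:ℝ)..1, fP t := by
    rw [hJP]
    have := intervalIntegral.integral_comp_neg (a := (0:ℝ)) (b := 1) (fun y : ℝ => ((y * Complex.I) ^ b *
        Complex.exp (-PK q (y * Complex.I) c) * Complex.exp (Complex.I * (-1:ℝ) * (y * Complex.I) * x)))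
    rw [neg_zero] at this
    rw [intervalIntegral.integral_symm, ← this, mul_neg, neg_mul]
    congr 2
    refine intervalIntegral.integral_congr fun t _ => ?_
    simp only [hfP]
    push_cast
    congr 2
    linear_combination (t * x : ℂ) * Complex.I_sq
  have eN : (-1) ^ b * JN = Complex.I * ∫ t in (0:ℝ)..1, fN t := by
    rw [hJN, mul_left_comm, ← intervalIntegral.integral_const_mul]
    congr 1
    refine intervalIntegral.integral_congr fun t _ => ?_
    simp only [hfN]
    have e1 : (-(t:ℂ) * Complex.I) ^ b = (-1) ^ b * (t * Complex.I) ^ b := by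
      rw [← mul_pow]; congr 1; ring
    have e2 : Complex.I * (1:ℝ) * (t * Complex.I) * x = -((t:ℂ) * x) := by
      push_cast
      linear_combination (t * x : ℂ) * Complex.I_sq
    rw [e1, e2]
    ring
  have contP : Continuous (fun t : ℝ => PK q (-t * Complex.I) c) := by
    rw [← continuousOn_univ]
    exact (PK_cont hq hcre).comp (f := fun t : ℝ => -(t:ℂ) * Complex.I) (by fun_prop) (fun t _ => by simp)
  have contN : Continuous (fun t : ℝ => NK q (t * Complex.I) c) := by
    rw [← continuousOn_univ]
    exact (NK_cont hq hcre).comp (f := fun t : ℝ => (t:ℂ) * Complex.I) (by fun_prop) (fun t _ => by simp)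
  have iP : IntervalIntegrable fP volume 0 1 := Continuous.intervalIntegrable (by fun_prop) _ _
  have iN : IntervalIntegrable fN volume 0 1 := Continuous.intervalIntegrable (by fun_prop) _ _
  have eJ : JP + (-1) ^ b * JN = -Complex.I * ∫ t in (0:ℝ)..1, (fP t - fN t) := by
    rw [eP, eN, intervalIntegral.integral_sub iP iN]; ring
  have hpt : ∀ t ∈ Ioc (0:ℝ) 1, ‖fP t - fN t‖ ≤ 6 * Real.exp 500 * Real.exp (-(1 / 96) * r ^ q) *
      (t ^ b * min (t ^ (1 + q) / r) (t ^ q) * Real.exp (-(t * x))) := by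
    intro t ht
    have hj := jump_bound hq hq2 ht.1.le ht.2 hr hφ
    rw [← hc] at hj
    have e : fP t - fN t = (-t * Complex.I) ^ b * (Complex.exp (-PK q (-t * Complex.I) c) -
      Complex.exp (-NK q (t * Complex.I) c)) * Complex.exp (-(t * x)) := by
      simp only [hfP, hfN]; ring
    rw [e, norm_mul, norm_mul, norm_pow]
    have n1 : ‖-(t:ℂ) * Complex.I‖ = t := by simp [abs_of_pos ht.1]
    have n2 : ‖Complex.exp (-((t:ℂ) * x))‖ = Real.exp (-(t * x)) := by
      rw [Complex.norm_exp]; simp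
    rw [n1, n2]
    have := ht.1.le
    calc _ ≤ t ^ b * (6 * Real.exp 500 * Real.exp (-(1 / 96) * r ^ q) * min (t ^ (1 + q) / r) (t ^ q)) *
          Real.exp (-(t * x)) := by gcongr
      _ = _ := by ring
  set X := Real.exp (-(1 / 96) * r ^ q) with hX
  have hX0 : 0 < X := Real.exp_pos _
  have J1 : ‖∫ t in (0:ℝ)..1, (fP t - fN t)‖ ≤ C2 * X * (x ^ (-(b + q + 1)) * (x * r)⁻¹) := by
    obtain ⟨gi, gb⟩ := gamma_bound (m := b + (1 + q)) (x := x) (by positivity) hx0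
    have := intervalIntegral.norm_integral_le_of_norm_le zero_le_one (μ := volume) (f := fun t => fP t - fN t)
      (g := fun t => (6 * Real.exp 500 * X / r) * (t ^ (b + (1 + q)) * Real.exp (-(t * x))))
      (Eventually.of_forall fun t ht => by
        refine (hpt t ht).trans ?_
        have e : t ^ (b + (1 + q)) = t ^ b * t ^ (1 + q) := by
          rw [Real.rpow_add ht.1, Real.rpow_natCast]
        rw [e]
        have := ht.1.le
        calc _ ≤ 6 * Real.exp 500 * X * (t ^ b * (t ^ (1 + q) / r) * Real.exp (-(t * x))) := by
              gcongr; exact min_le_left _ _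
          _ = _ := by ring) (gi.const_mul _)
    refine this.trans ?_
    rw [intervalIntegral.integral_const_mul]
    have ex : x ^ (-(b + q + 1)) * (x * r)⁻¹ = x ^ (-(b + (1 + q) + 1)) / r := by
      have : x ^ (-(b + (1 + q) + 1)) = x ^ (-(b + q + 1)) * x⁻¹ := by
        rw [← Real.rpow_neg_one x, ← Real.rpow_add hx0]; congr 1; ring
      rw [this, mul_inv]; ring
    rw [ex, hC2]
    calc _ ≤ 6 * Real.exp 500 * X / r * (G1 * x ^ (-(b + (1 + q) + 1))) := by gcongr
      _ = 6 * Real.exp 500 * G1 * X * (x ^ (-(b + (1 + q) + 1)) / r) := by ring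
      _ ≤ _ := by gcongr; linarith
  have J2 : ‖∫ t in (0:ℝ)..1, (fP t - fN t)‖ ≤ C2 * X * (x ^ (-(b + q + 1)) * 1) := by
    obtain ⟨gi, gb⟩ := gamma_bound (m := b + q) (x := x) (by positivity) hx0
    have := intervalIntegral.norm_integral_le_of_norm_le zero_le_one (μ := volume) (f := fun t => fP t - fN t)
      (g := fun t => (6 * Real.exp 500 * X) * (t ^ (b + q) * Real.exp (-(t * x))))
      (Eventually.of_forall fun t ht => by
        refine (hpt t ht).trans ?_
        have e : t ^ (b + q) = t ^ b * t ^ q := by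
          rw [Real.rpow_add ht.1, Real.rpow_natCast]
        rw [e]
        have := ht.1.le
        gcongr; exact min_le_right _ _) (gi.const_mul _)
    refine this.trans ?_
    rw [intervalIntegral.integral_const_mul, hC2, mul_one]
    calc _ ≤ 6 * Real.exp 500 * X * (G2 * x ^ (-(b + q + 1))) := by gcongr
      _ = 6 * Real.exp 500 * G2 * X * (x ^ (-(b + q + 1))) := by ring
      _ ≤ _ := by gcongr; linarith
  have J : ‖JP + (-1) ^ b * JN‖ ≤ C2 * X * (x ^ (-(b + q + 1)) * min (x * r)⁻¹ 1) := by
    rw [eJ, norm_mul, norm_neg, Complex.norm_I, one_mul]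
    rcases min_choice (x * r)⁻¹ 1 with h | h <;> rw [h]
    · exact J1
    · exact J2
  have tri : WK (PK q) b (-1) x c + (-1) ^ b * WK (NK q) b 1 x c =
    (WK (PK q) b (-1) x c - JP) + (-1) ^ b * (WK (NK q) b 1 x c - JN) + (JP + (-1) ^ b * JN) := by ring
  rw [tri]
  have hpm : ‖(-1:ℂ) ^ b * (WK (NK q) b 1 x c - JN)‖ ≤ C1 * X * Real.exp (-x) := by
    rw [norm_mul, norm_pow, norm_neg, norm_one, one_pow, one_mul]; exact sN
  refine (norm_add₃_le).trans ?_
  have k1 : 0 ≤ C1 * X * (x ^ (-(b + q + 1)) * min (x * r)⁻¹ 1) := by positivity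
  have k2 : 0 ≤ C2 * X * Real.exp (-x) := by positivity
  calc _ ≤ C1 * X * Real.exp (-x) + C1 * X * Real.exp (-x) + C2 * X * (x ^ (-(b + q + 1)) * min (x * r)⁻¹ 1) :=
        add_le_add (add_le_add sP hpm) J
    _ ≤ _ := by linarith

end

section
open Set Filter Topology

lemma rpow_le_exp {m c : ℝ} (hm : 0 < m) (hc : 0 < c) {y : ℝ} (hy : 0 ≤ y) :
    y ^ m ≤ (m / c) ^ m * Real.exp (c * y) := by
  have h1 : c * y / m ≤ Real.exp (c * y / m) := by linarith [Real.add_one_le_exp (c * y / m)]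
  have h2 : (c * y / m) ^ m ≤ Real.exp (c * y) := by
    calc (c * y / m) ^ m ≤ (Real.exp (c * y / m)) ^ m := Real.rpow_le_rpow (by positivity) h1 hm.le
      _ = Real.exp (c * y) := by rw [← Real.exp_mul]; congr 1; field_simp
  have h3 : y = (m / c) * (c * y / m) := by field_simp
  calc y ^ m = (m / c) ^ m * (c * y / m) ^ m := by
        rw [← Real.mul_rpow (by positivity) (by positivity), ← h3]
    _ ≤ _ := by gcongr

lemma decay1 {q m : ℝ} (hq : 0 < q) (hm : 0 < m) : ∃ A > 0, ∀ r V : ℝ, 0 < r → 0 ≤ V →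
    r ^ m * Real.exp (-(r * V / 20)) * Real.exp (-(1 / 96) * r ^ q) ≤
      A * (1 + V) ^ (-m) * Real.exp (-(1 / 192) * r ^ q) := by
  set A1 : ℝ := (m / q / (1 / 192)) ^ (m / q)
  set A2 : ℝ := (m / (1 / 20)) ^ m
  have hA1 : 0 < A1 := by positivity
  have hA2 : 0 < A2 := by positivity
  refine ⟨2 ^ m * (A1 + A2), by positivity, fun r V hr hV => ?_⟩
  have h1 : r ^ m ≤ A1 * Real.exp ((1 / 192) * r ^ q) := by
    have := rpow_le_exp (m := m / q) (c := 1 / 192) (by positivity) (by norm_num) (y := r ^ q) (by positivity)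
    rwa [← Real.rpow_mul hr.le, mul_div_cancel₀ _ hq.ne'] at this
  have h2 : (r * V) ^ m ≤ A2 * Real.exp ((1 / 20) * (r * V)) :=
    rpow_le_exp hm (by norm_num) (by positivity)
  have h3 : (r * (1 + V)) ^ m ≤ 2 ^ m * (r ^ m + (r * V) ^ m) := by
    have hmx : r * (1 + V) ≤ 2 * max r (r * V) := by
      have := le_max_left r (r * V); have := le_max_right r (r * V); nlinarith
    calc (r * (1 + V)) ^ m ≤ (2 * max r (r * V)) ^ m := Real.rpow_le_rpow (by positivity) hmx hm.le
      _ = 2 ^ m * (max r (r * V)) ^ m := Real.mul_rpow (by norm_num) (by positivity)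
      _ ≤ _ := by
        gcongr
        have p1 : 0 ≤ r ^ m := by positivity
        have p2 : 0 ≤ (r * V) ^ m := by positivity
        rcases max_choice r (r * V) with h | h <;> rw [h] <;> linarith
  have e1 : 1 ≤ Real.exp ((1 / 192) * r ^ q) := Real.one_le_exp (by positivity)
  have e2 : 1 ≤ Real.exp ((1 / 20) * (r * V)) := Real.one_le_exp (by positivity)
  have h4 : (r * (1 + V)) ^ m ≤
      2 ^ m * (A1 + A2) * (Real.exp ((1 / 192) * r ^ q) * Real.exp ((1 / 20) * (r * V))) := by
    refine h3.trans ?_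
    rw [mul_assoc]
    gcongr
    set X := Real.exp ((1 / 192) * r ^ q)
    set Y := Real.exp ((1 / 20) * (r * V))
    have : A1 * X ≤ A1 * (X * Y) := by
      refine mul_le_mul_of_nonneg_left ?_ hA1.le; nlinarith
    have : A2 * Y ≤ A2 * (X * Y) := by
      refine mul_le_mul_of_nonneg_left ?_ hA2.le; nlinarith
    nlinarith
  rw [Real.mul_rpow hr.le (by positivity)] at h4
  have hV' : 0 < (1 + V) ^ m := by positivity
  rw [Real.rpow_neg (by positivity)]
  have h5 : r ^ m ≤ 2 ^ m * (A1 + A2) * (Real.exp ((1 / 192) * r ^ q) * Real.exp ((1 / 20) * (r * V))) *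
      ((1 + V) ^ m)⁻¹ := by
    rw [← div_eq_mul_inv, le_div_iff₀ hV']; exact h4
  calc _ ≤ (2 ^ m * (A1 + A2) * (Real.exp ((1 / 192) * r ^ q) * Real.exp ((1 / 20) * (r * V))) *
      ((1 + V) ^ m)⁻¹) * Real.exp (-(r * V / 20)) * Real.exp (-(1 / 96) * r ^ q) := by gcongr
    _ = 2 ^ m * (A1 + A2) * ((1 + V) ^ m)⁻¹ * (Real.exp ((1 / 192) * r ^ q) * Real.exp ((1 / 20) * (r * V)) *
       Real.exp (-(r * V / 20)) * Real.exp (-(1 / 96) * r ^ q)) := by ring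
    _ = _ := by
      congr 1
      rw [← Real.exp_add, ← Real.exp_add, ← Real.exp_add]
      congr 1; ring

lemma hfun_int {ε : ℝ} (h0 : 0 < ε) (h1 : ε < 1) :
    IntegrableOn (fun u : ℝ => u ^ (-ε) * min u⁻¹ 1) (Ioi 0) := by
  have hm : Measurable (fun u : ℝ => u ^ (-ε) * min u⁻¹ 1) := by fun_prop
  rw [← Ioc_union_Ioi_eq_Ioi (zero_le_one' ℝ)]
  refine IntegrableOn.union ?_ ?_
  · have : IntegrableOn (fun u : ℝ => u ^ (-ε)) (Ioc 0 1) := by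
      rw [← intervalIntegrable_iff_integrableOn_Ioc_of_le zero_le_one]
      exact intervalIntegral.intervalIntegrable_rpow' (by linarith)
    refine this.mono' hm.aestronglyMeasurable ?_
    rw [ae_restrict_iff' measurableSet_Ioc]
    refine Eventually.of_forall fun u hu => ?_
    have hu0 : 0 < u := hu.1
    rw [Real.norm_of_nonneg (by positivity)]
    exact mul_le_of_le_one_right (by positivity) (min_le_right _ _)
  · have : IntegrableOn (fun u : ℝ => u ^ (-ε - 1)) (Ioi 1) :=
      integrableOn_Ioi_rpow_of_lt (by linarith) one_pos
    refine this.mono' hm.aestronglyMeasurable ?_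
    rw [ae_restrict_iff' measurableSet_Ioi]
    refine Eventually.of_forall fun u hu => ?_
    have hu0 : 0 < u := one_pos.trans hu
    rw [Real.norm_of_nonneg (by positivity), Real.rpow_sub hu0, Real.rpow_one, div_eq_mul_inv]
    gcongr
    exact min_le_left _ _

noncomputable def TK (E : ℂ → ℂ → ℂ) (b b' : ℕ) (σ x v : ℝ) : ℂ :=
  ∫ t in Ioi (0:ℝ), (∫ y in Ioi (0:ℝ), ((t:ℂ) ^ b * Complex.exp (Complex.I * σ * t * x)) *
      ((y:ℂ) ^ b' * Complex.exp (-E t y) * Complex.exp (-Complex.I * y * v)))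

lemma core_bound {q : ℝ} (hq : 0 < q) (hq2 : q < 2) (b b' : ℕ) {ε : ℝ} (h0 : 0 < ε) (h1 : ε < 1) :
    ∃ A > 0, ∀ x v : ℝ, 1 ≤ x →
      ‖TK (PK q) b b' (-1) x v + (-1) ^ b * TK (NK q) b b' 1 x v‖ ≤
        A * x ^ (-(b + q + 2 - ε)) * (1 + |v|) ^ (-(b' + ε)) := by
  obtain ⟨A, hA, hW⟩ := W_bound hq hq2 b
  obtain ⟨A1, hA1, hd⟩ := decay1 (q := q) (m := b' + ε) hq (by positivity)
  have hn : 0 < b + q + 2 - ε := by linarith [(Nat.cast_nonneg b : (0:ℝ) ≤ b)]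
  set n : ℝ := b + q + 2 - ε with hndef
  set A2 : ℝ := (n / 1) ^ n
  have hA2 : 0 < A2 := by positivity
  have g1 : IntegrableOn (fun r : ℝ => r ^ (-ε) * Real.exp (-(1 / 192) * r ^ q)) (Ioi 0) :=
    integrableOn_rpow_mul_exp_neg_mul_rpow (by linarith) hq (by norm_num)
  have g2 := hfun_int h0 h1
  set J1 : ℝ := ∫ r in Ioi (0:ℝ), r ^ (-ε) * Real.exp (-(1 / 192) * r ^ q) with hJ1
  set J2 : ℝ := ∫ u in Ioi (0:ℝ), u ^ (-ε) * min u⁻¹ 1 with hJ2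
  have J1n : 0 ≤ J1 := setIntegral_nonneg measurableSet_Ioi fun r hr => by
    have : 0 < r := hr
    positivity
  have J2n : 0 ≤ J2 := setIntegral_nonneg measurableSet_Ioi fun r hr => by
    have : 0 < r := hr
    positivity
  refine ⟨A * A1 * (A2 * J1 + J2) + 1, by positivity, fun x v hx => ?_⟩
  have hx0 : 0 < x := by linarith
  obtain ⟨θ, hθ, hv⟩ : ∃ θ : ℝ, |θ| = 1 / 10 ∧ v * θ = -|v| / 10 := by
    rcases le_total 0 v with h | h
    · exact ⟨-(1 / 10), by norm_num [abs_of_pos], by rw [abs_of_nonneg h]; ring⟩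
    · exact ⟨1 / 10, by norm_num [abs_of_pos], by rw [abs_of_nonpos h]; ring⟩
  have hsin : v * Real.sin θ ≤ -|v| / 20 := by
    have hs : 1 / 20 ≤ Real.sin (1 / 10) := by
      have := Real.sin_gt_sub_cube (x := 1 / 10) (by norm_num)
      norm_num at this ⊢; linarith
    have habs := abs_nonneg v
    rcases (abs_eq (by norm_num : (0:ℝ) ≤ 1 / 10)).1 hθ with h | h
    · rw [h] at hv ⊢
      have : v = -|v| := by linarith
      rw [this, abs_neg, abs_abs]; nlinarith
    · rw [h] at hv ⊢
      have : v = |v| := by linarith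
      rw [Real.sin_neg, this, abs_abs]; nlinarith
  have hvθ : v * θ ≤ 0 := by rw [hv]; have := abs_nonneg v; linarith
  obtain ⟨i1, e1⟩ := rot_swap hq hq2 (PK_good hq hq2) b b' (-1) x v hθ hvθ
  obtain ⟨i2, e2⟩ := rot_swap hq hq2 (NK_good hq hq2) b b' 1 x v hθ hvθ
  have e1' : TK (PK q) b b' (-1) x v = _ := e1
  have e2' : TK (NK q) b b' 1 x v = _ := e2
  rw [e1', e2', ← integral_const_mul, ← integral_add i1 (i2.const_mul _)]
  set u := Complex.exp (θ * Complex.I) with hu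
  set V := (1 + |v|) ^ (-((b':ℝ) + ε)) with hV
  have hVp : 0 < V := by positivity
  have i3 : IntegrableOn (fun r : ℝ => (x * r) ^ (-ε) * min (x * r)⁻¹ 1) (Ioi 0) := by
    have := (integrableOn_Ioi_comp_mul_left_iff (fun u : ℝ => u ^ (-ε) * min u⁻¹ 1) 0 hx0).2
      (by simpa using g2)
    exact this
  have c3 : ∫ r in Ioi (0:ℝ), (x * r) ^ (-ε) * min (x * r)⁻¹ 1 = x⁻¹ * J2 := by
    have := integral_comp_mul_left_Ioi (fun u : ℝ => u ^ (-ε) * min u⁻¹ 1) 0 hx0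
    simpa using this
  set G : ℝ → ℝ := fun r => A * A1 * V * (Real.exp (-x) * (r ^ (-ε) * Real.exp (-(1 / 192) * r ^ q)) +
    x ^ (-(b + q + 1) + ε) * ((x * r) ^ (-ε) * min (x * r)⁻¹ 1)) with hG
  have iG : IntegrableOn G (Ioi 0) := ((g1.const_mul _).add (i3.const_mul _)).const_mul _
  have hGint : ∫ r in Ioi (0:ℝ), G r = A * A1 * V * (Real.exp (-x) * J1 +
      x ^ (-(b + q + 1) + ε) * (x⁻¹ * J2)) := by
    rw [hG, integral_const_mul, integral_add (g1.const_mul _) (i3.const_mul _), integral_const_mul,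
      integral_const_mul, c3]
  have hpow : x ^ (-(b + q + 1) + ε) * x⁻¹ = x ^ (-n) := by
    rw [← Real.rpow_neg_one, ← Real.rpow_add hx0]; congr 1; rw [hndef]; ring
  have hexp : Real.exp (-x) ≤ A2 * x ^ (-n) := by
    have := rpow_le_exp hn one_pos hx0.le
    rw [one_mul] at this
    rw [Real.exp_neg, Real.rpow_neg hx0.le, ← div_eq_mul_inv, le_div_iff₀ (by positivity),
      inv_mul_le_iff₀ (Real.exp_pos _), mul_comm]
    exact this
  have hmain : ‖∫ r in Ioi (0:ℝ), (u * ((r * u) ^ b' * Complex.exp (-Complex.I * (r * u) * v)) *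
        WK (PK q) b (-1) x (r * u) + (-1) ^ b * (u * ((r * u) ^ b' *
        Complex.exp (-Complex.I * (r * u) * v)) * WK (NK q) b 1 x (r * u)))‖ ≤ ∫ r in Ioi (0:ℝ), G r := by
    refine norm_integral_le_of_norm_le iG ?_
    rw [ae_restrict_iff' measurableSet_Ioi]
    refine Eventually.of_forall fun r hr => ?_
    have hr0 : 0 < r := hr
    have hw := hW x r θ hx hr0 hθ.le
    rw [← hu] at hw
    have hnu : ‖u‖ = 1 := by rw [hu, Complex.norm_exp_ofReal_mul_I]
    have hosc : ‖Complex.exp (-Complex.I * (r * u) * v)‖ ≤ Real.exp (-(r * |v| / 20)) := by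
      rw [Complex.norm_exp]
      apply Real.exp_le_exp.2
      have : (-Complex.I * (r * u) * v).re = r * (v * Real.sin θ) := by
        have h1 : u.im = Real.sin θ := by rw [hu, Complex.exp_ofReal_mul_I_im]
        simp [h1]; ring
      rw [this]; nlinarith
    have : u * ((r * u) ^ b' * Complex.exp (-Complex.I * (r * u) * v)) *
        WK (PK q) b (-1) x (r * u) + (-1) ^ b * (u * ((r * u) ^ b' *
        Complex.exp (-Complex.I * (r * u) * v)) * WK (NK q) b 1 x (r * u)) =
        u * ((r * u) ^ b' * Complex.exp (-Complex.I * (r * u) * v)) *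
        (WK (PK q) b (-1) x (r * u) + (-1) ^ b * WK (NK q) b 1 x (r * u)) := by ring
    rw [this, norm_mul, norm_mul, norm_mul, norm_pow, norm_mul, hnu, Complex.norm_real,
      Real.norm_of_nonneg hr0.le, mul_one, one_mul]
    have hmin : 0 ≤ Real.exp (-x) + x ^ (-(b + q + 1)) * min (x * r)⁻¹ 1 := by positivity
    have hrb : r ^ b' = r ^ ((b':ℝ) + ε) * r ^ (-ε) := by
      rw [← Real.rpow_add hr0, ← Real.rpow_natCast]; congr 1; ring
    have hdd := hd r |v| hr0 (abs_nonneg v)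
    have hle1 : Real.exp (-(1 / 192) * r ^ q) ≤ 1 := Real.exp_le_one_iff.2 (by
      have : 0 < r ^ q := by positivity
      linarith)
    calc r ^ b' * ‖Complex.exp (-Complex.I * (r * u) * v)‖ *
          ‖WK (PK q) b (-1) x (r * u) + (-1) ^ b * WK (NK q) b 1 x (r * u)‖
        ≤ r ^ b' * Real.exp (-(r * |v| / 20)) * (A * Real.exp (-(1 / 96) * r ^ q) *
          (Real.exp (-x) + x ^ (-(b + q + 1)) * min (x * r)⁻¹ 1)) := by gcongr
      _ = A * r ^ (-ε) * (r ^ ((b':ℝ) + ε) * Real.exp (-(r * |v| / 20)) * Real.exp (-(1 / 96) * r ^ q)) *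
          (Real.exp (-x) + x ^ (-(b + q + 1)) * min (x * r)⁻¹ 1) := by rw [hrb]; ring
      _ ≤ A * r ^ (-ε) * (A1 * V * Real.exp (-(1 / 192) * r ^ q)) *
          (Real.exp (-x) + x ^ (-(b + q + 1)) * min (x * r)⁻¹ 1) := by gcongr
      _ = A * A1 * V * (Real.exp (-x) * (r ^ (-ε) * Real.exp (-(1 / 192) * r ^ q)) +
          Real.exp (-(1 / 192) * r ^ q) * (x ^ (-(b + q + 1)) * (r ^ (-ε) * min (x * r)⁻¹ 1))) := by ring
      _ ≤ A * A1 * V * (Real.exp (-x) * (r ^ (-ε) * Real.exp (-(1 / 192) * r ^ q)) +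
          1 * (x ^ (-(b + q + 1)) * (r ^ (-ε) * min (x * r)⁻¹ 1))) := by gcongr
      _ = G r := by
        rw [hG]
        simp only
        congr 2
        rw [Real.mul_rpow hx0.le hr0.le, Real.rpow_add hx0, Real.rpow_neg hx0.le ε]
        have : 0 < x ^ ε := by positivity
        field_simp
  refine hmain.trans ?_
  rw [hGint]
  have hxn : 0 < x ^ (-n) := by positivity
  calc A * A1 * V * (Real.exp (-x) * J1 + x ^ (-(b + q + 1) + ε) * (x⁻¹ * J2))
      = A * A1 * V * (Real.exp (-x) * J1 + (x ^ (-(b + q + 1) + ε) * x⁻¹) * J2) := by ring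
    _ ≤ A * A1 * V * (A2 * x ^ (-n) * J1 + x ^ (-n) * J2) := by rw [hpow]; gcongr
    _ = (A * A1 * (A2 * J1 + J2)) * x ^ (-n) * V := by ring
    _ ≤ _ := by gcongr; linarith

end

section
open Set Filter Topology

lemma Mker_symm (s ξ η : ℝ) : Mker s ξ η = Mker s η ξ := by
  unfold Mker
  have := intervalIntegral.integral_comp_sub_left (a := 0) (b := 1)
    (fun τ : ℝ => |(η - ξ) * τ + ξ| ^ (2 * s)) 1
  simp only [sub_self, sub_zero] at this
  rw [← this]
  congr 1; ext τ; congr 2; ring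

lemma Mker_neg (s ξ η : ℝ) : Mker s (-ξ) (-η) = Mker s ξ η := by
  unfold Mker
  congr 1; ext τ
  rw [show (-ξ - -η) * τ + -η = -((ξ - η) * τ + η) by ring, abs_neg]

lemma Mker_PK {s : ℝ} (hs : 0 < s) {a c : ℝ} (ha : 0 < a) (hc : 0 < c) :
    (Mker s a c : ℂ) = PK (2 * s) a c := by
  have h := (PK_integral (q := 2 * s) (by positivity) (a := (a:ℂ)) (c := (c:ℂ)) (by simpa using ha.le)
    (by simpa using hc)).2
  rw [h, Mker, ← intervalIntegral.integral_ofReal]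
  refine intervalIntegral.integral_congr fun τ hτ => ?_
  rw [uIcc_of_le zero_le_one] at hτ
  have hp : 0 ≤ (a - c) * τ + c := by
    have := hτ.1; have := hτ.2; nlinarith [mul_nonneg ha.le hτ.1, mul_nonneg hc.le (sub_nonneg.2 hτ.2)]
  rw [abs_of_nonneg hp, Complex.ofReal_cpow hp]
  push_cast
  rfl

lemma Mker_NK {s : ℝ} (hs : 0 < s) {a c : ℝ} (ha : 0 < a) (hc : 0 < c) :
    (Mker s (-a) c : ℂ) = NK (2 * s) a c := by
  have key : Mker s (-a) c = (a ^ (1 + 2 * s) + c ^ (1 + 2 * s)) / ((1 + 2 * s) * (a + c)) := by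
    have h1 : Mker s (-a) c = (a + c)⁻¹ * ∫ y in (-a)..c, |y| ^ (2 * s) := by
      rw [Mker_symm, Mker]
      have := intervalIntegral.integral_comp_mul_add (a := 0) (b := 1) (fun y : ℝ => |y| ^ (2 * s))
        (c := c - -a) (by linarith) (-a)
      rw [this]; simp; ring_nf; simp
    have hcont : Continuous fun y : ℝ => |y| ^ (2 * s) :=
      continuous_abs.rpow_const fun _ => Or.inr (by positivity)
    have h2 : ∀ d : ℝ, 0 < d → ∫ y in (0:ℝ)..d, |y| ^ (2 * s) = d ^ (1 + 2 * s) / (1 + 2 * s) := by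
      intro d hd
      rw [show ∫ y in (0:ℝ)..d, |y| ^ (2 * s) = ∫ y in (0:ℝ)..d, y ^ (2 * s) from ?_]
      · rw [integral_rpow (Or.inl (by linarith)), Real.zero_rpow (by linarith)]; ring_nf
      · refine intervalIntegral.integral_congr fun y hy => ?_
        rw [uIcc_of_le hd.le] at hy
        simp only [abs_of_nonneg hy.1]
    have h3 : ∫ y in (-a)..0, |y| ^ (2 * s) = a ^ (1 + 2 * s) / (1 + 2 * s) := by
      rw [← h2 a ha]
      have := intervalIntegral.integral_comp_neg (a := 0) (b := a) (fun y : ℝ => |y| ^ (2 * s))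
      simpa using this.symm
    rw [h1, ← intervalIntegral.integral_add_adjacent_intervals (hcont.intervalIntegrable _ 0)
      (hcont.intervalIntegrable 0 _), h3, h2 c hc]
    field_simp
  rw [key, NK]
  push_cast
  rw [Complex.ofReal_cpow ha.le, Complex.ofReal_cpow hc.le]
  push_cast
  rfl

noncomputable def FI (s : ℝ) (b₁ b₂ : ℕ) (x v : ℝ) (p : ℝ × ℝ) : ℂ :=
  (p.1 : ℂ) ^ b₁ * (p.2 : ℂ) ^ b₂ * Complex.exp (-(Mker s p.1 p.2 : ℂ)) *
            Complex.exp (-Complex.I * ((p.1 * x + p.2 * v : ℝ) : ℂ))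

lemma FI_conj (s : ℝ) (b₁ b₂ : ℕ) (x v : ℝ) (p : ℝ × ℝ) :
    (starRingEnd ℂ) (FI s b₁ b₂ x v p) = FI s b₁ b₂ (-x) (-v) p := by
  simp only [FI, map_mul, map_pow, Complex.conj_ofReal, ← Complex.exp_conj, map_neg, Complex.conj_I]
  congr 2
  push_cast; ring

lemma FI_neg (s : ℝ) (b₁ b₂ : ℕ) (x v : ℝ) (p : ℝ × ℝ) :
    FI s b₁ b₂ x v (-p) = (-1) ^ (b₁ + b₂) * FI s b₁ b₂ (-x) (-v) p := by
  simp only [FI, Prod.fst_neg, Prod.snd_neg, Mker_neg]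
  rw [pow_add, Complex.ofReal_neg, Complex.ofReal_neg, neg_pow (p.1:ℂ), neg_pow (p.2:ℂ)]
  have : (-p.1 * x + -p.2 * v) = (p.1 * -x + p.2 * -v) := by ring
  rw [this]; ring

lemma FI_swap (s : ℝ) (b₁ b₂ : ℕ) (x v : ℝ) (p : ℝ × ℝ) :
    FI s b₁ b₂ x v p.swap = FI s b₂ b₁ v x p := by
  simp only [FI, Prod.fst_swap, Prod.snd_swap]
  rw [Mker_symm, add_comm (p.2 * x)]; ring

lemma FI_norm (s : ℝ) (b₁ b₂ : ℕ) (x v : ℝ) (p : ℝ × ℝ) :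
    ‖FI s b₁ b₂ x v p‖ = ‖FI s b₁ b₂ 0 0 p‖ := by
  have : ∀ t : ℝ, ‖Complex.exp (-Complex.I * (t:ℂ))‖ = 1 := by
    intro t
    rw [show -Complex.I * (t:ℂ) = ((-t : ℝ):ℂ) * Complex.I by push_cast; ring, Complex.norm_exp_ofReal_mul_I]
  simp only [FI, norm_mul, this]

/-- full bound for 1 ≤ x -/
lemma FI_quad {s : ℝ} (hs : 0 < s) (b₁ b₂ : ℕ) (x v : ℝ)
    (hi : ∀ x v, Integrable (FI s b₁ b₂ x v)) :
    ‖∫ p, FI s b₁ b₂ x v p‖ ≤ 2 * ‖TK (PK (2 * s)) b₁ b₂ (-1) x v +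
      (-1) ^ b₁ * TK (NK (2 * s)) b₁ b₂ 1 x v‖ := by
  set f := FI s b₁ b₂ x v with hf
  have hif : Integrable f := hi x v
  -- split by sign of p.2
  set U : Set (ℝ × ℝ) := univ ×ˢ Ioi 0 with hU
  have hUm : MeasurableSet U := MeasurableSet.univ.prod measurableSet_Ioi
  have hlow : ∫ p in Uᶜ, f p = (-1) ^ (b₁ + b₂) * (starRingEnd ℂ) (∫ p in U, f p) := by
    have e1 : ∫ p in Uᶜ, f p = ∫ p in (univ ×ˢ Iio (0:ℝ)), f p := by
      refine setIntegral_congr_set ?_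
      have : Uᶜ = univ ×ˢ Iic (0:ℝ) := by ext p; simp [hU]
      rw [this, Measure.volume_eq_prod]
      exact Measure.set_prod_ae_eq (ae_eq_refl _) Iio_ae_eq_Iic.symm
    have e2 : ∫ p in (univ ×ˢ Iio (0:ℝ)), f p = ∫ p in U, f (-p) := by
      have hmp : MeasurePreserving (fun p : ℝ × ℝ => -p) volume volume := Measure.measurePreserving_neg _
      have := hmp.setIntegral_preimage_emb (MeasurableEquiv.neg (ℝ × ℝ)).measurableEmbedding f
        (univ ×ˢ Iio (0:ℝ))
      rw [← this]
      congr 2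
      ext p; simp [hU]
    rw [e1, e2, ← integral_conj, ← integral_const_mul]
    refine integral_congr_ae (Eventually.of_forall fun p => ?_)
    simp only [hf, FI_neg, FI_conj]
  have hup : ∫ p in U, f p = TK (PK (2 * s)) b₁ b₂ (-1) x v +
      (-1) ^ b₁ * TK (NK (2 * s)) b₁ b₂ 1 x v := by
    have hI1 : IntegrableOn f (Ioi (0:ℝ) ×ˢ Ioi (0:ℝ)) := hif.integrableOn
    have hI2 : IntegrableOn f (Iio (0:ℝ) ×ˢ Ioi (0:ℝ)) := hif.integrableOn
    have e0 : ∫ p in U, f p = (∫ p in Ioi (0:ℝ) ×ˢ Ioi (0:ℝ), f p) + ∫ p in Iio (0:ℝ) ×ˢ Ioi (0:ℝ), f p := by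
      rw [← setIntegral_union _ (measurableSet_Iio.prod measurableSet_Ioi) hI1 hI2]
      · refine setIntegral_congr_set ?_
        rw [← union_prod, Measure.volume_eq_prod]
        refine Measure.set_prod_ae_eq ?_ (ae_eq_refl _)
        have : Ioi (0:ℝ) ∪ Iio 0 = {0}ᶜ := by ext y; simp
        rw [this]
        refine (ae_eq_univ.2 ?_).symm
        simp
      · rw [Set.disjoint_left]
        rintro ⟨a, c⟩ ⟨h1, _⟩ ⟨h2, _⟩
        simp only [mem_Ioi, mem_Iio] at h1 h2
        linarith
    have e1 : ∫ p in Ioi (0:ℝ) ×ˢ Ioi (0:ℝ), f p = TK (PK (2 * s)) b₁ b₂ (-1) x v := by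
      rw [Measure.volume_eq_prod, setIntegral_prod f hI1, TK]
      refine setIntegral_congr_fun measurableSet_Ioi fun t ht => ?_
      refine setIntegral_congr_fun measurableSet_Ioi fun y hy => ?_
      simp only [hf, FI]
      rw [Mker_PK hs ht hy]
      have : Complex.exp (-Complex.I * ((t * x + y * v : ℝ):ℂ)) =
          Complex.exp (Complex.I * ((-1 : ℝ):ℂ) * t * x) * Complex.exp (-Complex.I * y * v) := by
        rw [← Complex.exp_add]; congr 1; push_cast; ring
      rw [this]; ring
    have e2 : ∫ p in Iio (0:ℝ) ×ˢ Ioi (0:ℝ), f p = (-1) ^ b₁ * TK (NK (2 * s)) b₁ b₂ 1 x v := by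
      rw [Measure.volume_eq_prod, setIntegral_prod f hI2, TK, ← integral_const_mul]
      have := integral_comp_neg_Ioi (0:ℝ) (fun t : ℝ => ∫ y in Ioi (0:ℝ), f (t, y))
      rw [neg_zero, integral_Iic_eq_integral_Iio] at this
      rw [← this]
      refine setIntegral_congr_fun measurableSet_Ioi fun t ht => ?_
      rw [← integral_const_mul]
      refine setIntegral_congr_fun measurableSet_Ioi fun y hy => ?_
      simp only [hf, FI]
      rw [Mker_NK hs ht hy]
      have : Complex.exp (-Complex.I * ((-t * x + y * v : ℝ):ℂ)) =
          Complex.exp (Complex.I * ((1 : ℝ):ℂ) * t * x) * Complex.exp (-Complex.I * y * v) := by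
        rw [← Complex.exp_add]; congr 1; push_cast; ring
      rw [this, Complex.ofReal_neg, neg_pow]; ring
    rw [e0, e1, e2]
  rw [← integral_add_compl hUm hif, hlow, ← hup]
  refine (norm_add_le _ _).trans ?_
  rw [norm_mul, norm_pow, norm_neg, norm_one, one_pow, one_mul, RCLike.norm_conj]
  linarith

end

section
open Set Filter Topology

lemma FI_integrable {s : ℝ} {b₁ b₂ : ℕ} {x v : ℝ} (h : Integrable (FI s b₁ b₂ x v)) (x' v' : ℝ) :
    Integrable (FI s b₁ b₂ x' v') := by
  have hc : Continuous fun p : ℝ × ℝ =>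
      Complex.exp (-Complex.I * ((p.1 * (x' - x) + p.2 * (v' - v) : ℝ) : ℂ)) := by fun_prop
  have := h.bdd_mul (c := 1) hc.aestronglyMeasurable (Eventually.of_forall fun p => by
    rw [show -Complex.I * (((p.1 * (x' - x) + p.2 * (v' - v) : ℝ)):ℂ) =
      ((-(p.1 * (x' - x) + p.2 * (v' - v)) : ℝ):ℂ) * Complex.I by push_cast; ring,
      Complex.norm_exp_ofReal_mul_I])
  refine this.congr (Eventually.of_forall fun p => ?_)
  simp only [FI]
  have : Complex.exp (-Complex.I * ((p.1 * x' + p.2 * v' : ℝ) : ℂ)) =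
    Complex.exp (-Complex.I * ((p.1 * (x' - x) + p.2 * (v' - v) : ℝ) : ℂ)) *
    Complex.exp (-Complex.I * ((p.1 * x + p.2 * v : ℝ) : ℂ)) := by
    rw [← Complex.exp_add]; congr 1; push_cast; ring
  rw [this]; ring

lemma FI_bound {s : ℝ} (hs : 0 < s) (hs1 : s < 1) (b₁ b₂ : ℕ) {ε : ℝ} (h0 : 0 < ε) (h1 : ε < 1) :
    ∃ A > 0, ∀ x v : ℝ, 1 ≤ |x| → ‖∫ p, FI s b₁ b₂ x v p‖ ≤
      A * |x| ^ (-(b₁ + 2 * s + 2 - ε)) * (1 + |v|) ^ (-(b₂ + ε)) := by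
  obtain ⟨A, hA, hb⟩ := core_bound (q := 2 * s) (by linarith) (by linarith) b₁ b₂ h0 h1
  refine ⟨2 * A, by positivity, fun x v hx => ?_⟩
  have hx0 : 0 < |x| := by linarith
  by_cases hi : Integrable (FI s b₁ b₂ x v)
  · have hi' : ∀ x v, Integrable (FI s b₁ b₂ x v) := FI_integrable hi
    have hpos : ∀ y w : ℝ, 1 ≤ y → ‖∫ p, FI s b₁ b₂ y w p‖ ≤
        2 * A * y ^ (-(b₁ + 2 * s + 2 - ε)) * (1 + |w|) ^ (-(b₂ + ε)) := by
      intro y w hy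
      have h1 := FI_quad hs b₁ b₂ y w hi'
      have h2 := hb y w hy
      linarith
    rcases le_total 0 x with h | h
    · rw [abs_of_nonneg h] at hx ⊢; exact hpos x v hx
    · rw [abs_of_nonpos h] at hx ⊢
      have := hpos (-x) (-v) hx
      rw [abs_neg] at this
      simp only [← FI_conj, integral_conj, RCLike.norm_conj] at this
      exact this
  · rw [integral_undef hi, norm_zero]; positivity

lemma fin_aux {k m m' x v A N : ℝ} (hk : 0 ≤ k) (hm : 0 ≤ m) (hm' : 0 ≤ m') (hA : 0 < A) (hx : 1 ≤ |x|)
    (hvx : |v| ≤ |x|) (hN : N ≤ A * |x| ^ (-(k + m)) * (1 + |v|) ^ (-m')) :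
    N ≤ A * 2 ^ (k + m) * Real.sqrt (1 + x ^ 2 + v ^ 2) ^ (-k) * Real.sqrt (1 + x ^ 2) ^ (-m) *
      Real.sqrt (1 + v ^ 2) ^ (-m') := by
  have hx0 : 0 < |x| := by linarith
  have hav := abs_nonneg v
  have r1 : Real.sqrt (1 + x ^ 2 + v ^ 2) ≤ 2 * |x| := by
    apply Real.sqrt_le_iff.2 ⟨by positivity, ?_⟩
    rw [← sq_abs x, ← sq_abs v]; nlinarith
  have r2 : Real.sqrt (1 + x ^ 2) ≤ 2 * |x| := by
    apply Real.sqrt_le_iff.2 ⟨by positivity, ?_⟩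
    rw [← sq_abs x]; nlinarith
  have r3 : Real.sqrt (1 + v ^ 2) ≤ 1 + |v| := by
    apply Real.sqrt_le_iff.2 ⟨by positivity, ?_⟩
    rw [← sq_abs v]; nlinarith
  have p1 : 0 < Real.sqrt (1 + x ^ 2 + v ^ 2) := by positivity
  have p2 : 0 < Real.sqrt (1 + x ^ 2) := by positivity
  have p3 : 0 < Real.sqrt (1 + v ^ 2) := by positivity
  have key : ∀ j R : ℝ, 0 ≤ j → 0 < R → R ≤ 2 * |x| → |x| ^ (-j) ≤ 2 ^ j * R ^ (-j) := by
    intro j R hj hR hRx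
    have := Real.rpow_le_rpow_of_nonpos hR hRx (neg_nonpos.2 hj)
    rw [Real.mul_rpow (by norm_num) hx0.le, Real.rpow_neg (by norm_num)] at this
    have h2 : (0:ℝ) < 2 ^ j := by positivity
    rwa [inv_mul_le_iff₀ h2] at this
  have q1 := key k _ hk p1 r1
  have q2 := key m _ hm p2 r2
  have q3 := Real.rpow_le_rpow_of_nonpos p3 r3 (neg_nonpos.2 hm')
  refine hN.trans ?_
  rw [neg_add, Real.rpow_add hx0, Real.rpow_add two_pos]
  calc A * (|x| ^ (-k) * |x| ^ (-m)) * (1 + |v|) ^ (-m') ≤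
      A * ((2 ^ k * Real.sqrt (1 + x ^ 2 + v ^ 2) ^ (-k)) * (2 ^ m * Real.sqrt (1 + x ^ 2) ^ (-m))) *
       Real.sqrt (1 + v ^ 2) ^ (-m') := by gcongr
    _ = _ := by ring

lemma FI_triv (s : ℝ) (b₁ b₂ : ℕ) (x v : ℝ) :
    ‖∫ p, FI s b₁ b₂ x v p‖ ≤ ∫ p, ‖FI s b₁ b₂ 0 0 p‖ := by
  refine (norm_integral_le_integral_norm _).trans_eq ?_
  simp only [FI_norm s b₁ b₂ x v]

lemma fin_small {k m m' x v J N : ℝ} (hk : 0 ≤ k) (hm : 0 ≤ m) (hm' : 0 ≤ m') (hJ : 0 ≤ J)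
    (hN : N ≤ J) (hx : |x| ≤ 1) (hv : |v| ≤ 1) :
    N ≤ J * (2 ^ k * 2 ^ m * 2 ^ m') * Real.sqrt (1 + x ^ 2 + v ^ 2) ^ (-k) *
      Real.sqrt (1 + x ^ 2) ^ (-m) * Real.sqrt (1 + v ^ 2) ^ (-m') := by
  have hx2 : x ^ 2 ≤ 1 := by rw [← sq_abs]; nlinarith [abs_nonneg x]
  have hv2 : v ^ 2 ≤ 1 := by rw [← sq_abs]; nlinarith [abs_nonneg v]
  have key : ∀ j R : ℝ, 0 ≤ j → 0 < R → R ≤ 4 → 1 ≤ 2 ^ j * Real.sqrt R ^ (-j) := by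
    intro j R hj hR hR4
    have hs0 : 0 < Real.sqrt R := by positivity
    have hs : Real.sqrt R ≤ 2 := Real.sqrt_le_iff.2 ⟨by norm_num, by linarith⟩
    rw [Real.rpow_neg hs0.le, ← div_eq_mul_inv, one_le_div (by positivity)]
    exact Real.rpow_le_rpow hs0.le hs hj
  have q1 := key k (1 + x ^ 2 + v ^ 2) hk (by positivity) (by linarith)
  have q2 := key m (1 + x ^ 2) hm (by positivity) (by linarith)
  have q3 := key m' (1 + v ^ 2) hm' (by positivity) (by linarith)
  refine hN.trans ?_
  calc J = J * (1 * 1 * 1) := by ring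
    _ ≤ J * ((2 ^ k * Real.sqrt (1 + x ^ 2 + v ^ 2) ^ (-k)) * (2 ^ m * Real.sqrt (1 + x ^ 2) ^ (-m)) *
       (2 ^ m' * Real.sqrt (1 + v ^ 2) ^ (-m'))) := by gcongr
    _ = _ := by ring

end

theorem stmt0 (s : ℝ) (hs : 0 < s) (hs1 : s < 1) (b₁ b₂ : ℕ) :
    ∃ ε₀ > (0:ℝ), ∀ ε : ℝ, 0 < ε → ε < ε₀ → ∃ C > (0:ℝ), ∀ x v : ℝ,
      ‖∫ p : ℝ × ℝ,
          (p.1 : ℂ) ^ b₁ * (p.2 : ℂ) ^ b₂ * Complex.exp (-(Mker s p.1 p.2 : ℂ)) *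
            Complex.exp (-Complex.I * ((p.1 * x + p.2 * v : ℝ) : ℂ))‖
        ≤ C * Real.sqrt (1 + x ^ 2 + v ^ 2) ^ (-(2 + 2 * s - 2 * ε)) *
            Real.sqrt (1 + x ^ 2) ^ (-(ε + b₁)) *
            Real.sqrt (1 + v ^ 2) ^ (-(ε + b₂)) := by
  refine ⟨1, one_pos, fun ε h0 h1 => ?_⟩
  obtain ⟨A, hA, hAb⟩ := FI_bound hs hs1 b₁ b₂ h0 h1
  obtain ⟨B, hB, hBb⟩ := FI_bound hs hs1 b₂ b₁ h0 h1
  set k : ℝ := 2 + 2 * s - 2 * ε with hk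
  have hk0 : 0 ≤ k := by linarith
  set m1 : ℝ := ε + b₁ with hm1
  set m2 : ℝ := ε + b₂ with hm2
  have hm10 : 0 ≤ m1 := by positivity
  have hm20 : 0 ≤ m2 := by positivity
  set J : ℝ := ∫ p, ‖FI s b₁ b₂ 0 0 p‖ with hJ
  have hJ0 : 0 ≤ J := integral_nonneg fun _ => norm_nonneg _
  set C1 := A * 2 ^ (k + m1)
  set C2 := B * 2 ^ (k + m2)
  set C3 := J * (2 ^ k * 2 ^ m1 * 2 ^ m2)
  have hC1 : 0 < C1 := by positivity
  have hC2 : 0 < C2 := by positivity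
  have hC3 : 0 ≤ C3 := by positivity
  refine ⟨C1 + C2 + C3, by positivity, fun x v => ?_⟩
  change ‖∫ p, FI s b₁ b₂ x v p‖ ≤ _
  have p1 : 0 < Real.sqrt (1 + x ^ 2 + v ^ 2) := by positivity
  have p2 : 0 < Real.sqrt (1 + x ^ 2) := by positivity
  have p3 : 0 < Real.sqrt (1 + v ^ 2) := by positivity
  have mono : ∀ D : ℝ, D ≤ C1 + C2 + C3 →
      ‖∫ p, FI s b₁ b₂ x v p‖ ≤ D * Real.sqrt (1 + x ^ 2 + v ^ 2) ^ (-k) * Real.sqrt (1 + x ^ 2) ^ (-m1) *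
        Real.sqrt (1 + v ^ 2) ^ (-m2) →
      ‖∫ p, FI s b₁ b₂ x v p‖ ≤ (C1 + C2 + C3) * Real.sqrt (1 + x ^ 2 + v ^ 2) ^ (-k) *
        Real.sqrt (1 + x ^ 2) ^ (-m1) * Real.sqrt (1 + v ^ 2) ^ (-m2) := by
    intro D hD h
    refine h.trans ?_
    gcongr
  rcases le_total |v| |x| with hvx | hvx
  · by_cases hx : 1 ≤ |x|
    · refine mono C1 (by linarith) (fin_aux hk0 hm10 hm20 hA hx hvx ?_)
      have := hAb x v hx
      rwa [show -((b₁:ℝ) + 2 * s + 2 - ε) = -(k + m1) by rw [hk, hm1]; ring,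
        show -((b₂:ℝ) + ε) = -m2 by rw [hm2]; ring] at this
    · have hx' : |x| ≤ 1 := (not_le.1 hx).le
      exact mono C3 (by linarith) (fin_small hk0 hm10 hm20 hJ0 (FI_triv s b₁ b₂ x v) hx' (hvx.trans hx'))
  · by_cases hv : 1 ≤ |v|
    · refine mono C2 (by linarith) ?_
      have h2 := hBb v x hv
      rw [show -((b₂:ℝ) + 2 * s + 2 - ε) = -(k + m2) by rw [hk, hm2]; ring,
        show -((b₁:ℝ) + ε) = -m1 by rw [hm1]; ring] at h2
      have h3 := fin_aux hk0 hm20 hm10 hB hv hvx h2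
      have h4 : ∫ p, FI s b₂ b₁ v x p = ∫ p, FI s b₁ b₂ x v p := by
        simp only [← FI_swap s b₁ b₂ x v]
        exact integral_prod_swap (FI s b₁ b₂ x v)
      rw [h4] at h3
      rw [show 1 + x ^ 2 + v ^ 2 = 1 + v ^ 2 + x ^ 2 by ring]
      linarith
    · have hv' : |v| ≤ 1 := (not_le.1 hv).le
      exact mono C3 (by linarith) (fin_small hk0 hm10 hm20 hJ0 (FI_triv s b₁ b₂ x v) (hvx.trans hv') hv')
end

section
/- Let 0 < s ≤ 1/2, let b₁, a, n₁, n₂ ∈ ℕ, and let χ : ℝ → ℝ be a smooth function with compact support contained in [1/2, 2]. Then there exists a constant C > 0 (depending only on s, b₁, a, n₁, n₂, χ) such that for all integers m₁, m₂ ∈ ℤ with |m₁ − m₂| ≤ 2 and all x, v ∈ ℝ: |x|^{n₁} · |v|^{n₂} · |J_{m₁,m₂}(x,v)| ≤ C · 2^{m₁(2s + b₁ + a − n₁ − n₂)}. -/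
open MeasureTheory Real

/-- product of a smooth function with compact support in `U` and a function smooth on `U`. -/
lemma aux_smooth_mul {U : Set (ℝ × ℝ)} (hU : IsOpen U) {g h : ℝ × ℝ → ℝ}
    (hg : ContDiff ℝ (⊤ : ℕ∞) g) (hgU : tsupport g ⊆ U)
    (hh : ContDiffOn ℝ (⊤ : ℕ∞) h U) : ContDiff ℝ (⊤ : ℕ∞) (fun p => g p * h p) := by
  rw [contDiff_iff_contDiffAt]
  intro p
  by_cases hp : p ∈ tsupport g
  · exact hg.contDiffAt.mul (hh.contDiffAt (hU.mem_nhds (hgU hp)))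
  · have h0 : (fun p => g p * h p) =ᶠ[nhds p] fun _ => 0 := by
      have := notMem_tsupport_iff_eventuallyEq.1 hp
      filter_upwards [this] with q hq
      simp [hq]
    exact contDiffAt_const.congr_of_eventuallyEq h0

/-- the oscillating factor -/
noncomputable def osc (X V : ℝ) (p : ℝ × ℝ) : ℂ :=
  Complex.exp (-Complex.I * ((p.1 * X + p.2 * V : ℝ) : ℂ))

lemma osc_norm (X V : ℝ) (p : ℝ × ℝ) : ‖osc X V p‖ = 1 := by
  rw [osc, Complex.norm_exp]; simp

lemma osc_hasFDerivAt (X V : ℝ) (p : ℝ × ℝ) : ∃ L : ℝ × ℝ →L[ℝ] ℂ,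
    HasFDerivAt (osc X V) L p ∧
    ∀ v : ℝ × ℝ, L v = -Complex.I * ((v.1 * X + v.2 * V : ℝ) : ℂ) * osc X V p := by
  have h1 : HasFDerivAt (fun p : ℝ × ℝ => p.1 * X + p.2 * V)
      (X • ContinuousLinearMap.fst ℝ ℝ ℝ + V • ContinuousLinearMap.snd ℝ ℝ ℝ) p :=
    (hasFDerivAt_fst.mul_const X).add (hasFDerivAt_snd.mul_const V)
  have h2 := ((Complex.ofRealCLM.hasFDerivAt.comp p h1).const_mul (-Complex.I)).cexp
  refine ⟨_, h2, fun v => ?_⟩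
  simp [osc]
  ring

lemma osc_diff (X V : ℝ) : Differentiable ℝ (osc X V) := fun p =>
  (osc_hasFDerivAt X V p).choose_spec.1.differentiableAt

lemma osc_fderiv (X V : ℝ) (p v : ℝ × ℝ) :
    fderiv ℝ (osc X V) p v = -Complex.I * ((v.1 * X + v.2 * V : ℝ) : ℂ) * osc X V p := by
  obtain ⟨L, hL, h⟩ := osc_hasFDerivAt X V p
  rw [hL.fderiv, h]

lemma osc_integrable {f : ℝ × ℝ → ℝ} (hf : Continuous f) (hc : HasCompactSupport f) (X V : ℝ) :
    Integrable (fun p => (f p : ℂ) * osc X V p) := by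
  apply Continuous.integrable_of_hasCompactSupport
  · exact (Complex.continuous_ofReal.comp hf).mul (osc_diff X V).continuous
  · have : HasCompactSupport (fun p => (f p : ℂ)) := hc.comp_left (g := Complex.ofReal) (by simp)
    exact this.mul_right

/-- one integration by parts -/
lemma osc_ibp {f : ℝ × ℝ → ℝ} (hf : ContDiff ℝ (⊤ : ℕ∞) f) (hc : HasCompactSupport f)
    (X V : ℝ) (v : ℝ × ℝ) :
    |v.1 * X + v.2 * V| * ‖∫ p, (f p : ℂ) * osc X V p‖
      = ‖∫ p, ((fderiv ℝ f p v : ℝ) : ℂ) * osc X V p‖ := by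
  have hfd : Differentiable ℝ f := hf.differentiable (by simp)
  have hd : ∀ p, HasFDerivAt (fun p => (f p : ℂ)) (Complex.ofRealCLM.comp (fderiv ℝ f p)) p :=
    fun p => Complex.ofRealCLM.hasFDerivAt.comp p (hfd p).hasFDerivAt
  have hcd : Continuous (fun p => fderiv ℝ f p v) :=
    (hf.continuous_fderiv (by simp)).clm_apply continuous_const
  have hcs : HasCompactSupport (fun p => fderiv ℝ f p v) :=
    (hc.fderiv ℝ).comp_left (g := fun L : ℝ × ℝ →L[ℝ] ℝ => L v) (by simp)
  have e1 : ∀ p, fderiv ℝ (fun p => (f p : ℂ)) p v = ((fderiv ℝ f p v : ℝ) : ℂ) := by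
    intro p; rw [(hd p).fderiv]; rfl
  have key := integral_mul_fderiv_eq_neg_fderiv_mul_of_integrable (𝕜 := ℂ) (μ := volume)
    (f := fun p => (f p : ℂ)) (g := osc X V) (v := v) ?_ ?_ ?_
    (fun p _ => (hd p).differentiableAt) (fun p _ => osc_diff X V p)
  · simp only [e1] at key
    have : ∀ p, (f p : ℂ) * fderiv ℝ (osc X V) p v
        = (-Complex.I * ((v.1 * X + v.2 * V : ℝ) : ℂ)) * ((f p : ℂ) * osc X V p) := by
      intro p; rw [osc_fderiv]; ring
    simp only [this] at key
    rw [integral_const_mul] at key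
    have k2 := congrArg norm key
    rw [norm_neg, norm_mul, norm_mul, norm_neg, Complex.norm_I, one_mul, Complex.norm_real,
      Real.norm_eq_abs] at k2
    exact k2
  · simp only [e1]; exact osc_integrable hcd hcs X V
  · have : ∀ p, (f p : ℂ) * fderiv ℝ (osc X V) p v
        = (-Complex.I * ((v.1 * X + v.2 * V : ℝ) : ℂ)) * ((f p : ℂ) * osc X V p) := by
      intro p; rw [osc_fderiv]; ring
    simp only [this]
    exact (osc_integrable hf.continuous hc X V).const_mul _
  · exact osc_integrable hf.continuous hc X V

/-- admissible amplitudes -/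
def Adm (U : Set (ℝ × ℝ)) (g : ℝ × ℝ → ℝ) : Prop :=
  ContDiff ℝ (⊤ : ℕ∞) g ∧ HasCompactSupport g ∧ tsupport g ⊆ U

/-- the model integral -/
noncomputable def Jint (Φ : ℝ × ℝ → ℝ) (g : ℝ × ℝ → ℝ) (l X V : ℝ) : ℂ :=
  ∫ p, ((g p * Real.exp (-(l * Φ p)) : ℝ) : ℂ) * osc X V p

lemma Adm.mul {U : Set (ℝ × ℝ)} (hU : IsOpen U) {g h : ℝ × ℝ → ℝ} (hg : Adm U g)
    (hh : ContDiffOn ℝ (⊤ : ℕ∞) h U) : Adm U (fun p => g p * h p) :=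
  ⟨aux_smooth_mul hU hg.1 hg.2.2 hh, hg.2.1.mul_right,
    (tsupport_mul_subset_left (f := g) (g := h)).trans hg.2.2⟩

lemma Adm.fderiv {U : Set (ℝ × ℝ)} {g : ℝ × ℝ → ℝ} (hg : Adm U g) (v : ℝ × ℝ) :
    Adm U (fun p => fderiv ℝ g p v) := by
  refine ⟨?_, ?_, ?_⟩
  · exact (hg.1.fderiv_right (m := (⊤ : ℕ∞)) (by simp)).clm_apply contDiff_const
  · exact (hg.2.1.fderiv ℝ).comp_left (g := fun L : ℝ × ℝ →L[ℝ] ℝ => L v) (by simp)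
  · exact (tsupport_fderiv_apply_subset ℝ v).trans hg.2.2

lemma smoothOn_fderiv {U : Set (ℝ × ℝ)} (hU : IsOpen U) {Φ : ℝ × ℝ → ℝ}
    (hΦ : ContDiffOn ℝ (⊤ : ℕ∞) Φ U) (v : ℝ × ℝ) :
    ContDiffOn ℝ (⊤ : ℕ∞) (fun p => fderiv ℝ Φ p v) U :=
  (hΦ.fderiv_of_isOpen hU (m := (⊤ : ℕ∞)) (by simp)).clm_apply contDiffOn_const

lemma smoothOn_exp {U : Set (ℝ × ℝ)} {Φ : ℝ × ℝ → ℝ}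
    (hΦ : ContDiffOn ℝ (⊤ : ℕ∞) Φ U) (l : ℝ) :
    ContDiffOn ℝ (⊤ : ℕ∞) (fun p => Real.exp (-(l * Φ p))) U :=
  ((contDiffOn_const.mul hΦ).neg).exp

lemma Jint_integrable {U : Set (ℝ × ℝ)} (hU : IsOpen U) {Φ : ℝ × ℝ → ℝ}
    (hΦ : ContDiffOn ℝ (⊤ : ℕ∞) Φ U) {g : ℝ × ℝ → ℝ} (hg : Adm U g) (l X V : ℝ) :
    Integrable (fun p => ((g p * Real.exp (-(l * Φ p)) : ℝ) : ℂ) * osc X V p) := by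
  have h := hg.mul hU (smoothOn_exp hΦ l)
  exact osc_integrable h.1.continuous h.2.1 X V

lemma Jint_step {U : Set (ℝ × ℝ)} (hU : IsOpen U) {Φ : ℝ × ℝ → ℝ}
    (hΦ : ContDiffOn ℝ (⊤ : ℕ∞) Φ U) {g : ℝ × ℝ → ℝ} (hg : Adm U g) (v : ℝ × ℝ) (l X V : ℝ)
    (hl : 0 < l) :
    |v.1 * X + v.2 * V| * ‖Jint Φ g l X V‖ ≤
      ‖Jint Φ (fun p => fderiv ℝ g p v) l X V‖ +
      l * ‖Jint Φ (fun p => g p * fderiv ℝ Φ p v) l X V‖ := by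
  have h := hg.mul hU (smoothOn_exp hΦ l)
  rw [Jint, osc_ibp h.1 h.2.1 X V v]
  have e : ∀ p, fderiv ℝ (fun p => g p * Real.exp (-(l * Φ p))) p v =
      fderiv ℝ g p v * Real.exp (-(l * Φ p)) -
        l * ((g p * fderiv ℝ Φ p v) * Real.exp (-(l * Φ p))) := by
    intro p
    by_cases hp : p ∈ tsupport g
    · have hd : HasFDerivAt Φ (fderiv ℝ Φ p) p :=
        ((hΦ.contDiffAt (hU.mem_nhds (hg.2.2 hp))).differentiableAt (by simp)).hasFDerivAt
      have hd2 : HasFDerivAt g (fderiv ℝ g p) p :=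
        (hg.1.differentiable (by simp) p).hasFDerivAt
      rw [(hd2.fun_mul ((hd.const_mul l).fun_neg.exp)).fderiv]
      simp
      ring
    · have h0 := notMem_tsupport_iff_eventuallyEq.1 hp
      have h1 : (fun p => g p * Real.exp (-(l * Φ p))) =ᶠ[nhds p] fun _ => 0 := by
        filter_upwards [h0] with q hq
        simp [hq]
      rw [h1.fderiv_eq, h0.fderiv_eq, h0.eq_of_nhds]
      simp
  simp only [e]
  have i1 := Jint_integrable hU hΦ (hg.fderiv v) l X V
  have i2 := Jint_integrable hU hΦ (hg.mul hU (smoothOn_fderiv hU hΦ v)) l X V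
  have : ∀ p, ((fderiv ℝ g p v * Real.exp (-(l * Φ p)) -
        l * ((g p * fderiv ℝ Φ p v) * Real.exp (-(l * Φ p))) : ℝ) : ℂ) * osc X V p =
      ((fderiv ℝ g p v * Real.exp (-(l * Φ p)) : ℝ) : ℂ) * osc X V p -
        (l : ℂ) * ((((g p * fderiv ℝ Φ p v) * Real.exp (-(l * Φ p)) : ℝ) : ℂ) * osc X V p) := by
    intro p
    push_cast
    ring
  simp only [this]
  rw [integral_sub i1 (i2.const_mul _), integral_const_mul]
  refine (norm_sub_le _ _).trans ?_
  rw [norm_mul, Complex.norm_real, Real.norm_of_nonneg hl.le]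
  rfl

lemma Jint_base {U : Set (ℝ × ℝ)} {Φ : ℝ × ℝ → ℝ}
    (hΦ : ContDiffOn ℝ (⊤ : ℕ∞) Φ U) (hpos : ∀ p ∈ U, 0 < Φ p) (k : ℕ)
    {g : ℝ × ℝ → ℝ} (hg : Adm U g) :
    ∃ C : ℝ, 0 ≤ C ∧ ∀ l > 0, ∀ X V : ℝ, l ^ k * ‖Jint Φ g l X V‖ ≤ C := by
  obtain ⟨c, hc, hcb⟩ : ∃ c > 0, ∀ p ∈ tsupport g, c ≤ Φ p := by
    rcases (tsupport g).eq_empty_or_nonempty with h | h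
    · exact ⟨1, one_pos, by simp [h]⟩
    · obtain ⟨p, hp, hmin⟩ := IsCompact.exists_isMinOn (s := tsupport g) hg.2.1 h
        (hΦ.continuousOn.mono hg.2.2)
      exact ⟨Φ p, hpos p (hg.2.2 hp), fun q hq => hmin hq⟩
  have hgi : Integrable (fun p => |g p|) :=
    (hg.1.continuous.integrable_of_hasCompactSupport hg.2.1).abs
  refine ⟨(k.factorial / c ^ k) * ∫ p, |g p|, by positivity, fun l hl X V => ?_⟩
  have hb : l ^ k * Real.exp (-(l * c)) ≤ k.factorial / c ^ k := by
    have := Real.pow_div_factorial_le_exp (x := l * c) (by positivity) k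
    rw [div_le_iff₀ (by positivity), mul_pow] at this
    rw [Real.exp_neg, le_div_iff₀ (by positivity), ← div_eq_mul_inv, div_mul_eq_mul_div,
      div_le_iff₀ (Real.exp_pos _)]
    linarith
  have : ‖Jint Φ g l X V‖ ≤ ∫ p, Real.exp (-(l * c)) * |g p| := by
    refine norm_integral_le_of_norm_le (hgi.const_mul _) (Filter.Eventually.of_forall fun p => ?_)
    rw [norm_mul, osc_norm, mul_one, Complex.norm_real, Real.norm_eq_abs, abs_mul, Real.abs_exp,
      mul_comm]
    by_cases hp : p ∈ tsupport g
    · gcongr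
      exact hcb p hp
    · rw [image_eq_zero_of_notMem_tsupport hp]; simp
  rw [integral_const_mul] at this
  calc l ^ k * ‖Jint Φ g l X V‖ ≤ l ^ k * (Real.exp (-(l * c)) * ∫ p, |g p|) := by gcongr
    _ = (l ^ k * Real.exp (-(l * c))) * ∫ p, |g p| := by ring
    _ ≤ _ := by
      gcongr
      

lemma Jint_bound {U : Set (ℝ × ℝ)} (hU : IsOpen U) {Φ : ℝ × ℝ → ℝ}
    (hΦ : ContDiffOn ℝ (⊤ : ℕ∞) Φ U) (hpos : ∀ p ∈ U, 0 < Φ p) (n₁ n₂ : ℕ) :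
    ∀ (k : ℕ) (g : ℝ × ℝ → ℝ), Adm U g →
    ∃ C : ℝ, 0 ≤ C ∧ ∀ l > 0, ∀ X V : ℝ,
      |X| ^ n₁ * |V| ^ n₂ * (l ^ k * ‖Jint Φ g l X V‖) ≤ C := by
  induction n₁ with
  | zero =>
    induction n₂ with
    | zero =>
      intro k g hg
      simpa using Jint_base hΦ hpos k hg
    | succ n ih =>
      intro k g hg
      obtain ⟨C₁, h₁, H₁⟩ := ih k _ (hg.fderiv (0, 1))
      obtain ⟨C₂, h₂, H₂⟩ := ih (k + 1) _ (hg.mul hU (smoothOn_fderiv hU hΦ (0, 1)))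
      refine ⟨C₁ + C₂, by positivity, fun l hl X V => ?_⟩
      have hs := Jint_step hU hΦ hg (0, 1) l X V hl
      simp only [zero_mul, one_mul, zero_add] at hs
      have a₁ := H₁ l hl X V
      have a₂ := H₂ l hl X V
      simp only [pow_zero, one_mul] at a₁ a₂ ⊢
      calc _ = |V| ^ n * l ^ k * (|V| * ‖Jint Φ g l X V‖) := by ring
        _ ≤ |V| ^ n * l ^ k * _ := mul_le_mul_of_nonneg_left hs (by positivity)
        _ ≤ _ := by rw [pow_succ] at a₂; linarith
  | succ n ih =>
    intro k g hg
    obtain ⟨C₁, h₁, H₁⟩ := ih k _ (hg.fderiv (1, 0))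
    obtain ⟨C₂, h₂, H₂⟩ := ih (k + 1) _ (hg.mul hU (smoothOn_fderiv hU hΦ (1, 0)))
    refine ⟨C₁ + C₂, by positivity, fun l hl X V => ?_⟩
    have hs := Jint_step hU hΦ hg (1, 0) l X V hl
    simp only [zero_mul, one_mul, add_zero] at hs
    have a₁ := H₁ l hl X V
    have a₂ := H₂ l hl X V
    calc _ = |X| ^ n * |V| ^ n₂ * l ^ k * (|X| * ‖Jint Φ g l X V‖) := by ring
      _ ≤ |X| ^ n * |V| ^ n₂ * l ^ k * _ := mul_le_mul_of_nonneg_left hs (by positivity)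
      _ ≤ _ := by rw [pow_succ l] at a₂; linarith

lemma cont_absr {s : ℝ} (hs : 0 < s) : Continuous (fun y : ℝ => |y| ^ (2 * s)) :=
  continuous_abs.rpow_const (fun _ => Or.inr (by positivity))

lemma Mker_pos {s : ℝ} (hs : 0 < s) (u w : ℝ) (hw : w ≠ 0) : 0 < Mker s u w := by
  unfold Mker
  refine intervalIntegral.integral_pos one_pos ?_ ?_ ⟨0, by simp, ?_⟩
  · exact ((cont_absr hs).comp (by fun_prop : Continuous fun τ : ℝ => (u - w) * τ + w)).continuousOn
  · intro x _; positivity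
  · have := abs_pos.2 hw
    simp only [mul_zero, zero_add]
    positivity

lemma Mker_hom (s r u w : ℝ) :
    Mker s (r * u) (r * w) = |r| ^ (2 * s) * Mker s u w := by
  unfold Mker
  rw [← intervalIntegral.integral_const_mul]
  congr 1
  ext τ
  rw [← Real.mul_rpow (abs_nonneg _) (abs_nonneg _), ← abs_mul]
  congr 2
  ring

/-- primitive of `|y|^{2s}` -/
noncomputable def Gprim (s t : ℝ) : ℝ := ∫ y in (1:ℝ)..t, |y| ^ (2 * s)

lemma Gprim_deriv {s : ℝ} (hs : 0 < s) (t : ℝ) : HasDerivAt (Gprim s) (|t| ^ (2 * s)) t :=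
  intervalIntegral.integral_hasDerivAt_right ((cont_absr hs).intervalIntegrable _ _)
    ((cont_absr hs).stronglyMeasurableAtFilter _ _) (cont_absr hs).continuousAt

lemma Mker_eq_dslope {s : ℝ} (hs : 0 < s) (t : ℝ) : Mker s t 1 = dslope (Gprim s) 1 t := by
  by_cases ht : t = 1
  · subst ht
    rw [dslope_same, (Gprim_deriv hs 1).deriv]
    simp [Mker]
  · rw [dslope_of_ne _ ht, slope_def_field, Mker]
    have h := intervalIntegral.integral_comp_mul_add (a := 0) (b := 1)
      (fun y : ℝ => |y| ^ (2 * s)) (sub_ne_zero.2 ht) 1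
    rw [h]
    simp [Gprim]
    field_simp

lemma smooth_absr (s : ℝ) (n : ℕ∞) {t : ℝ} (ht : t ≠ 0) :
    ContDiffAt ℝ n (fun y : ℝ => |y| ^ (2 * s)) t :=
  (contDiffAt_abs ht).rpow_const_of_ne (abs_ne_zero.2 ht)

lemma Gprim_smooth {s : ℝ} (hs : 0 < s) {t : ℝ} (ht : t ≠ 0) :
    ContDiffAt ℝ (⊤ : ℕ∞) (Gprim s) t := by
  have ho : IsOpen {t : ℝ | t ≠ 0} := isOpen_ne
  have : ContDiffOn ℝ (⊤ : ℕ∞) (Gprim s) {t : ℝ | t ≠ 0} := by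
    rw [contDiffOn_infty_iff_deriv_of_isOpen ho]
    refine ⟨fun x _ => (Gprim_deriv hs x).differentiableAt.differentiableWithinAt, ?_⟩
    intro x hx
    have : deriv (Gprim s) = fun y : ℝ => |y| ^ (2 * s) := by
      ext y; exact (Gprim_deriv hs y).deriv
    rw [this]
    exact (smooth_absr s _ hx).contDiffWithinAt
  exact this.contDiffAt (ho.mem_nhds ht)

lemma Gprim_analytic {s : ℝ} (hs : 0 < s) : AnalyticAt ℝ (Gprim s) 1 := by
  have h1 : ContDiffAt ℝ ⊤ (fun t : ℝ => (t ^ (2 * s + 1) - 1) / (2 * s + 1)) 1 :=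
    ((contDiffAt_id.rpow_const_of_ne (by simp)).sub contDiffAt_const).div_const _
  have h2 := h1.analyticAt
  refine h2.congr ?_
  filter_upwards [lt_mem_nhds (zero_lt_one (α := ℝ))] with t ht
  have : Gprim s t = ∫ y in (1:ℝ)..t, y ^ (2 * s) := by
    apply intervalIntegral.integral_congr
    intro y hy
    have : 0 < y := lt_of_lt_of_le (lt_min one_pos ht) hy.1
    simp only [abs_of_pos this]
  rw [this, integral_rpow (Or.inl (by linarith))]
  simp

lemma Mker_one_smooth {s : ℝ} (hs : 0 < s) {t : ℝ} (ht : t ≠ 0) :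
    ContDiffAt ℝ (⊤ : ℕ∞) (fun t => Mker s t 1) t := by
  have : (fun t => Mker s t 1) = dslope (Gprim s) 1 := by ext t; exact Mker_eq_dslope hs t
  rw [this]
  by_cases h1 : t = 1
  · subst h1
    obtain ⟨p, hp⟩ := Gprim_analytic hs
    exact (HasFPowerSeriesAt.analyticAt hp.has_fpower_series_dslope_fslope).contDiffAt
  · refine ContDiffAt.congr_of_eventuallyEq ?_ (dslope_eventuallyEq_slope_of_ne _ h1)
    have : slope (Gprim s) 1 = fun t => (Gprim s t - Gprim s 1) / (t - 1) := by
      ext t; rw [slope_def_field]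
    rw [this]
    exact ((Gprim_smooth hs ht).sub contDiffAt_const).div
      (contDiffAt_id.sub contDiffAt_const) (sub_ne_zero.2 h1)

/-- the region off the axes -/
def Ureg : Set (ℝ × ℝ) := {p | p.1 ≠ 0 ∧ p.2 ≠ 0}

lemma Ureg_open : IsOpen Ureg :=
  (isOpen_ne_fun continuous_fst continuous_const).inter
    (isOpen_ne_fun continuous_snd continuous_const)

lemma Mker_smooth {s : ℝ} (hs : 0 < s) :
    ContDiffOn ℝ (⊤ : ℕ∞) (fun p : ℝ × ℝ => Mker s p.1 p.2) Ureg := by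
  have e : ∀ p ∈ Ureg, Mker s p.1 p.2 = |p.2| ^ (2 * s) * Mker s (p.1 / p.2) 1 := by
    intro p hp
    rw [← Mker_hom, mul_one, mul_div_cancel₀ _ hp.2]
  refine ContDiffOn.congr ?_ e
  intro p hp
  refine ContDiffAt.contDiffWithinAt ?_
  refine ContDiffAt.mul ?_ ?_
  · exact (smooth_absr s _ hp.2).comp p contDiffAt_snd
  · exact ContDiffAt.comp p (Mker_one_smooth hs (div_ne_zero hp.1 hp.2))
      (contDiffAt_fst.div contDiffAt_snd hp.2)

/-- amplitude -/
lemma chi_smooth {χ : ℝ → ℝ} (hχ : ContDiff ℝ (⊤ : ℕ∞) χ)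
    (hsupp : Function.support χ ⊆ Set.Icc (1 / 2 : ℝ) 2) {c : ℝ} (_hc : 0 < c) :
    ContDiff ℝ (⊤ : ℕ∞) (fun u : ℝ => χ (c * |u|)) := by
  rw [contDiff_iff_contDiffAt]
  intro u
  by_cases hu : u = 0
  · subst hu
    refine ContDiffAt.congr_of_eventuallyEq (contDiffAt_const (c := (0:ℝ))) ?_
    have hcont : Continuous fun u : ℝ => c * |u| := by fun_prop
    have : ∀ᶠ u in nhds (0:ℝ), c * |u| < 1 / 2 :=
      hcont.continuousAt.eventually_lt continuousAt_const (by simp)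
    filter_upwards [this] with u hu
    by_contra h
    have := (hsupp h).1
    linarith
  · exact hχ.contDiffAt.comp u (contDiffAt_const.mul (contDiffAt_abs hu))

lemma chi_ne {χ : ℝ → ℝ} 
    (hsupp : Function.support χ ⊆ Set.Icc (1 / 2 : ℝ) 2) {c : ℝ} (hc : 0 < c) {u : ℝ}
    (h : χ (c * |u|) ≠ 0) : 1 / (2 * c) ≤ |u| ∧ |u| ≤ 2 / c := by
  have := hsupp h
  rw [div_le_iff₀ (by positivity), le_div_iff₀ hc]
  constructor <;> linarith [this.1, this.2]

lemma amp_smooth {χ : ℝ → ℝ} (hχ : ContDiff ℝ (⊤ : ℕ∞) χ)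
    (hsupp : Function.support χ ⊆ Set.Icc (1 / 2 : ℝ) 2) {c : ℝ} (hc : 0 < c) (b a : ℕ) :
    ContDiff ℝ (⊤ : ℕ∞) (fun p : ℝ × ℝ => χ (1 * |p.1|) * χ (c * |p.2|) * p.1 ^ b * p.2 ^ a) :=
  ((((chi_smooth hχ hsupp one_pos).comp contDiff_fst).mul
    ((chi_smooth hχ hsupp hc).comp contDiff_snd)).mul (contDiff_fst.pow b)).mul (contDiff_snd.pow a)

lemma amp_tsupport {χ : ℝ → ℝ} 
    (hsupp : Function.support χ ⊆ Set.Icc (1 / 2 : ℝ) 2) {c : ℝ} (hc : 0 < c) (b a : ℕ) :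
    tsupport (fun p : ℝ × ℝ => χ (1 * |p.1|) * χ (c * |p.2|) * p.1 ^ b * p.2 ^ a) ⊆
     {p | (1 / (2 * 1) ≤ |p.1| ∧ |p.1| ≤ 2 / 1) ∧ (1 / (2 * c) ≤ |p.2| ∧ |p.2| ≤ 2 / c)} := by
  apply closure_minimal
  · intro p hp
    have hp' : χ (1 * |p.1|) * χ (c * |p.2|) * p.1 ^ b * p.2 ^ a ≠ 0 := hp
    have h1 := left_ne_zero_of_mul (left_ne_zero_of_mul hp')
    exact ⟨chi_ne hsupp one_pos (left_ne_zero_of_mul h1),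
      chi_ne hsupp hc (right_ne_zero_of_mul h1)⟩
  · have f1 : Continuous fun p : ℝ × ℝ => |p.1| := by fun_prop
    have f2 : Continuous fun p : ℝ × ℝ => |p.2| := by fun_prop
    exact ((isClosed_le continuous_const f1).inter (isClosed_le f1 continuous_const)).inter
      ((isClosed_le continuous_const f2).inter (isClosed_le f2 continuous_const))

lemma amp_compact {χ : ℝ → ℝ} 
    (hsupp : Function.support χ ⊆ Set.Icc (1 / 2 : ℝ) 2) {c : ℝ} (hc : 0 < c) (b a : ℕ) :
    HasCompactSupport
      (fun p : ℝ × ℝ => χ (1 * |p.1|) * χ (c * |p.2|) * p.1 ^ b * p.2 ^ a) := by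
  refine IsCompact.of_isClosed_subset (X := ℝ × ℝ)
    ((isCompact_Icc (a := (-(2/1):ℝ)) (b := 2/1)).prod (isCompact_Icc (a := -(2/c)) (b := 2/c)))
    (isClosed_tsupport _) ?_
  intro p hp
  have := amp_tsupport hsupp hc b a hp
  exact ⟨abs_le.1 this.1.2, abs_le.1 this.2.2⟩

lemma amp_U {χ : ℝ → ℝ} 
    (hsupp : Function.support χ ⊆ Set.Icc (1 / 2 : ℝ) 2) {c : ℝ} (hc : 0 < c) (b a : ℕ) :
    tsupport (fun p : ℝ × ℝ => χ (1 * |p.1|) * χ (c * |p.2|) * p.1 ^ b * p.2 ^ a) ⊆ Ureg := by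
  intro p hp
  have := amp_tsupport hsupp hc b a hp
  refine ⟨abs_pos.1 (lt_of_lt_of_le (by positivity) this.1.1),
    abs_pos.1 (lt_of_lt_of_le (by positivity) this.2.1)⟩

/-- second derivative of `exp (-M)` after rescaling -/
lemma second_deriv {s : ℝ} (hs : 0 < s) {r : ℝ} (hr : 0 < r) (q : ℝ × ℝ) (hq : q ∈ Ureg) :
    iteratedDeriv 2 (fun η => Real.exp (-(Mker s (r * q.1) η))) (r * q.2) =
     (r ^ 2)⁻¹ * (((r ^ (2 * s)) ^ 2 * (fderiv ℝ (fun p : ℝ × ℝ => Mker s p.1 p.2) q (0, 1)) ^ 2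
      - r ^ (2 * s) * fderiv ℝ (fun p => fderiv ℝ (fun p : ℝ × ℝ => Mker s p.1 p.2) p (0, 1)) q (0, 1))
      * Real.exp (-(r ^ (2 * s) * Mker s q.1 q.2))) := by
  set l := r ^ (2 * s) with hl
  set Φ := (fun p : ℝ × ℝ => Mker s p.1 p.2) with hΦ
  have hΦs : ContDiffOn ℝ (⊤ : ℕ∞) Φ Ureg := Mker_smooth hs
  set D := fun p => fderiv ℝ Φ p (0, 1) with hD
  have hDs : ContDiffOn ℝ (⊤ : ℕ∞) D Ureg :=
    (hΦs.fderiv_of_isOpen Ureg_open (m := (⊤ : ℕ∞)) (by simp)).clm_apply contDiffOn_const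
  have e0 : (fun η => Real.exp (-(Mker s (r * q.1) η))) =
      fun η => (fun w => Real.exp (-(l * Φ (q.1, w)))) (r⁻¹ * η) := by
    ext η
    have : Mker s (r * q.1) η = l * Mker s q.1 (r⁻¹ * η) := by
      rw [hl]
      nth_rewrite 2 [← abs_of_pos hr]
      rw [← Mker_hom, mul_inv_cancel_left₀ hr.ne']
    simp only [this, hΦ]
  have hline : ∀ w : ℝ, HasDerivAt (fun w : ℝ => (q.1, w)) ((0 : ℝ), (1 : ℝ)) w := fun w =>
    (hasDerivAt_const w q.1).prodMk (hasDerivAt_id w)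
  have d1 : ∀ w : ℝ, w ≠ 0 → HasDerivAt (fun w => Real.exp (-(l * Φ (q.1, w))))
      (Real.exp (-(l * Φ (q.1, w))) * -(l * D (q.1, w))) w := by
    intro w hw
    have hm : (q.1, w) ∈ Ureg := ⟨hq.1, hw⟩
    have h := ((hΦs.contDiffAt (Ureg_open.mem_nhds hm)).differentiableAt (by simp)).hasFDerivAt
    exact ((h.comp_hasDerivAt w (hline w)).const_mul l).neg.exp
  have d2 : HasDerivAt (fun w => D (q.1, w)) (fderiv ℝ D q (0, 1)) q.2 := by
    have h := ((hDs.contDiffAt (Ureg_open.mem_nhds hq)).differentiableAt (by simp)).hasFDerivAt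
    exact h.comp_hasDerivAt q.2 (hline q.2)
  rw [e0, iteratedDeriv_succ, iteratedDeriv_one]
  have e1 : deriv (fun η => (fun w => Real.exp (-(l * Φ (q.1, w)))) (r⁻¹ * η)) =
      fun η => r⁻¹ • (deriv (fun w => Real.exp (-(l * Φ (q.1, w))))) (r⁻¹ * η) := by
    ext η
    exact deriv_comp_mul_left r⁻¹ (fun w => Real.exp (-(l * Φ (q.1, w)))) η
  rw [e1, deriv_fun_const_smul_field, deriv_comp_mul_left, inv_mul_cancel_left₀ hr.ne']
  have e2 : deriv (fun w => Real.exp (-(l * Φ (q.1, w)))) =ᶠ[nhds q.2]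
      fun w => Real.exp (-(l * Φ (q.1, w))) * -(l * D (q.1, w)) := by
    filter_upwards [isOpen_ne.mem_nhds hq.2] with w hw
    exact (d1 w hw).deriv
  rw [e2.deriv_eq, ((d1 q.2 hq.2).fun_mul (d2.const_mul l).fun_neg).deriv]
  simp only [smul_eq_mul, hD, Prod.mk.eta]
  field_simp
  ring

lemma core {s : ℝ} (hs : 0 < s) (b₁ a n₁ n₂ : ℕ)
    {χ : ℝ → ℝ} (hχ : ContDiff ℝ (⊤ : ℕ∞) χ)
    (hsupp : Function.support χ ⊆ Set.Icc (1 / 2 : ℝ) 2) {c : ℝ} (hc : 0 < c) :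
    ∃ C : ℝ, 0 ≤ C ∧ ∀ r > 0, ∀ x v : ℝ,
      |x| ^ n₁ * |v| ^ n₂ *
        ‖∫ p : ℝ × ℝ,
            (↑(χ (r⁻¹ * |p.1|) * χ (c * r⁻¹ * |p.2|) *
                p.1 ^ b₁ * p.2 ^ a *
                iteratedDeriv 2 (fun η => Real.exp (-(Mker s p.1 η))) p.2) : ℂ) *
              Complex.exp (-Complex.I * ((p.1 * x + p.2 * v : ℝ) : ℂ))‖
        ≤ C * r ^ (2 * s + b₁ + a - n₁ - n₂) := by
  set Φ := (fun p : ℝ × ℝ => Mker s p.1 p.2) with hΦ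
  have hΦs : ContDiffOn ℝ (⊤ : ℕ∞) Φ Ureg := Mker_smooth hs
  have hpos : ∀ p ∈ Ureg, 0 < Φ p := fun p hp => Mker_pos hs p.1 p.2 hp.2
  set D := fun p => fderiv ℝ Φ p (0, 1) with hD
  have hDs : ContDiffOn ℝ (⊤ : ℕ∞) D Ureg := smoothOn_fderiv Ureg_open hΦs _
  set D2 := fun p => fderiv ℝ D p (0, 1) with hD2
  have hD2s : ContDiffOn ℝ (⊤ : ℕ∞) D2 Ureg := smoothOn_fderiv Ureg_open hDs _
  set A := fun p : ℝ × ℝ => χ (1 * |p.1|) * χ (c * |p.2|) * p.1 ^ b₁ * p.2 ^ a with hA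
  have hAA : Adm Ureg A :=
    ⟨amp_smooth hχ hsupp hc b₁ a, amp_compact hsupp hc b₁ a, amp_U hsupp hc b₁ a⟩
  have hg1 : Adm Ureg (fun p => A p * D p ^ 2) := hAA.mul Ureg_open (hDs.pow 2)
  have hg2 : Adm Ureg (fun p => A p * D2 p) := hAA.mul Ureg_open hD2s
  obtain ⟨C₁, h₁, H₁⟩ := Jint_bound Ureg_open hΦs hpos n₁ n₂ 1 _ hg1
  obtain ⟨C₂, h₂, H₂⟩ := Jint_bound Ureg_open hΦs hpos n₁ n₂ 0 _ hg2
  refine ⟨C₁ + C₂, by positivity, fun r hr x v => ?_⟩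
  set l := r ^ (2 * s) with hl
  have hl0 : 0 < l := by positivity
  set F : ℝ × ℝ → ℂ := fun p => (↑(χ (r⁻¹ * |p.1|) * χ (c * r⁻¹ * |p.2|) *
                p.1 ^ b₁ * p.2 ^ a *
                iteratedDeriv 2 (fun η => Real.exp (-(Mker s p.1 η))) p.2) : ℂ) *
              Complex.exp (-Complex.I * ((p.1 * x + p.2 * v : ℝ) : ℂ)) with hF
  have hFr : ∀ q : ℝ × ℝ, F (r • q) = ((r ^ b₁ * r ^ a * (r ^ 2)⁻¹ * l : ℝ) : ℂ) *
      ((l : ℂ) * (((A q * D q ^ 2 * Real.exp (-(l * Φ q)) : ℝ) : ℂ) * osc (r * x) (r * v) q) -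
        ((A q * D2 q * Real.exp (-(l * Φ q)) : ℝ) : ℂ) * osc (r * x) (r * v) q) := by
    intro q
    have ho : Complex.exp (-Complex.I * ((r * q.1 * x + r * q.2 * v : ℝ) : ℂ))
        = osc (r * x) (r * v) q := by
      unfold osc
      congr 3
      ring
    have hA' : χ (r⁻¹ * |r * q.1|) * χ (c * r⁻¹ * |r * q.2|) * (r * q.1) ^ b₁ * (r * q.2) ^ a
        = r ^ b₁ * r ^ a * A q := by
      have e1 : r⁻¹ * |r * q.1| = 1 * |q.1| := by
        rw [abs_mul, abs_of_pos hr]; field_simp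
      have e2 : c * r⁻¹ * |r * q.2| = c * |q.2| := by
        rw [abs_mul, abs_of_pos hr]; field_simp
      simp only [hA]
      rw [e1, e2, mul_pow, mul_pow]; ring
    have hF' : F (r • q) = ((r ^ b₁ * r ^ a * A q *
        iteratedDeriv 2 (fun η => Real.exp (-(Mker s (r * q.1) η))) (r * q.2) : ℝ) : ℂ) *
        osc (r * x) (r * v) q := by
      simp only [hF, Prod.smul_fst, Prod.smul_snd, smul_eq_mul]
      rw [ho, hA']
    rw [hF']
    by_cases hq : q ∈ Ureg
    · rw [second_deriv hs hr q hq]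
      simp only [hD2, hD, hΦ, hl]
      push_cast
      ring
    · have : A q = 0 := image_eq_zero_of_notMem_tsupport (fun h => hq (hAA.2.2 h))
      simp [this]
  have hint : ∫ p, F p = ((r ^ b₁ * r ^ a * l : ℝ) : ℂ) *
      ((l : ℂ) * Jint Φ (fun p => A p * D p ^ 2) l (r * x) (r * v) -
        Jint Φ (fun p => A p * D2 p) l (r * x) (r * v)) := by
    have h := Measure.integral_comp_smul (volume : Measure (ℝ × ℝ)) F r
    simp only [hFr] at h
    have i1 := Jint_integrable Ureg_open hΦs hg1 l (r * x) (r * v)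
    have i2 := Jint_integrable Ureg_open hΦs hg2 l (r * x) (r * v)
    rw [integral_const_mul, integral_sub (i1.const_mul _) i2, integral_const_mul] at h
    have hfin : Module.finrank ℝ (ℝ × ℝ) = 2 := by simp
    rw [hfin, abs_of_pos (by positivity), Complex.real_smul] at h
    have hr2 : ((r ^ 2 : ℝ) : ℂ) ≠ 0 := by
      rw [Complex.ofReal_ne_zero]; positivity
    have h' : ∫ p, F p = ((r ^ 2 : ℝ) : ℂ) * ((((r ^ 2)⁻¹ : ℝ) : ℂ) * ∫ p, F p) := by
      rw [Complex.ofReal_inv, mul_inv_cancel_left₀ hr2]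
    rw [h', ← h]
    unfold Jint
    have hrc : (r : ℂ) ≠ 0 := by exact_mod_cast hr.ne'
    push_cast
    field_simp
  have a₁ := H₁ l hl0 (r * x) (r * v)
  have a₂ := H₂ l hl0 (r * x) (r * v)
  rw [pow_one] at a₁
  rw [pow_zero, one_mul] at a₂
  set N₁ := ‖Jint Φ (fun p => A p * D p ^ 2) l (r * x) (r * v)‖
  set N₂ := ‖Jint Φ (fun p => A p * D2 p) l (r * x) (r * v)‖
  have hnorm : ‖∫ p, F p‖ ≤ r ^ b₁ * r ^ a * l * (l * N₁ + N₂) := by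
    rw [hint, norm_mul, Complex.norm_real, Real.norm_of_nonneg (by positivity)]
    gcongr
    refine (norm_sub_le _ _).trans ?_
    rw [norm_mul, Complex.norm_real, Real.norm_of_nonneg hl0.le]
  have hpow : r ^ (2 * s + b₁ + a - n₁ - n₂) = l * r ^ b₁ * r ^ a / r ^ n₁ / r ^ n₂ := by
    rw [Real.rpow_sub hr, Real.rpow_sub hr, Real.rpow_add hr, Real.rpow_add hr]
    simp only [Real.rpow_natCast, hl]
  rw [hpow]
  rw [abs_mul, abs_mul, abs_of_pos hr, mul_pow, mul_pow] at a₁ a₂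
  calc |x| ^ n₁ * |v| ^ n₂ * ‖∫ p, F p‖
      ≤ |x| ^ n₁ * |v| ^ n₂ * (r ^ b₁ * r ^ a * l * (l * N₁ + N₂)) := by gcongr
    _ = (r ^ n₁ * |x| ^ n₁ * (r ^ n₂ * |v| ^ n₂) * (l * N₁) +
          r ^ n₁ * |x| ^ n₁ * (r ^ n₂ * |v| ^ n₂) * N₂) *
          (l * r ^ b₁ * r ^ a / r ^ n₁ / r ^ n₂) := by
        field_simp
    _ ≤ (C₁ + C₂) * (l * r ^ b₁ * r ^ a / r ^ n₁ / r ^ n₂) := by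
        gcongr

theorem stmt12 (s : ℝ) (hs : 0 < s) (hs2 : s ≤ 1 / 2) (b₁ a n₁ n₂ : ℕ)
    (χ : ℝ → ℝ) (hχ : ContDiff ℝ (⊤ : ℕ∞) χ)
    (hsupp : Function.support χ ⊆ Set.Icc (1 / 2 : ℝ) 2) :
    ∃ C > (0:ℝ), ∀ m₁ m₂ : ℤ, |m₁ - m₂| ≤ 2 → ∀ x v : ℝ,
      |x| ^ n₁ * |v| ^ n₂ *
        ‖∫ p : ℝ × ℝ,
            (↑(χ ((2:ℝ) ^ (-m₁) * |p.1|) * χ ((2:ℝ) ^ (-m₂) * |p.2|) *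
                p.1 ^ b₁ * p.2 ^ a *
                iteratedDeriv 2 (fun η => Real.exp (-(Mker s p.1 η))) p.2) : ℂ) *
              Complex.exp (-Complex.I * ((p.1 * x + p.2 * v : ℝ) : ℂ))‖
        ≤ C * (2:ℝ) ^ ((m₁ : ℝ) * (2 * s + b₁ + a - n₁ - n₂)) := by
  have hcore := fun d : ℤ => core hs b₁ a n₁ n₂ hχ hsupp (c := (2:ℝ) ^ d) (by positivity)
  choose C hC0 hC using hcore
  refine ⟨1 + ∑ d ∈ Finset.Icc (-2 : ℤ) 2, C d, ?_, fun m₁ m₂ hm x v => ?_⟩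
  · have : 0 ≤ ∑ d ∈ Finset.Icc (-2 : ℤ) 2, C d := Finset.sum_nonneg fun d _ => hC0 d
    linarith
  have hmem : m₁ - m₂ ∈ Finset.Icc (-2 : ℤ) 2 := by
    rw [Finset.mem_Icc]; exact abs_le.1 hm
  have hle : C (m₁ - m₂) ≤ ∑ d ∈ Finset.Icc (-2 : ℤ) 2, C d :=
    Finset.single_le_sum (fun d _ => hC0 d) hmem
  have h := hC (m₁ - m₂) ((2:ℝ) ^ m₁) (by positivity) x v
  have e1 : ((2:ℝ) ^ m₁)⁻¹ = (2:ℝ) ^ (-m₁) := (zpow_neg _ _).symm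
  have e2 : (2:ℝ) ^ (m₁ - m₂) * (2:ℝ) ^ (-m₁) = (2:ℝ) ^ (-m₂) := by
    rw [← zpow_add₀ (by norm_num)]; congr 1; ring
  rw [e1, e2] at h
  have e3 : ((2:ℝ) ^ m₁) ^ (2 * s + b₁ + a - n₁ - n₂) =
      (2:ℝ) ^ ((m₁ : ℝ) * (2 * s + b₁ + a - n₁ - n₂)) := by
    rw [Real.rpow_mul (by norm_num), Real.rpow_intCast]
  rw [e3] at h
  refine h.trans ?_
  gcongr
  linarith
end

section
/- Let 0 < s < 1 and let m₁, m₂ ∈ ℕ with m₁ + m₂ ≥ 1. Then there exists a constant C > 0 (depending only on s, m₁, m₂) such that for all ξ, η ∈ ℝ with ξ ≠ 0, η ≠ 0 and |ξ| ≤ |η|/4: |∂_ξ^{m₁} ∂_η^{m₂} (e^{−M(ξ,η)})| ≤ C · (|η|^{2s − m₁ − m₂} + |ξ|^{2s+1−m₁} / |η|^{m₂+1}). -/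
open MeasureTheory Real

namespace Aux19

/-- basic one-variable building block -/
noncomputable def P (a : ℝ) (p : ℕ) (i : ℤ) (x : ℝ) : ℝ := (|x| ^ a) ^ p * x ^ i

noncomputable def Mf (a ξ η : ℝ) : ℝ := (|η| ^ a * η - |ξ| ^ a * ξ) * (η - ξ)⁻¹ / (a + 1)

noncomputable def Ef (a ξ η : ℝ) : ℝ := Real.exp (-(Mf a ξ η))

noncomputable def T (a c : ℝ) (p q : ℕ) (i j : ℤ) (l : ℕ) (ξ η : ℝ) : ℝ :=
  c * P a p i ξ * P a q j η * ((η - ξ)⁻¹) ^ l * Ef a ξ η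

inductive Cls (a : ℝ) (m₁ m₂ : ℕ) : (ℝ → ℝ → ℝ) → Prop
  | zero : Cls a m₁ m₂ (fun _ _ => 0)
  | add (F G : ℝ → ℝ → ℝ) : Cls a m₁ m₂ F → Cls a m₁ m₂ G →
      Cls a m₁ m₂ (fun x y => F x y + G x y)
  | term (c : ℝ) (p q : ℕ) (i j : ℤ) (l : ℕ)
      (h1 : 1 ≤ p + q ∨ (p = 0 ∧ q = 0 ∧ i = 0 ∧ j = 0 ∧ l = 0 ∧ m₁ = 0 ∧ m₂ = 0))
      (h2 : i + j - l = -((m₁ : ℤ) + m₂)) (h3 : p = 0 → 0 ≤ i)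
      (h4 : 1 ≤ p → 1 - (m₁ : ℤ) ≤ i) : Cls a m₁ m₂ (T a c p q i j l)

lemma Cls.term' {a : ℝ} {m₁ m₂ : ℕ} (c : ℝ) (p q : ℕ) (i j : ℤ) (l : ℕ)
    (h : c = 0 ∨ ((1 ≤ p + q ∨ (p = 0 ∧ q = 0 ∧ i = 0 ∧ j = 0 ∧ l = 0 ∧ m₁ = 0 ∧ m₂ = 0)) ∧
      i + j - l = -((m₁ : ℤ) + m₂) ∧ (p = 0 → 0 ≤ i) ∧ (1 ≤ p → 1 - (m₁ : ℤ) ≤ i))) :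
    Cls a m₁ m₂ (T a c p q i j l) := by
  rcases h with h | ⟨h1, h2, h3, h4⟩
  · have : T a c p q i j l = fun _ _ => 0 := by
      funext x y; simp [T, h]
    rw [this]; exact Cls.zero
  · exact Cls.term c p q i j l h1 h2 h3 h4

lemma hasDerivAt_absrpow (b : ℝ) {x : ℝ} (hx : x ≠ 0) :
    HasDerivAt (fun y : ℝ => |y| ^ b) (b * |x| ^ b * x⁻¹) x := by
  have h := (hasDerivAt_abs hx).rpow_const (p := b) (Or.inl (abs_ne_zero.mpr hx))
  convert h using 1
  rw [Real.rpow_sub_one (abs_ne_zero.mpr hx)]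
  rcases lt_or_gt_of_ne hx with h | h
  · simp [sign_neg h, abs_of_neg h]; field_simp
  · simp [sign_pos h, abs_of_pos h]; field_simp

lemma hasDerivAt_P (a : ℝ) (p : ℕ) (i : ℤ) {x : ℝ} (hx : x ≠ 0) :
    HasDerivAt (P a p i) ((a * p + i) * P a p (i - 1) x) x := by
  have h1 := hasDerivAt_absrpow (a * p) hx
  have h2 := h1.mul (hasDerivAt_zpow i x (Or.inl hx))
  have e : P a p i = (fun y : ℝ => |y| ^ (a * p)) * (fun y => y ^ i) := by
    funext y
    simp only [P, Pi.mul_apply]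
    rw [Real.rpow_mul (abs_nonneg y), Real.rpow_natCast]
  rw [e]
  refine h2.congr_deriv ?_
  simp only [P]
  rw [Real.rpow_mul (abs_nonneg x), Real.rpow_natCast, zpow_sub_one₀ hx]
  ring

lemma hasDerivAt_inv1 (l : ℕ) {x y : ℝ} (h : x ≠ y) :
    HasDerivAt (fun x => ((y - x)⁻¹) ^ l) (l * ((y - x)⁻¹) ^ (l + 1)) x := by
  have h0 : y - x ≠ 0 := sub_ne_zero.mpr h.symm
  have h1 := (((hasDerivAt_id x).const_sub y).inv h0).pow l
  refine h1.congr_deriv ?_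
  rcases l with _ | l
  · simp
  · simp only [id, Nat.add_sub_cancel, Pi.inv_apply]
    rw [pow_succ _ (l + 1), pow_succ _ l]
    push_cast
    field_simp

lemma hasDerivAt_inv2 (l : ℕ) {x y : ℝ} (h : x ≠ y) :
    HasDerivAt (fun y => ((y - x)⁻¹) ^ l) (-(l * ((y - x)⁻¹) ^ (l + 1))) y := by
  have h0 : y - x ≠ 0 := sub_ne_zero.mpr h.symm
  have h1 := (((hasDerivAt_id y).sub_const x).inv h0).pow l
  refine h1.congr_deriv ?_
  rcases l with _ | l
  · simp
  · simp only [id, Nat.add_sub_cancel, Pi.inv_apply]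
    rw [pow_succ _ (l + 1), pow_succ _ l]
    push_cast
    field_simp

lemma hasDerivAt_A (a : ℝ) {x : ℝ} (hx : x ≠ 0) :
    HasDerivAt (fun y : ℝ => |y| ^ a * y) ((a + 1) * |x| ^ a) x := by
  have := (hasDerivAt_absrpow a hx).mul (hasDerivAt_id x)
  refine this.congr_deriv ?_
  simp only [id]
  field_simp

lemma hasDerivAt_Ef1 {a : ℝ} (ha : 0 < a) {x y : ℝ} (hx : x ≠ 0) (h : x ≠ y) :
    HasDerivAt (fun x => Ef a x y)
      ((|x| ^ a * (y - x)⁻¹ - (a + 1)⁻¹ * (|y| ^ a * y - |x| ^ a * x) * ((y - x)⁻¹) ^ 2) * Ef a x y)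
      x := by
  have h1 := (((((hasDerivAt_A a hx).const_sub (|y| ^ a * y)).mul
    (by simpa using hasDerivAt_inv1 1 h)).div_const (a + 1)).neg).exp
  refine h1.congr_deriv ?_
  simp only [Ef, Mf, Pi.neg_apply, Pi.mul_apply]
  have : a + 1 ≠ 0 := by positivity
  field_simp
  ring

lemma hasDerivAt_Ef2 {a : ℝ} (ha : 0 < a) {x y : ℝ} (hy : y ≠ 0) (h : x ≠ y) :
    HasDerivAt (fun y => Ef a x y)
      ((-(|y| ^ a * (y - x)⁻¹) + (a + 1)⁻¹ * (|y| ^ a * y - |x| ^ a * x) * ((y - x)⁻¹) ^ 2)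
        * Ef a x y) y := by
  have h1 := (((((hasDerivAt_A a hy).sub_const (|x| ^ a * x)).mul
    (by simpa using hasDerivAt_inv2 1 h)).div_const (a + 1)).neg).exp
  refine h1.congr_deriv ?_
  simp only [Ef, Mf, Pi.neg_apply, Pi.mul_apply]
  have : a + 1 ≠ 0 := by positivity
  field_simp
  ring

lemma Cls.deriv1 {a : ℝ} (ha : 0 < a) {m₁ m₂ : ℕ} {F : ℝ → ℝ → ℝ} (hF : Cls a m₁ m₂ F) :
    ∃ G, Cls a (m₁ + 1) m₂ G ∧ ∀ x y : ℝ, x ≠ 0 → y ≠ 0 → x ≠ y →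
      HasDerivAt (fun x => F x y) (G x y) x := by
  induction hF with
  | zero => exact ⟨_, Cls.zero, fun x y _ _ _ => hasDerivAt_const _ _⟩
  | add F G _ _ ihF ihG =>
    obtain ⟨F', hF', dF⟩ := ihF
    obtain ⟨G', hG', dG⟩ := ihG
    exact ⟨_, Cls.add _ _ hF' hG', fun x y hx hy h => (dF x y hx hy h).add (dG x y hx hy h)⟩
  | term c p q i j l h1 h2 h3 h4 =>
    refine ⟨_, Cls.add _ _ (Cls.add _ _ (Cls.add _ _ (Cls.add _ _
      (Cls.term' (c * (a * p + i)) p q (i - 1) j l ?_)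
      (Cls.term' (c * l) p q i j (l + 1) ?_))
      (Cls.term' c (p + 1) q i j (l + 1) ?_))
      (Cls.term' (-(c * (a + 1)⁻¹)) p (q + 1) i (j + 1) (l + 2) ?_))
      (Cls.term' (c * (a + 1)⁻¹) (p + 1) q (i + 1) j (l + 2) ?_), ?_⟩
    · by_cases h : p = 0 ∧ i = 0
      · left; simp [h.1, h.2]
      · exact Or.inr ⟨by omega, by omega, fun _ => by omega, fun _ => by omega⟩
    · by_cases h : l = 0
      · left; simp [h]
      · exact Or.inr ⟨by omega, by omega, fun _ => by omega, fun _ => by omega⟩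
    · exact Or.inr ⟨by omega, by omega, fun _ => by omega, fun _ => by omega⟩
    · exact Or.inr ⟨by omega, by omega, fun _ => by omega, fun _ => by omega⟩
    · exact Or.inr ⟨by omega, by omega, fun _ => by omega, fun _ => by omega⟩
    · intro x y hx hy h
      have := ((((hasDerivAt_P a p i hx).const_mul c).mul_const (P a q j y)).mul
        (hasDerivAt_inv1 l h)).mul (hasDerivAt_Ef1 ha hx h)
      refine this.congr_deriv ?_
      simp only [T, P, Pi.mul_apply]
      rw [zpow_sub_one₀ hx, zpow_add_one₀ hx, zpow_add_one₀ hy]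
      ring

lemma Cls.deriv2 {a : ℝ} (ha : 0 < a) {m₁ m₂ : ℕ} {F : ℝ → ℝ → ℝ} (hF : Cls a m₁ m₂ F) :
    ∃ G, Cls a m₁ (m₂ + 1) G ∧ ∀ x y : ℝ, x ≠ 0 → y ≠ 0 → x ≠ y →
      HasDerivAt (fun y => F x y) (G x y) y := by
  induction hF with
  | zero => exact ⟨_, Cls.zero, fun x y _ _ _ => hasDerivAt_const _ _⟩
  | add F G _ _ ihF ihG =>
    obtain ⟨F', hF', dF⟩ := ihF
    obtain ⟨G', hG', dG⟩ := ihG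
    exact ⟨_, Cls.add _ _ hF' hG', fun x y hx hy h => (dF x y hx hy h).add (dG x y hx hy h)⟩
  | term c p q i j l h1 h2 h3 h4 =>
    refine ⟨_, Cls.add _ _ (Cls.add _ _ (Cls.add _ _ (Cls.add _ _
      (Cls.term' (c * (a * q + j)) p q i (j - 1) l ?_)
      (Cls.term' (-(c * l)) p q i j (l + 1) ?_))
      (Cls.term' (-c) p (q + 1) i j (l + 1) ?_))
      (Cls.term' (c * (a + 1)⁻¹) p (q + 1) i (j + 1) (l + 2) ?_))
      (Cls.term' (-(c * (a + 1)⁻¹)) (p + 1) q (i + 1) j (l + 2) ?_), ?_⟩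
    · by_cases h : q = 0 ∧ j = 0
      · left; simp [h.1, h.2]
      · exact Or.inr ⟨by omega, by omega, fun _ => by omega, fun _ => by omega⟩
    · by_cases h : l = 0
      · left; simp [h]
      · exact Or.inr ⟨by omega, by omega, fun _ => by omega, fun _ => by omega⟩
    · exact Or.inr ⟨by omega, by omega, fun _ => by omega, fun _ => by omega⟩
    · exact Or.inr ⟨by omega, by omega, fun _ => by omega, fun _ => by omega⟩
    · exact Or.inr ⟨by omega, by omega, fun _ => by omega, fun _ => by omega⟩
    · intro x y hx hy h
      have := ((((hasDerivAt_P a q j hy).const_mul (c * P a p i x))).mul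
        (hasDerivAt_inv2 l h)).mul (hasDerivAt_Ef2 ha hy h)
      refine this.congr_deriv ?_
      simp only [T, P, Pi.mul_apply]
      rw [zpow_sub_one₀ hy, zpow_add_one₀ hx, zpow_add_one₀ hy]
      ring

lemma hasDerivAt_A0 {a : ℝ} (ha : 0 < a) (x : ℝ) :
    HasDerivAt (fun y : ℝ => |y| ^ a * y) ((a + 1) * |x| ^ a) x := by
  by_cases hx : x = 0
  · subst hx
    rw [hasDerivAt_iff_tendsto_slope]
    have hc : Continuous (fun y : ℝ => |y| ^ a) :=
      continuous_abs.rpow_const (fun _ => Or.inr ha.le)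
    have h0 : Filter.Tendsto (fun y : ℝ => |y| ^ a) (nhdsWithin 0 {0}ᶜ)
        (nhds ((a + 1) * |(0:ℝ)| ^ a)) := by
      have := (hc.tendsto 0).mono_left (nhdsWithin_le_nhds (s := {0}ᶜ))
      simpa [Real.zero_rpow ha.ne'] using this
    refine h0.congr' ?_
    filter_upwards [self_mem_nhdsWithin] with y hy
    have hy : y ≠ 0 := hy
    simp [slope_def_field]
    field_simp
  · exact hasDerivAt_A a hx

lemma Mker_eq {s : ℝ} (hs : 0 < s) {x y : ℝ} (h : x ≠ y) : Mker s x y = Mf (2 * s) x y := by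
  have ha : 0 < 2 * s := by positivity
  have h0 : y - x ≠ 0 := sub_ne_zero.mpr h.symm
  have h0' : x - y ≠ 0 := sub_ne_zero.mpr h
  have ha1 : 2 * s + 1 ≠ 0 := by positivity
  have hd : ∀ t ∈ Set.uIcc (0:ℝ) 1, HasDerivAt
      (fun t : ℝ => (|(x - y) * t + y| ^ (2 * s) * ((x - y) * t + y)) / ((2 * s + 1) * (x - y)))
      (|(x - y) * t + y| ^ (2 * s)) t := by
    intro t _
    have h1 : HasDerivAt (fun t : ℝ => (x - y) * t + y) (x - y) t := by
      simpa using ((hasDerivAt_id t).const_mul (x - y)).add_const y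
    have := ((hasDerivAt_A0 ha ((x - y) * t + y)).comp t h1).div_const ((2 * s + 1) * (x - y))
    refine this.congr_deriv ?_
    field_simp
  have hc : Continuous (fun t : ℝ => |(x - y) * t + y| ^ (2 * s)) :=
    (by fun_prop : Continuous (fun t : ℝ => |(x - y) * t + y|)).rpow_const (fun _ => Or.inr ha.le)
  unfold Mker
  rw [intervalIntegral.integral_eq_sub_of_hasDerivAt hd (hc.intervalIntegrable _ _)]
  simp only [mul_one, mul_zero, zero_add, sub_add_cancel, Mf]
  rw [← neg_sub y x]
  field_simp
  ring

lemma Mf_lower {s : ℝ} (hs : 0 < s) {x y : ℝ} (hy : y ≠ 0) (h : |x| ≤ |y| / 4) :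
    (3 / 5) / (2 * s + 1) * |y| ^ (2 * s) ≤ Mf (2 * s) x y := by
  have hy0 : 0 < |y| := abs_pos.mpr hy
  have hxy : x ≠ y := by rintro rfl; linarith
  have h0 : y - x ≠ 0 := sub_ne_zero.mpr hxy.symm
  have hpos : 0 ≤ Mf (2 * s) x y := by
    rw [← Mker_eq hs hxy]
    unfold Mker
    exact intervalIntegral.integral_nonneg (by norm_num) (fun t _ => by positivity)
  rw [← abs_of_nonneg hpos]
  unfold Mf
  rw [abs_div, abs_mul, abs_inv, abs_of_pos (by positivity : 0 < 2 * s + 1)]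
  have h1 : |y| ^ (2 * s) * (3 / 4 * |y|) ≤ |(|y| ^ (2 * s) * y - |x| ^ (2 * s) * x)| := by
    refine le_trans ?_ (abs_sub_abs_le_abs_sub _ _)
    rw [abs_mul, abs_mul, abs_of_nonneg (by positivity : 0 ≤ |y| ^ (2 * s)),
      abs_of_nonneg (by positivity : 0 ≤ |x| ^ (2 * s))]
    have : |x| ^ (2 * s) ≤ |y| ^ (2 * s) :=
      Real.rpow_le_rpow (abs_nonneg _) (by linarith) (by positivity)
    have h3 := mul_le_mul this h (abs_nonneg _) (by positivity)
    linarith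
  have h2 : |y - x| ≤ 5 / 4 * |y| := by
    have := abs_sub y x
    linarith
  have h2p : 0 < |y - x| := abs_pos.mpr h0
  rw [div_mul_eq_mul_div]
  refine div_le_div_of_nonneg_right ?_ (by positivity)
  rw [← div_eq_mul_inv, le_div_iff₀ h2p]
  refine le_trans ?_ h1
  have : 0 < |y| ^ (2 * s) := by positivity
  nlinarith [mul_le_mul_of_nonneg_left h2 this.le]

lemma pow_exp_bound {κ : ℝ} (hκ : 0 < κ) (n : ℕ) {u : ℝ} (hu : 0 ≤ u) :
    u ^ n * Real.exp (-(κ * u)) ≤ n.factorial / κ ^ n := by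
  have h := Real.pow_div_factorial_le_exp (κ * u) (by positivity) n
  rw [Real.exp_neg, ← div_eq_mul_inv, div_le_div_iff₀ (Real.exp_pos _) (by positivity)]
  rw [div_le_iff₀ (by positivity), mul_pow] at h
  linarith

lemma term_bound {s : ℝ} (hs : 0 < s) {m₁ m₂ : ℕ} (hm : 1 ≤ m₁ + m₂)
    (c : ℝ) (p q : ℕ) (i j : ℤ) (l : ℕ)
    (h1 : 1 ≤ p + q)
    (h2 : i + j - l = -((m₁ : ℤ) + m₂)) (h3 : p = 0 → 0 ≤ i)
    (h4 : 1 ≤ p → 1 - (m₁ : ℤ) ≤ i) :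
    ∃ C > (0:ℝ), ∀ ξ η : ℝ, ξ ≠ 0 → η ≠ 0 → |ξ| ≤ |η| / 4 →
      |T (2 * s) c p q i j l ξ η| ≤
        C * (|η| ^ (2 * s - m₁ - m₂) + |ξ| ^ (2 * s + 1 - m₁) / |η| ^ ((m₂ : ℝ) + 1)) := by
  set κ : ℝ := (3 / 5) / (2 * s + 1) with hκd
  have hκ : 0 < κ := by positivity
  obtain ⟨n, hn⟩ : ∃ n, p + q = n + 1 := ⟨p + q - 1, by omega⟩
  set K : ℝ := n.factorial / κ ^ n with hK
  have hK0 : 0 < K := by positivity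
  refine ⟨(|c| + 1) * 2 ^ l * K, by positivity, ?_⟩
  intro ξ η hξ hη h
  have hx : 0 < |ξ| := abs_pos.mpr hξ
  have hy : 0 < |η| := abs_pos.mpr hη
  have hxy : |ξ| ≤ |η| := by linarith
  have hE : Ef (2 * s) ξ η ≤ Real.exp (-(κ * |η| ^ (2 * s))) :=
    Real.exp_le_exp.mpr (neg_le_neg (Mf_lower hs hη h))
  have hE0 : 0 < Ef (2 * s) ξ η := Real.exp_pos _
  have hinv : |(η - ξ)⁻¹| ≤ 2 * |η|⁻¹ := by
    rw [abs_inv, ← div_eq_mul_inv, inv_le_comm₀]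
    · rw [inv_div]
      have := abs_sub_abs_le_abs_sub η ξ
      linarith
    · have := abs_sub_abs_le_abs_sub η ξ
      linarith
    · positivity
  have hP : ∀ (p : ℕ) (i : ℤ) (x : ℝ), x ≠ 0 →
      |P (2 * s) p i x| = |x| ^ (2 * s * p + i) := by
    intro p i x hx
    have hx' : 0 < |x| := abs_pos.mpr hx
    rw [P, abs_mul, abs_pow, abs_zpow, abs_of_nonneg (by positivity : 0 ≤ |x| ^ (2 * s)),
      Real.rpow_add hx', Real.rpow_mul hx'.le (2 * s) p, Real.rpow_natCast, Real.rpow_intCast]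
  have hexp := pow_exp_bound hκ n (by positivity : 0 ≤ |η| ^ (2 * s))
  rw [← hK] at hexp
  have hij : (i : ℝ) + j - l = -((m₁ : ℝ) + m₂) := by exact_mod_cast h2
  have hpq : (p : ℝ) + q = n + 1 := by exact_mod_cast hn
  -- key bound
  have key : |ξ| ^ (2 * s * p + i) * |η| ^ (2 * s * q + j - l) ≤
      (|η| ^ (2 * s)) ^ n *
        (|η| ^ (2 * s - m₁ - m₂) + |ξ| ^ (2 * s + 1 - m₁) / |η| ^ ((m₂ : ℝ) + 1)) := by
    rw [← Real.rpow_natCast (|η| ^ (2 * s)) n, ← Real.rpow_mul hy.le]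
    rcases Nat.eq_zero_or_pos p with hp | hp
    · have hi : (0:ℝ) ≤ i := by exact_mod_cast h3 hp
      subst hp
      calc |ξ| ^ (2 * s * (0:ℕ) + i) * |η| ^ (2 * s * q + j - l)
          ≤ |η| ^ (2 * s * (0:ℕ) + i) * |η| ^ (2 * s * q + j - l) := by
            gcongr
        _ = |η| ^ (2 * s * n) * |η| ^ (2 * s - m₁ - m₂) := by
            rw [← Real.rpow_add hy, ← Real.rpow_add hy]
            congr 1
            have : (q : ℝ) = n + 1 := by simpa using hpq
            rw [this]; push_cast; linear_combination hij
        _ ≤ _ := by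
            gcongr
            have : 0 ≤ |ξ| ^ (2 * s + 1 - m₁) / |η| ^ ((m₂ : ℝ) + 1) := by positivity
            linarith
    · have hi : (1:ℝ) - m₁ ≤ i := by exact_mod_cast h4 hp
      have hp1 : (1:ℝ) ≤ p := by exact_mod_cast hp
      calc |ξ| ^ (2 * s * p + i) * |η| ^ (2 * s * q + j - l)
          = |ξ| ^ (2 * s + 1 - m₁) * |ξ| ^ (2 * s * (p - 1) + (i - 1 + m₁)) *
              |η| ^ (2 * s * q + j - l) := by
            rw [← Real.rpow_add hx]; congr 2; ring
        _ ≤ |ξ| ^ (2 * s + 1 - m₁) * |η| ^ (2 * s * (p - 1) + (i - 1 + m₁)) *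
              |η| ^ (2 * s * q + j - l) := by
            gcongr
            have : 0 ≤ 2 * s * ((p:ℝ) - 1) := mul_nonneg (by positivity) (by linarith)
            linarith
        _ = |η| ^ (2 * s * n) * (|ξ| ^ (2 * s + 1 - m₁) / |η| ^ ((m₂ : ℝ) + 1)) := by
            rw [mul_assoc, ← Real.rpow_add hy, div_eq_mul_inv, ← Real.rpow_neg hy.le,
              mul_left_comm, ← Real.rpow_add hy]
            congr 2
            linear_combination hij + 2 * s * hpq
        _ ≤ _ := by
            gcongr
            have : 0 ≤ |η| ^ (2 * s - m₁ - m₂) := by positivity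
            linarith
  set B := |η| ^ (2 * s - m₁ - m₂) + |ξ| ^ (2 * s + 1 - m₁) / |η| ^ ((m₂ : ℝ) + 1) with hB
  have hB0 : 0 ≤ B := by positivity
  calc |T (2 * s) c p q i j l ξ η|
      = |c| * |ξ| ^ (2 * s * p + i) * |η| ^ (2 * s * q + j) * |(η - ξ)⁻¹| ^ l *
          Ef (2 * s) ξ η := by
        rw [T, abs_mul, abs_mul, abs_mul, abs_mul, hP _ _ _ hξ, hP _ _ _ hη, abs_pow,
          abs_of_pos hE0]
    _ ≤ (|c| + 1) * |ξ| ^ (2 * s * p + i) * |η| ^ (2 * s * q + j) * (2 * |η|⁻¹) ^ l *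
          Real.exp (-(κ * |η| ^ (2 * s))) := by
        gcongr
        linarith
    _ = (|c| + 1) * 2 ^ l * (|ξ| ^ (2 * s * p + i) * |η| ^ (2 * s * q + j - l)) *
          Real.exp (-(κ * |η| ^ (2 * s))) := by
        rw [Real.rpow_sub hy _ (l : ℝ), Real.rpow_natCast, mul_pow, inv_pow]
        ring
    _ ≤ (|c| + 1) * 2 ^ l * ((|η| ^ (2 * s)) ^ n * B) *
          Real.exp (-(κ * |η| ^ (2 * s))) := by
        gcongr
    _ = (|c| + 1) * 2 ^ l * ((|η| ^ (2 * s)) ^ n * Real.exp (-(κ * |η| ^ (2 * s)))) * B := by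
        ring
    _ ≤ (|c| + 1) * 2 ^ l * K * B := by
        gcongr

lemma Cls.bound {s : ℝ} (hs : 0 < s) {m₁ m₂ : ℕ} (hm : 1 ≤ m₁ + m₂) {F : ℝ → ℝ → ℝ}
    (hF : Cls (2 * s) m₁ m₂ F) :
    ∃ C > (0:ℝ), ∀ ξ η : ℝ, ξ ≠ 0 → η ≠ 0 → |ξ| ≤ |η| / 4 →
      |F ξ η| ≤
        C * (|η| ^ (2 * s - m₁ - m₂) + |ξ| ^ (2 * s + 1 - m₁) / |η| ^ ((m₂ : ℝ) + 1)) := by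
  induction hF with
  | zero =>
    refine ⟨1, one_pos, fun ξ η _ _ _ => ?_⟩
    rw [abs_zero]; positivity
  | add F G _ _ ihF ihG =>
    obtain ⟨C, hC, hF⟩ := ihF
    obtain ⟨D, hD, hG⟩ := ihG
    refine ⟨C + D, by positivity, fun ξ η h1 h2 h3 => ?_⟩
    rw [add_mul]
    exact (abs_add_le _ _).trans (add_le_add (hF ξ η h1 h2 h3) (hG ξ η h1 h2 h3))
  | term c p q i j l h1 h2 h3 h4 =>
    exact term_bound hs hm c p q i j l (by omega) h2 h3 h4

lemma iter2 {s : ℝ} (hs : 0 < s) (m₂ : ℕ) : ∃ F, Cls (2 * s) 0 m₂ F ∧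
    ∀ x y : ℝ, x ≠ 0 → y ≠ 0 → x ≠ y →
      iteratedDeriv m₂ (fun η' => Real.exp (-(Mker s x η'))) y = F x y := by
  induction m₂ with
  | zero =>
    refine ⟨_, Cls.term 1 0 0 0 0 0 (by simp) (by simp) (by simp) (by simp), ?_⟩
    intro x y hx hy h
    simp [T, P, Ef, Mker_eq hs h]
  | succ m ih =>
    obtain ⟨F, hF, hE⟩ := ih
    obtain ⟨G, hG, hd⟩ := hF.deriv2 (by positivity)
    refine ⟨G, hG, fun x y hx hy h => ?_⟩
    rw [iteratedDeriv_succ]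
    refine HasDerivAt.deriv ((hd x y hx hy h).congr_of_eventuallyEq ?_)
    filter_upwards [isOpen_ne.mem_nhds hy, isOpen_ne.mem_nhds h.symm] with z hz hz'
    exact hE x z hx hz (Ne.symm hz')

lemma iter1 {s : ℝ} (hs : 0 < s) (m₁ m₂ : ℕ) : ∃ F, Cls (2 * s) m₁ m₂ F ∧
    ∀ x y : ℝ, x ≠ 0 → y ≠ 0 → x ≠ y →
      iteratedDeriv m₁
          (fun ξ' => iteratedDeriv m₂ (fun η' => Real.exp (-(Mker s ξ' η'))) y) x = F x y := by
  induction m₁ with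
  | zero => simpa using iter2 hs m₂
  | succ m ih =>
    obtain ⟨F, hF, hE⟩ := ih
    obtain ⟨G, hG, hd⟩ := hF.deriv1 (by positivity)
    refine ⟨G, hG, fun x y hx hy h => ?_⟩
    rw [iteratedDeriv_succ]
    refine HasDerivAt.deriv ((hd x y hx hy h).congr_of_eventuallyEq ?_)
    filter_upwards [isOpen_ne.mem_nhds hx, isOpen_ne.mem_nhds h] with z hz hz'
    exact hE z y hz hy hz'

end Aux19

theorem stmt19 (s : ℝ) (hs : 0 < s) (hs1 : s < 1) (m₁ m₂ : ℕ) (hm : 1 ≤ m₁ + m₂) :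
    ∃ C > (0:ℝ), ∀ ξ η : ℝ, ξ ≠ 0 → η ≠ 0 → |ξ| ≤ |η| / 4 →
      |iteratedDeriv m₁
          (fun ξ' => iteratedDeriv m₂ (fun η' => Real.exp (-(Mker s ξ' η'))) η) ξ|
        ≤ C * (|η| ^ (2 * s - m₁ - m₂) + |ξ| ^ (2 * s + 1 - m₁) / |η| ^ ((m₂ : ℝ) + 1)) := by
  obtain ⟨F, hF, hE⟩ := Aux19.iter1 hs m₁ m₂
  obtain ⟨C, hC, hb⟩ := hF.bound hs hm
  refine ⟨C, hC, fun ξ η hξ hη h => ?_⟩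
  have hne : ξ ≠ η := by
    rintro rfl
    have := abs_pos.mpr hξ
    linarith
  rw [hE ξ η hξ hη hne]
  exact hb ξ η hξ hη h
end
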